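/- ψ_* ∘ φ_* = id, and φ_* ∘ ψ_* is homotopic to the identity map of (B_*(E), b′_*); explicitly, an E-bimodule homotopy ω with b′_{n+1}∘ω_{n+1} + ω_n∘b′_n = φ_n∘ψ_n − id is given recursively by ω_1 = 0 and ω_{n+1}(𝐱) = ξ_{n+1}((φ_n∘ψ_n − id − ω_n∘b′_n)(𝐱)) for 𝐱 ∈ E⊗Ē^n⊗k. Consequently the resolution (X_*, d_*) is a direct summand of the normalized Hochschild resolution of E. -/

import Mathlib

open TensorProduct DirectSum

set_option maxHeartbeats 1000000
set_option maxSynthPendingDepth 3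
set_option synthInstance.maxHeartbeats 400000

noncomputable section

namespace HopfCrossed

variable (k : Type) [CommRing k]

def TpowCat (V : ModuleCat k) : ℕ → ModuleCat k
  | 0 => ModuleCat.of k k
  | n + 1 => ModuleCat.of k (V ⊗[k] (TpowCat V n))

abbrev Tpow (V : Type) [AddCommGroup V] [Module k V] (n : ℕ) : Type :=
  TpowCat k (ModuleCat.of k V) n

def tp {V : Type} [AddCommGroup V] [Module k V] : ∀ {n : ℕ}, (Fin n → V) → Tpow k V n
  | 0, _ => (1 : k)
  | _ + 1, v => (v 0) ⊗ₜ[k] (tp fun i => v i.succ)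

section Coalg
variable {H : Type} [AddCommGroup H] [Module k H]

def itComul [Coalgebra k H] : ∀ n : ℕ, H →ₗ[k] Tpow k H (n + 1)
  | 0 => (TensorProduct.rid k H).symm.toLinearMap
  | n + 1 =>
      (TensorProduct.map LinearMap.id (itComul n)) ∘ₗ (Coalgebra.comul (R := k))

def SRep [Coalgebra k H] (n : ℕ) (h : H) (N : ℕ) (u : Fin N → Fin (n + 1) → H) : Prop :=
  itComul k n h = ∑ i, tp k (u i)

def iterAct {A : Type} [AddCommGroup A] [Module k A]
    (act : H →ₗ[k] A →ₗ[k] A) : ∀ {s : ℕ}, (Fin s → H) → A → A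
  | 0, _, a => a
  | _ + 1, h, a => act (h 0) (iterAct act (fun i => h i.succ) a)

end Coalg

/-- A weak action of a Hopf algebra `H` on a `k`-algebra `A` (Blattner–Cohen–Montgomery,
Doi–Takeuchi), written `act h a = a^h`. -/
structure WeakAction (k A H : Type) [CommRing k] [Ring A] [Algebra k A] [Ring H] [HopfAlgebra k H] : Type where
  act : H →ₗ[k] A →ₗ[k] A
  act_mul : ∀ (h : H) (a b : A) (N : ℕ) (u : Fin N → Fin 2 → H), SRep k 1 h N u →
    act h (a * b) = ∑ i, act (u i 0) a * act (u i 1) b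
  act_one : ∀ h : H, act h 1 = Coalgebra.counit (R := k) h • (1 : A)
  one_act : ∀ a : A, act 1 a = a

variable {A H : Type} [Ring A] [Algebra k A] [Ring H] [HopfAlgebra k H]
variable {k}

/-- Normality of the cocycle `f`. -/
def IsNormal (f : H →ₗ[k] H →ₗ[k] A) : Prop :=
  ∀ h : H, f h 1 = Coalgebra.counit (R := k) h • (1 : A) ∧
    f 1 h = Coalgebra.counit (R := k) h • (1 : A)

/-- The cocycle condition
`f(l⁽¹⁾,m⁽¹⁾)^{h⁽¹⁾} f(h⁽²⁾, l⁽²⁾m⁽²⁾) = f(h⁽¹⁾,l⁽¹⁾) f(h⁽²⁾l⁽²⁾, m)`. -/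
def IsCocycle (W : WeakAction k A H) (f : H →ₗ[k] H →ₗ[k] A) : Prop :=
  ∀ (h l m : H) (N₁ N₂ N₃ : ℕ) (u : Fin N₁ → Fin 2 → H) (v : Fin N₂ → Fin 2 → H)
    (w : Fin N₃ → Fin 2 → H),
    SRep k 1 h N₁ u → SRep k 1 l N₂ v → SRep k 1 m N₃ w →
    (∑ i, ∑ j, ∑ p, W.act (u i 0) (f (v j 0) (w p 0)) * f (u i 1) (v j 1 * w p 1)) =
      ∑ i, ∑ j, f (u i 0) (v j 0) * f (u i 1 * v j 1) m

/-- The twisted module condition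
`(a^{l⁽¹⁾})^{h⁽¹⁾} f(h⁽²⁾,l⁽²⁾) = f(h⁽¹⁾,l⁽¹⁾) a^{h⁽²⁾l⁽²⁾}`. -/
def IsTwistedModule (W : WeakAction k A H) (f : H →ₗ[k] H →ₗ[k] A) : Prop :=
  ∀ (h l : H) (a : A) (N₁ N₂ : ℕ) (u : Fin N₁ → Fin 2 → H) (v : Fin N₂ → Fin 2 → H),
    SRep k 1 h N₁ u → SRep k 1 l N₂ v →
    (∑ i, ∑ j, W.act (u i 0) (W.act (v j 0) a) * f (u i 1) (v j 1)) =
      ∑ i, ∑ j, f (u i 0) (v j 0) * W.act (u i 1 * v j 1) a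

variable (k A H) in
/-- A crossed product `E = A #_f H` of `A` by `H`:  a ring `E` identified with `A ⊗ H`
as a `k`-module, whose multiplication is given by the crossed product formula
`(a # h)(b # l) = a b^{h⁽¹⁾} f(h⁽²⁾,l⁽¹⁾) # h⁽³⁾ l⁽²⁾`. -/
structure CrossedProduct (E : Type) [Ring E] [Algebra k E] extends WeakAction k A H where
  f : H →ₗ[k] H →ₗ[k] A
  ι : (A ⊗[k] H) ≃ₗ[k] E
  ι_one : ι (1 ⊗ₜ[k] 1) = 1
  ι_mul : ∀ (a b : A) (h l : H) (N M : ℕ) (u : Fin N → Fin 3 → H) (v : Fin M → Fin 2 → H),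
    SRep k 2 h N u → SRep k 1 l M v →
    ι (a ⊗ₜ[k] h) * ι (b ⊗ₜ[k] l) =
      ∑ i, ∑ j, ι ((a * act (u i 0) b * f (u i 1) (v j 0)) ⊗ₜ[k] (u i 2 * v j 1))
  f_normal : IsNormal f
  f_cocycle : IsCocycle toWeakAction f
  f_twisted : IsTwistedModule toWeakAction f

namespace CrossedProduct

variable {E : Type} [Ring E] [Algebra k E] (S : CrossedProduct k A H E)

/-- The canonical map `A → E`, `a ↦ a # 1`. -/
def aE : A →ₗ[k] E := S.ι.toLinearMap ∘ₗ (TensorProduct.mk k A H).flip 1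

/-- The canonical map `H → E`, `h ↦ 1 # h`. -/
def hE : H →ₗ[k] E := S.ι.toLinearMap ∘ₗ (TensorProduct.mk k A H) 1

end CrossedProduct


section Hochschild

variable (k) in
/-- For a `k`-algebra `B`, the submodule `k·1 ⊆ B`. -/
abbrev unitSub (B : Type) [Ring B] [Algebra k B] : Submodule k B :=
  LinearMap.range (Algebra.linearMap k B)

variable (k) in
/-- `B̄ = B/k`. -/
abbrev Qbar (B : Type) [Ring B] [Algebra k B] : Type := B ⧸ unitSub k B

variable (k) in
/-- The canonical projection `B → B̄`. -/
abbrev qbar (B : Type) [Ring B] [Algebra k B] : B →ₗ[k] Qbar k B :=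
  (unitSub k B).mkQ

/-- A `B`-bimodule structure (with commuting `k`-linear left and right actions)
on a `k`-module `M`. -/
structure Bimod (k B M : Type) [CommRing k] [Ring B] [Algebra k B]
    [AddCommGroup M] [Module k M] : Type where
  l : B →ₗ[k] M →ₗ[k] M
  r : B →ₗ[k] M →ₗ[k] M
  l_one : l 1 = LinearMap.id
  r_one : r 1 = LinearMap.id
  l_mul : ∀ x y : B, l (x * y) = l x ∘ₗ l y
  r_mul : ∀ x y : B, r (x * y) = r y ∘ₗ r x
  lr_comm : ∀ x y : B, l x ∘ₗ r y = r y ∘ₗ l x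

/-- Replace the `r`-tuple `a` by the `(r-1)`-tuple obtained by multiplying the
`i`-th and `(i+1)`-st entries. -/
def mulAt {A : Type} [Mul A] {r : ℕ} (a : Fin (r + 1) → A) (i : Fin r) (j : Fin r) : A :=
  if (j : ℕ) < (i : ℕ) then a j.castSucc
  else if (j : ℕ) = (i : ℕ) then a j.castSucc * a j.succ else a j.succ

variable (k) in
/-- The degree-`n` part `M ⊗ B̄^{⊗n}` of the normalized Hochschild chain complex. -/
abbrev HCh (B M : Type) [Ring B] [Algebra k B] [AddCommGroup M] [Module k M]
    (n : ℕ) : Type :=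
  M ⊗[k] Tpow k (Qbar k B) n

variable (k) in
/-- `IsHochschildD l r bd` says that `bd` is the differential of the normalized
Hochschild chain complex of `B` with coefficients in the bimodule `M` (with left
action `l` and right action `r`):
`b(m ⊗ x₁ ⊗ ⋯ ⊗ xₙ) = m x₁ ⊗ x₂ ⊗ ⋯ + ∑ (-1)^i m ⊗ ⋯ ⊗ xᵢxᵢ₊₁ ⊗ ⋯ + (-1)^n xₙ m ⊗ x₁ ⊗ ⋯ ⊗ xₙ₋₁`. -/
def IsHochschildD {B M : Type} [Ring B] [Algebra k B] [AddCommGroup M] [Module k M]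
    (l r : B →ₗ[k] M →ₗ[k] M)
    (bd : ∀ n : ℕ, HCh k B M (n + 1) →ₗ[k] HCh k B M n) : Prop :=
  ∀ (n : ℕ) (m : M) (x : Fin (n + 1) → B),
    bd n (m ⊗ₜ[k] tp k (fun i => qbar k B (x i))) =
      r (x 0) m ⊗ₜ[k] tp k (fun i : Fin n => qbar k B (x i.succ))
      + (∑ i : Fin n, ((-1 : ℤ) ^ ((i : ℕ) + 1)) •
          (m ⊗ₜ[k] tp k (fun j => qbar k B (mulAt x i j))))
      + ((-1 : ℤ) ^ (n + 1)) •
          (l (x (Fin.last n)) m ⊗ₜ[k] tp k (fun i : Fin n => qbar k B (x i.castSucc)))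

variable (k) in
/-- The homology of a (not necessarily everywhere-defined) chain complex
`⋯ → C (n+1) → C n → ⋯ → C 0`; in degree `n+1` it is `ker (d n) / im (d (n+1))`, and in
degree `0` it is `C 0 / im (d 0)`. -/
def Hml {C : ℕ → Type} [∀ n, AddCommGroup (C n)] [∀ n, Module k (C n)]
    (d : ∀ n : ℕ, C (n + 1) →ₗ[k] C n) : ℕ → Type
  | 0 => C 0 ⧸ LinearMap.range (d 0)
  | n + 1 => LinearMap.ker (d n) ⧸
      (LinearMap.range (d (n + 1))).comap (LinearMap.ker (d n)).subtype

instance {C : ℕ → Type} [∀ n, AddCommGroup (C n)] [∀ n, Module k (C n)]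
    (d : ∀ n : ℕ, C (n + 1) →ₗ[k] C n) : ∀ n, AddCommGroup (Hml k d n)
  | 0 => inferInstanceAs (AddCommGroup (C 0 ⧸ LinearMap.range (d 0)))
  | n + 1 => inferInstanceAs (AddCommGroup (LinearMap.ker (d n) ⧸
      (LinearMap.range (d (n + 1))).comap (LinearMap.ker (d n)).subtype))

instance {C : ℕ → Type} [∀ n, AddCommGroup (C n)] [∀ n, Module k (C n)]
    (d : ∀ n : ℕ, C (n + 1) →ₗ[k] C n) : ∀ n, Module k (Hml k d n)
  | 0 => inferInstanceAs (Module k (C 0 ⧸ LinearMap.range (d 0)))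
  | n + 1 => inferInstanceAs (Module k (LinearMap.ker (d n) ⧸
      (LinearMap.range (d (n + 1))).comap (LinearMap.ker (d n)).subtype))

end Hochschild

section Conv

variable {A H : Type} [Ring A] [Algebra k A] [Ring H] [HopfAlgebra k H]

/-- `IsConvInverse f g` : `g` is the convolution inverse of `f` in the convolution
algebra `Hom_k(H ⊗ H, A)`, i.e. `f * g = g * f = ε ⊗ ε · 1_A`. -/
def IsConvInverse (f g : H →ₗ[k] H →ₗ[k] A) : Prop :=
  ∀ (h l : H) (N M' : ℕ) (u : Fin N → Fin 2 → H) (v : Fin M' → Fin 2 → H),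
    SRep k 1 h N u → SRep k 1 l M' v →
    (∑ i, ∑ j, f (u i 0) (v j 0) * g (u i 1) (v j 1)) =
        (Coalgebra.counit (R := k) h * Coalgebra.counit (R := k) l) • (1 : A) ∧
    (∑ i, ∑ j, g (u i 0) (v j 0) * f (u i 1) (v j 1)) =
        (Coalgebra.counit (R := k) h * Coalgebra.counit (R := k) l) • (1 : A)

variable {E : Type} [Ring E] [Algebra k E]

/-- The elementary term `f⁻¹(S(y), z) # S(x)` appearing in the formula for the
convolution inverse `(1 # h)⁻¹ = f⁻¹(S(h⁽²⁾), h⁽³⁾) # S(h⁽¹⁾)`. -/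
def ginv (S : CrossedProduct k A H E) (finv : H →ₗ[k] H →ₗ[k] A) (x y z : H) : E :=
  S.ι ((finv (HopfAlgebra.antipode (R := k) y) z) ⊗ₜ[k] HopfAlgebra.antipode (R := k) x)

end Conv

section Bar

variable {H : Type} [Ring H] [HopfAlgebra k H]

variable (k) in
/-- The degree-`s` part `H̄^{⊗s} ⊗ N` of the normalized bar complex computing
`H_*(H, N) = Tor_*^H(k, N)`, i.e. `(H̄^* ⊗ H, d_*) ⊗_H N`. -/
abbrev BarCh (N : Type) [AddCommGroup N] [Module k N] (s : ℕ) : Type :=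
  Tpow k (Qbar k H) s ⊗[k] N

variable (k) in
/-- `IsBarD act d` : `d` is the differential of the normalized bar complex computing the
homology `H_*(H, N)` of `H` with coefficients in the left `H`-module `N` (action `act`). -/
def IsBarD {N : Type} [AddCommGroup N] [Module k N] (act : H →ₗ[k] N →ₗ[k] N)
    (d : ∀ s : ℕ, BarCh k (H := H) N (s + 1) →ₗ[k] BarCh k (H := H) N s) : Prop :=
  ∀ (s : ℕ) (h : Fin (s + 1) → H) (n : N),
    d s (tp k (fun i => qbar k H (h i)) ⊗ₜ[k] n) =
      Coalgebra.counit (R := k) (h 0) •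
          (tp k (fun i : Fin s => qbar k H (h i.succ)) ⊗ₜ[k] n)
      + (∑ i : Fin s, ((-1 : ℤ) ^ ((i : ℕ) + 1)) •
          (tp k (fun j => qbar k H (mulAt h i j)) ⊗ₜ[k] n))
      + ((-1 : ℤ) ^ (s + 1)) •
          (tp k (fun i : Fin s => qbar k H (h i.castSucc)) ⊗ₜ[k] act (h (Fin.last s)) n)

end Bar

section Sep

variable {A : Type} [Ring A] [Algebra k A]

variable (k A) in
/-- `A` is a separable `k`-algebra: the multiplication map `A ⊗ A → A` admits an
`A`-bimodule splitting (equivalently, `A` is projective as an `A ⊗ Aᵒᵖ`-module). -/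
def IsSeparableAlg : Prop :=
  ∃ s : A →ₗ[k] A ⊗[k] A,
    (LinearMap.mul' k A) ∘ₗ s = LinearMap.id ∧
    ∀ (a b x : A), s (a * x * b) =
      TensorProduct.map (LinearMap.mulLeft k a) (LinearMap.mulRight k b) (s x)

end Sep


section Resolution

variable (k A H E : Type) [CommRing k] [Ring A] [Algebra k A] [Ring H] [HopfAlgebra k H]
  [Ring E] [Algebra k E]

/-- The `E`-bimodule `X_{rs} = E ⊗ H̄^{⊗s} ⊗ Ā^{⊗r} ⊗ E`. -/
abbrev Xc (r s : ℕ) : Type :=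
  E ⊗[k] (Tpow k (Qbar k H) s ⊗[k] (Tpow k (Qbar k A) r ⊗[k] E))

/-- The `E`-bimodule `Y_s = E ⊗ H̄^{⊗s} ⊗ H`. -/
abbrev Yc (s : ℕ) : Type := E ⊗[k] (Tpow k (Qbar k H) s ⊗[k] H)

variable {k A H E}

/-- The generator `e ⊗ h̄₁ ⊗ ⋯ ⊗ h̄ₛ ⊗ ā₁ ⊗ ⋯ ⊗ āᵣ ⊗ e'` of `X_{rs}`. -/
def xgen (e : E) {s r : ℕ} (hs : Fin s → H) (as : Fin r → A) (e' : E) : Xc k A H E r s :=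
  e ⊗ₜ[k] (tp k (fun i => qbar k H (hs i)) ⊗ₜ[k] (tp k (fun i => qbar k A (as i)) ⊗ₜ[k] e'))

/-- The generator `e ⊗ h̄₁ ⊗ ⋯ ⊗ h̄ₛ ⊗ h` of `Y_s`. -/
def ygen (e : E) {s : ℕ} (hs : Fin s → H) (h : H) : Yc k H E s :=
  e ⊗ₜ[k] (tp k (fun i => qbar k H (hs i)) ⊗ₜ[k] h)

/-- Left multiplication by `e ∈ E` on `X_{rs}`. -/
def lX (e : E) {r s : ℕ} : Xc k A H E r s →ₗ[k] Xc k A H E r s :=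
  TensorProduct.map (LinearMap.mulLeft k e) LinearMap.id

/-- Right multiplication by `e ∈ E` on `X_{rs}`. -/
def rX (e : E) {r s : ℕ} : Xc k A H E r s →ₗ[k] Xc k A H E r s :=
  TensorProduct.map LinearMap.id (TensorProduct.map LinearMap.id
    (TensorProduct.map LinearMap.id (LinearMap.mulRight k e)))

/-- Transport along equalities of indices. -/
def xcast {r r' s s' : ℕ} (hr : r = r') (hs : s = s') :
    Xc k A H E r s →ₗ[k] Xc k A H E r' s' := by
  subst hr; subst hs; exact LinearMap.id

end Resolution

section ResData

variable {k A H E : Type} [CommRing k] [Ring A] [Algebra k A] [Ring H] [HopfAlgebra k H]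
  [Ring E] [Algebra k E]

variable (k A H E) in
/-- The resolution `(X_*, d_*)` of the crossed product `E = A #_f H` of Section 1 of
the paper: the maps `μ_s`, `∂_s`, `σ⁰`, and the (higher) differentials `d^l_{rs}`
(`d⁰ = dl 0`), together with all of their defining equations.  Here
`dl l r s : X_{rs} → X_{r+l-1, s-l}`. -/
structure ResData (S : CrossedProduct k A H E) : Type where
  mu : ∀ s : ℕ, Xc k A H E 0 s →ₗ[k] Yc k H E s
  del : ∀ s : ℕ, Yc k H E (s + 1) →ₗ[k] Yc k H E s
  sig0 : ∀ s : ℕ, Yc k H E s →ₗ[k] Xc k A H E 0 s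
  sig : ∀ r s : ℕ, Xc k A H E r s →ₗ[k] Xc k A H E (r + 1) s
  dl : ∀ l r s : ℕ, Xc k A H E r s →ₗ[k] Xc k A H E (r + l - 1) (s - l)
  /-- `μ_s(a₀ ⊗ 𝐡_{0s} ⊗ a₁ ⊗ h_{s+1}) = a₀ a₁^{𝐡_{0s}⁽¹⁾} ⊗ 𝐡_{0s}⁽²⁾ ⊗ h_{s+1}`. -/
  mu_eq : ∀ (s : ℕ) (a₀ : A) (h₀ : H) (hs : Fin s → H) (b : A) (h' : H)
    (Nv : Fin (s + 1) → ℕ) (v : ∀ i, Fin (Nv i) → Fin 2 → H),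
    (∀ i, SRep k 1 ((Fin.cons h₀ hs : Fin (s + 1) → H) i) (Nv i) (v i)) →
    mu s (xgen (S.ι (a₀ ⊗ₜ[k] h₀)) hs (fun i : Fin 0 => i.elim0) (S.ι (b ⊗ₜ[k] h'))) =
      ∑ c : (∀ i, Fin (Nv i)),
        ygen (S.ι ((a₀ * iterAct k S.act (fun i => v i (c i) 0) b) ⊗ₜ[k] (v 0 (c 0) 1)))
          (fun i : Fin s => v i.succ (c i.succ) 1) h'
  /-- `d⁰_{rs}` is the Hochschild-type boundary in the `A`-direction. -/
  d0_eq : ∀ (r s : ℕ) (a₀ : A) (h₀ : H) (hs : Fin s → H) (as : Fin (r + 1) → A)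
    (b : A) (h' : H) (Nv : Fin (s + 1) → ℕ) (v : ∀ i, Fin (Nv i) → Fin 2 → H),
    (∀ i, SRep k 1 ((Fin.cons h₀ hs : Fin (s + 1) → H) i) (Nv i) (v i)) →
    dl 0 (r + 1) s (xgen (S.ι (a₀ ⊗ₜ[k] h₀)) hs as (S.ι (b ⊗ₜ[k] h'))) =
      (∑ c : (∀ i, Fin (Nv i)),
        xgen (S.ι ((a₀ * iterAct k S.act (fun i => v i (c i) 0) (as 0)) ⊗ₜ[k] (v 0 (c 0) 1)))
          (fun i : Fin s => v i.succ (c i.succ) 1)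
          (fun i : Fin r => as i.succ) (S.ι (b ⊗ₜ[k] h')))
      + (∑ i : Fin r, ((-1 : ℤ) ^ ((i : ℕ) + 1)) •
          xgen (S.ι (a₀ ⊗ₜ[k] h₀)) hs (mulAt as i) (S.ι (b ⊗ₜ[k] h')))
      + ((-1 : ℤ) ^ (r + 1)) •
          xgen (S.ι (a₀ ⊗ₜ[k] h₀)) hs (fun i : Fin r => as i.castSucc)
            (S.ι ((as (Fin.last r) * b) ⊗ₜ[k] h'))
  /-- `∂_s(a ⊗ 𝐡) = ∑ᵢ (-1)^{i+1} a f(hᵢ⁽¹⁾, hᵢ₊₁⁽¹⁾)^{𝐡_{0,i-1}⁽¹⁾} ⊗ 𝐡_{0,i-1}⁽²⁾ ⊗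
  hᵢ⁽²⁾hᵢ₊₁⁽²⁾ ⊗ 𝐡_{i+2,s+1}`. -/
  del_eq : ∀ (s : ℕ) (a : A) (h₀ : H) (hs : Fin (s + 1) → H) (h' : H)
    (Nv : Fin (s + 3) → ℕ) (v : ∀ i, Fin (Nv i) → Fin 2 → H),
    (∀ i, SRep k 1 ((Fin.cons h₀ (Fin.snoc hs h') : Fin (s + 3) → H) i) (Nv i) (v i)) →
    del s (ygen (S.ι (a ⊗ₜ[k] h₀)) hs h') =
      ∑ i : Fin (s + 2), ((-1 : ℤ) ^ ((i : ℕ) + 1)) •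
        (∑ c : (∀ j : Fin ((i : ℕ) + 2),
            Fin (Nv ⟨(j : ℕ), by have := j.isLt; have := i.isLt; omega⟩)),
          ygen
            (S.ι ((a * iterAct k S.act
                (fun j : Fin (i : ℕ) =>
                  v ⟨(j : ℕ), by have := j.isLt; have := i.isLt; omega⟩
                    (c ⟨(j : ℕ), by have := j.isLt; have := i.isLt; omega⟩) 0)
                (S.f (v ⟨(i : ℕ), by have := i.isLt; omega⟩
                        (c ⟨(i : ℕ), by omega⟩) 0)
                     (v ⟨(i : ℕ) + 1, by have := i.isLt; omega⟩
                        (c ⟨(i : ℕ) + 1, by omega⟩) 0))) ⊗ₜ[k]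
              (if (i : ℕ) = 0 then
                  (v ⟨0, by omega⟩ (c ⟨0, by omega⟩) 1) * (v ⟨1, by omega⟩ (c ⟨1, by omega⟩) 1)
                else v ⟨0, by omega⟩ (c ⟨0, by omega⟩) 1)))
            (fun p : Fin s =>
              if hp : (p : ℕ) + 1 < (i : ℕ) then
                v ⟨(p : ℕ) + 1, by have := p.isLt; have := i.isLt; omega⟩
                  (c ⟨(p : ℕ) + 1, by omega⟩) 1
              else if hp' : (p : ℕ) + 1 = (i : ℕ) then
                (v ⟨(p : ℕ) + 1, by have := p.isLt; omega⟩ (c ⟨(p : ℕ) + 1, by omega⟩) 1) *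
                  (v ⟨(p : ℕ) + 2, by have := p.isLt; have := i.isLt; omega⟩
                    (c ⟨(p : ℕ) + 2, by omega⟩) 1)
              else (Fin.cons h₀ (Fin.snoc hs h') : Fin (s + 3) → H) ⟨(p : ℕ) + 2, by have := p.isLt; omega⟩)
            (if hi : (i : ℕ) = s + 1 then
                (v ⟨s + 1, by omega⟩ (c ⟨s + 1, by omega⟩) 1) *
                  (v ⟨s + 2, by omega⟩ (c ⟨s + 2, by omega⟩) 1)
              else (Fin.cons h₀ (Fin.snoc hs h') : Fin (s + 3) → H) ⟨s + 2, by omega⟩))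
  /-- `σ⁰_{0,s}(a₀ ⊗ 𝐡 ⊗ h_{s+1}) = a₀ ⊗ 𝐡 ⊗ 1 # h_{s+1}`. -/
  sig0_eq : ∀ (s : ℕ) (e : E) (hs : Fin s → H) (h : H),
    sig0 s (ygen e hs h) = xgen e hs (fun i : Fin 0 => i.elim0) (S.hE h)
  /-- `σ⁰_{r+1,s}(a₀ ⊗ 𝐡 ⊗ 𝐚 ⊗ a # h) = (-1)^{r+1} a₀ ⊗ 𝐡 ⊗ 𝐚 ⊗ ā ⊗ 1 # h`. -/
  sig_eq : ∀ (r s : ℕ) (e : E) (hs : Fin s → H) (as : Fin r → A) (b : A) (h' : H),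
    sig r s (xgen e hs as (S.ι (b ⊗ₜ[k] h'))) =
      ((-1 : ℤ) ^ (r + 1)) • xgen e hs (Fin.snoc as b) (S.hE h')
  /-- `d¹_{0s} = -σ⁰ ∘ ∂ ∘ μ` on `k ⊗ H̄^s ⊗ k`. -/
  dl_one_zero : ∀ (s : ℕ) (hs : Fin (s + 1) → H),
    dl 1 0 (s + 1) (xgen (1 : E) hs (fun i : Fin 0 => i.elim0) (1 : E)) =
      - sig0 s (del s (mu (s + 1) (xgen (1 : E) hs (fun i : Fin 0 => i.elim0) (1 : E))))
  /-- `d^l_{0s} = -∑_{j=1}^{l-1} σ⁰ ∘ d^{l-j} ∘ d^j` on `k ⊗ H̄^s ⊗ k`, for `1 < l ≤ s`. -/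
  dl_zero : ∀ (l s : ℕ) (hl : 2 ≤ l) (hls : l ≤ s) (hs : Fin s → H),
    dl l 0 s (xgen (1 : E) hs (fun i : Fin 0 => i.elim0) (1 : E)) =
      - ∑ j : Fin (l - 1),
        xcast (show (l - 2) + 1 = 0 + l - 1 by omega) rfl
          (sig (l - 2) (s - l)
            (xcast
              (show (j : ℕ) + (l - ((j : ℕ) + 1)) - 1 = l - 2 by
                have := j.isLt; omega)
              (show (s - ((j : ℕ) + 1)) - (l - ((j : ℕ) + 1)) = s - l by
                have := j.isLt; omega)
              (dl (l - ((j : ℕ) + 1)) ((j : ℕ)) (s - ((j : ℕ) + 1))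
                (xcast (show 0 + ((j : ℕ) + 1) - 1 = (j : ℕ) by omega) rfl
                  (dl ((j : ℕ) + 1) 0 s
                    (xgen (1 : E) hs (fun i : Fin 0 => i.elim0) (1 : E)))))))
  /-- `d^l_{rs} = -∑_{j=0}^{l-1} σ⁰ ∘ d^{l-j} ∘ d^j` on `k ⊗ H̄^s ⊗ Ā^r ⊗ k`, for `r > 0`,
  `1 ≤ l ≤ s`. -/
  dl_succ : ∀ (l r s : ℕ) (hl : 1 ≤ l) (hls : l ≤ s) (hs : Fin s → H) (as : Fin (r + 1) → A),
    dl l (r + 1) s (xgen (1 : E) hs as (1 : E)) =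
      - ∑ j : Fin l,
        xcast (show (r + l - 1) + 1 = (r + 1) + l - 1 by omega) rfl
          (sig (r + l - 1) (s - l)
            (xcast
              (show (r + (j : ℕ)) + (l - (j : ℕ)) - 1 = r + l - 1 by
                have := j.isLt; omega)
              (show (s - (j : ℕ)) - (l - (j : ℕ)) = s - l by
                have := j.isLt; omega)
              (dl (l - (j : ℕ)) (r + (j : ℕ)) (s - (j : ℕ))
                (xcast (show (r + 1) + (j : ℕ) - 1 = r + (j : ℕ) by omega) rfl
                  (dl (j : ℕ) (r + 1) s (xgen (1 : E) hs as (1 : E)))))))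
  /-- Each `d^l_{rs}` is a map of `E`-bimodules. -/
  dl_lmul : ∀ (l r s : ℕ) (e : E), dl l r s ∘ₗ lX e = lX e ∘ₗ dl l r s
  dl_rmul : ∀ (l r s : ℕ) (e : E), dl l r s ∘ₗ rX e = rX e ∘ₗ dl l r s

end ResData

section Xtot

variable {k A H E : Type} [CommRing k] [Ring A] [Algebra k A] [Ring H] [HopfAlgebra k H]
  [Ring E] [Algebra k E]

variable (k A H E) in
/-- The total module `X_n = ⊕_{r+s=n} X_{rs}`. -/
abbrev XT (n : ℕ) : Type :=
  ⨁ (s : Fin (n + 1)), Xc k A H E (n - (s : ℕ)) (s : ℕ)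

/-- The total differential `d_n = ∑_{r+s=n, r+l>0} ∑_{l=0}^{s} d^l_{rs}`. -/
noncomputable def dT {S : CrossedProduct k A H E} (R : ResData k A H E S) (n : ℕ) :
    XT k A H E (n + 1) →ₗ[k] XT k A H E n :=
  DirectSum.toModule k (Fin (n + 2)) (XT k A H E n) (fun s =>
    ∑ l : Fin ((s : ℕ) + 1),
      if h : 0 < (n + 1 - (s : ℕ)) + (l : ℕ) then
        (DirectSum.lof k (Fin (n + 1)) (fun s' : Fin (n + 1) => Xc k A H E (n - (s' : ℕ)) (s' : ℕ))
            ⟨(s : ℕ) - (l : ℕ), by have := s.isLt; have := l.isLt; omega⟩) ∘ₗ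
          xcast
            (show (n + 1 - (s : ℕ)) + (l : ℕ) - 1 = n - ((s : ℕ) - (l : ℕ)) by
              have := s.isLt; have := l.isLt; omega)
            rfl ∘ₗ
          R.dl (l : ℕ) (n + 1 - (s : ℕ)) (s : ℕ)
      else 0)

/-- Left multiplication by `e ∈ E` on `X_n`. -/
noncomputable def lT (e : E) (n : ℕ) : XT k A H E n →ₗ[k] XT k A H E n :=
  DirectSum.toModule k (Fin (n + 1)) (XT k A H E n) (fun s =>
    (DirectSum.lof k (Fin (n + 1)) (fun s' : Fin (n + 1) => Xc k A H E (n - (s' : ℕ)) (s' : ℕ)) s)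
      ∘ₗ lX e)

/-- Right multiplication by `e ∈ E` on `X_n`. -/
noncomputable def rT (e : E) (n : ℕ) : XT k A H E n →ₗ[k] XT k A H E n :=
  DirectSum.toModule k (Fin (n + 1)) (XT k A H E n) (fun s =>
    (DirectSum.lof k (Fin (n + 1)) (fun s' : Fin (n + 1) => Xc k A H E (n - (s' : ℕ)) (s' : ℕ)) s)
      ∘ₗ rX e)

/-- The augmentation `X_0 → E` induced by a map `μ : X_{00} → E`. -/
noncomputable def multT (mult : Xc k A H E 0 0 →ₗ[k] E) : XT k A H E 0 →ₗ[k] E :=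
  DirectSum.toModule k (Fin 1) E (fun s =>
    mult ∘ₗ xcast (show 0 - (s : ℕ) = 0 by have := s.isLt; omega)
      (show (s : ℕ) = 0 by have := s.isLt; omega))

end Xtot

section BarE

variable {k A H E : Type} [CommRing k] [Ring A] [Algebra k A] [Ring H] [HopfAlgebra k H]
  [Ring E] [Algebra k E]

variable (k E) in
/-- The degree-`n` part `B_n(E) = E ⊗ Ē^{⊗n} ⊗ E` of the normalized Hochschild
resolution of `E`. -/
abbrev Bch (n : ℕ) : Type := E ⊗[k] (Tpow k (Qbar k E) n ⊗[k] E)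

/-- The generator `e ⊗ x̄₁ ⊗ ⋯ ⊗ x̄ₙ ⊗ e'` of `B_n(E)`. -/
def bgen (e : E) {n : ℕ} (xs : Fin n → E) (e' : E) : Bch k E n :=
  e ⊗ₜ[k] (tp k (fun i => qbar k E (xs i)) ⊗ₜ[k] e')

/-- Left multiplication by `e ∈ E` on `B_n(E)`. -/
noncomputable def lB (e : E) {n : ℕ} : Bch k E n →ₗ[k] Bch k E n :=
  TensorProduct.map (LinearMap.mulLeft k e) LinearMap.id

/-- Right multiplication by `e ∈ E` on `B_n(E)`. -/
noncomputable def rB (e : E) {n : ℕ} : Bch k E n →ₗ[k] Bch k E n :=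
  TensorProduct.map LinearMap.id (TensorProduct.map LinearMap.id (LinearMap.mulRight k e))

variable (k E) in
/-- `IsBp bp` : `bp` is the differential `b'` of the normalized Hochschild resolution. -/
def IsBp (bp : ∀ n : ℕ, Bch k E (n + 1) →ₗ[k] Bch k E n) : Prop :=
  ∀ (n : ℕ) (e : E) (xs : Fin (n + 1) → E) (e' : E),
    bp n (bgen e xs e') =
      bgen (e * xs 0) (fun i : Fin n => xs i.succ) e'
      + (∑ i : Fin n, ((-1 : ℤ) ^ ((i : ℕ) + 1)) • bgen e (mulAt xs i) e')
      + ((-1 : ℤ) ^ (n + 1)) • bgen e (fun i : Fin n => xs i.castSucc) (xs (Fin.last n) * e')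

variable (k E) in
/-- `IsXi xi` : `xi` is the left `E`-linear contracting homotopy
`ξ_{n+1}(𝐱) = (-1)^{n+1} 𝐱 ⊗ 1` of the normalized Hochschild resolution. -/
def IsXi (xi : ∀ n : ℕ, Bch k E n →ₗ[k] Bch k E (n + 1)) : Prop :=
  ∀ (n : ℕ) (e : E) (xs : Fin n → E) (e' : E),
    xi n (bgen e xs e') = ((-1 : ℤ) ^ (n + 1)) • bgen e (Fin.snoc xs e') (1 : E)

end BarE

section Statement2

variable {k A H E : Type} [CommRing k] [Ring A] [Algebra k A] [Ring H] [HopfAlgebra k H]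
  [Ring E] [Algebra k E]

/-- Left multiplication by `e ∈ E` on `Y_s`. -/
noncomputable def lY (e : E) {s : ℕ} : Yc k H E s →ₗ[k] Yc k H E s :=
  TensorProduct.map (LinearMap.mulLeft k e) LinearMap.id

/-- The map `μ'_n : X_n → Y_n` which is `μ_n` on `X_{0n}` and `0` on `X_{r,n-r}`, `r > 0`. -/
noncomputable def muT {S : CrossedProduct k A H E} (R : ResData k A H E S) (n : ℕ) :
    XT k A H E n →ₗ[k] Yc k H E n :=
  DirectSum.toModule k (Fin (n + 1)) (Yc k H E n) (fun s =>
    if h : (s : ℕ) = n then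
      R.mu n ∘ₗ xcast (show n - (s : ℕ) = 0 by omega) h
    else 0)

/-- `σ̄₀ = σ⁰₀₀ ∘ σ⁻¹₀`. -/
noncomputable def sbar0 {S : CrossedProduct k A H E} (R : ResData k A H E S)
    (σm : E →ₗ[k] Yc k H E 0) : E →ₗ[k] XT k A H E 0 :=
  (DirectSum.lof k (Fin 1) (fun s' : Fin 1 => Xc k A H E (0 - (s' : ℕ)) (s' : ℕ)) 0) ∘ₗ
    R.sig0 0 ∘ₗ σm

/-- `σ̄_{n+1} = -∑_{l=0}^{n+1} σ^l_{l,n-l+1} ∘ σ⁻¹_{n+1} ∘ μ_n + ∑_{r+s=n} ∑_{l=0}^s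
σ^l_{r+l+1,s-l}`. -/
noncomputable def sbar {S : CrossedProduct k A H E} (R : ResData k A H E S)
    (slY : ∀ l s : ℕ, Yc k H E s →ₗ[k] Xc k A H E l (s - l))
    (slX : ∀ l r s : ℕ, Xc k A H E r s →ₗ[k] Xc k A H E (r + l + 1) (s - l))
    (sY : ∀ s : ℕ, Yc k H E s →ₗ[k] Yc k H E (s + 1)) (n : ℕ) :
    XT k A H E n →ₗ[k] XT k A H E (n + 1) :=
  - ((∑ l : Fin (n + 2),
      (DirectSum.lof k (Fin (n + 2)) (fun s' : Fin (n + 2) => Xc k A H E (n + 1 - (s' : ℕ)) (s' : ℕ))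
          ⟨n + 1 - (l : ℕ), by omega⟩) ∘ₗ
        xcast (show (l : ℕ) = n + 1 - (n + 1 - (l : ℕ)) by have := l.isLt; omega) rfl ∘ₗ
        slY (l : ℕ) (n + 1)) ∘ₗ sY n ∘ₗ muT R n)
  + DirectSum.toModule k (Fin (n + 1)) (XT k A H E (n + 1)) (fun s =>
      ∑ l : Fin ((s : ℕ) + 1),
        (DirectSum.lof k (Fin (n + 2)) (fun s' : Fin (n + 2) => Xc k A H E (n + 1 - (s' : ℕ)) (s' : ℕ))
            ⟨(s : ℕ) - (l : ℕ), by have := s.isLt; have := l.isLt; omega⟩) ∘ₗ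
          xcast
            (show (n - (s : ℕ)) + (l : ℕ) + 1 = n + 1 - ((s : ℕ) - (l : ℕ)) by
              have := s.isLt; have := l.isLt; omega)
            rfl ∘ₗ
          slX (l : ℕ) (n - (s : ℕ)) (s : ℕ))


end Statement2

set_option linter.all false

section Part1

variable {k : Type} [CommRing k]

/-- consing linear map -/
def tcons {V : Type} [AddCommGroup V] [Module k V] (n : ℕ) :
    V →ₗ[k] Tpow k V n →ₗ[k] Tpow k V (n + 1) := TensorProduct.mk k V (Tpow k V n)

def tlift {V : Type} [AddCommGroup V] [Module k V] {M : Type} [AddCommGroup M] [Module k M] {n : ℕ}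
    (f : V →ₗ[k] Tpow k V n →ₗ[k] M) : Tpow k V (n + 1) →ₗ[k] M := TensorProduct.lift f

theorem tlift_tcons {V : Type} [AddCommGroup V] [Module k V] {M : Type} [AddCommGroup M] [Module k M]
    {n : ℕ} (f : V →ₗ[k] Tpow k V n →ₗ[k] M) (v : V) (t : Tpow k V n) :
    tlift f (tcons n v t) = f v t := TensorProduct.lift.tmul _ _

theorem tp_succ {V : Type} [AddCommGroup V] [Module k V] {n : ℕ} (v : Fin (n+1) → V) :
    tp k v = tcons n (v 0) (tp k fun i => v i.succ) := rfl

theorem tcons_ind {V : Type} [AddCommGroup V] [Module k V] {n : ℕ}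
    {P : Tpow k V (n+1) → Prop} (t : Tpow k V (n+1)) (h0 : P 0)
    (h1 : ∀ v t, P (tcons n v t)) (h2 : ∀ x y, P x → P y → P (x + y)) : P t :=
  TensorProduct.induction_on (motive := P) t h0 h1 h2

theorem tp_rep {V : Type} [AddCommGroup V] [Module k V] :
    ∀ {n : ℕ} (t : Tpow k V (n+1)), ∃ (N : ℕ) (u : Fin N → Fin (n+1) → V), t = ∑ i, tp k (u i) := by
  intro n
  induction n with
  | zero =>
    intro t
    refine tcons_ind (P := fun t => ∃ (N : ℕ) (u : Fin N → Fin _ → V), t = ∑ i, tp k (u i)) t ⟨0, fun i => i.elim0, by simp⟩ ?_ ?_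
    · intro v c
      refine ⟨1, fun _ _ => (show k from c) • v, ?_⟩
      simp only [Finset.univ_unique, Finset.sum_singleton]
      change v ⊗ₜ[k] (show k from c) = ((show k from c) • v) ⊗ₜ[k] (1 : k)
      rw [TensorProduct.smul_tmul]
      exact congrArg _ (mul_one (show k from c)).symm
    · rintro x y ⟨N, u, rfl⟩ ⟨M, w, rfl⟩
      exact ⟨N + M, Fin.append u w, by simp [Fin.sum_univ_add]⟩
  | succ n ih =>
    intro t
    refine tcons_ind (P := fun t => ∃ (N : ℕ) (u : Fin N → Fin _ → V), t = ∑ i, tp k (u i)) t ⟨0, fun i => i.elim0, by simp⟩ ?_ ?_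
    · intro v c
      obtain ⟨N, u, rfl⟩ := ih c
      refine ⟨N, fun i => Fin.cons v (u i), ?_⟩
      simp [tp_succ]
    · rintro x y ⟨N, u, rfl⟩ ⟨M, w, rfl⟩
      exact ⟨N + M, Fin.append u w, by simp [Fin.sum_univ_add]⟩

/-- linear maps out of `Tpow` composed with a surjection agree on `tp`s. -/
theorem tpq_ext {V W : Type} [AddCommGroup V] [Module k V] [AddCommGroup W] [Module k W]
    (q : W →ₗ[k] V) (hq : Function.Surjective q)
    {M : Type} [AddCommGroup M] [Module k M] :
    ∀ {n : ℕ} {f g : Tpow k V n →ₗ[k] M}, (∀ w : Fin n → W, f (tp k fun i => q (w i)) = g (tp k fun i => q (w i))) →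
      f = g := by
  intro n
  induction n with
  | zero =>
    intro f g h
    have := h (fun i => i.elim0)
    apply LinearMap.ext
    intro c
    have hc : c = (show k from c) • (tp k (fun i : Fin 0 => q (i.elim0)) : Tpow k V 0) := by
      change (show k from c) = (show k from c) * (1:k); exact (mul_one _).symm
    rw [hc, map_smul, map_smul]; congr 1
  | succ n ih =>
    intro f g h
    apply LinearMap.ext
    intro t
    refine tcons_ind (P := fun t => f t = g t) t (by simp) ?_ (fun x y hx hy => by simp [hx, hy])
    intro v t
    obtain ⟨w, rfl⟩ := hq v
    have : f ∘ₗ tcons n (q w) = g ∘ₗ tcons n (q w) := by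
      apply ih
      intro w'
      have := h (Fin.cons w w')
      simpa [tp_succ] using this
    exact LinearMap.congr_fun this t

theorem tp_ext {V : Type} [AddCommGroup V] [Module k V] 
    {M : Type} [AddCommGroup M] [Module k M] {n : ℕ} {f g : Tpow k V n →ₗ[k] M}
    (h : ∀ w : Fin n → V, f (tp k w) = g (tp k w)) : f = g :=
  tpq_ext (LinearMap.id) Function.surjective_id h

variable {A H E : Type} [Ring A] [Algebra k A] [Ring H] [HopfAlgebra k H] [Ring E] [Algebra k E]

theorem xgen_ext {M : Type} [AddCommGroup M] [Module k M] {r s : ℕ} {f g : Xc k A H E r s →ₗ[k] M}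
    (h : ∀ e hs as e', f (xgen e hs as e') = g (xgen e hs as e')) : f = g := by
  apply TensorProduct.ext
  apply LinearMap.ext; intro e
  apply TensorProduct.ext
  apply tpq_ext (qbar k H) (Submodule.mkQ_surjective _)
  intro hs
  apply TensorProduct.ext
  apply tpq_ext (qbar k A) (Submodule.mkQ_surjective _)
  intro as
  apply LinearMap.ext; intro e'
  exact h e hs as e'

theorem ygen_ext {M : Type} [AddCommGroup M] [Module k M] {s : ℕ} {f g : Yc k H E s →ₗ[k] M}
    (h : ∀ e hs h', f (ygen e hs h') = g (ygen e hs h')) : f = g := by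
  apply TensorProduct.ext
  apply LinearMap.ext; intro e
  apply TensorProduct.ext
  apply tpq_ext (qbar k H) (Submodule.mkQ_surjective _)
  intro hs
  apply LinearMap.ext; intro e'
  exact h e hs e'

theorem bgen_ext {M : Type} [AddCommGroup M] [Module k M] {s : ℕ} {f g : Bch k E s →ₗ[k] M}
    (h : ∀ e xs e', f (bgen e xs e') = g (bgen e xs e')) : f = g := by
  apply TensorProduct.ext
  apply LinearMap.ext; intro e
  apply TensorProduct.ext
  apply tpq_ext (qbar k E) (Submodule.mkQ_surjective _)
  intro hs
  apply LinearMap.ext; intro e'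
  exact h e hs e'

theorem iota_ext (S : CrossedProduct k A H E) {M : Type} [AddCommGroup M] [Module k M]
    {f g : E →ₗ[k] M} (h : ∀ a h', f (S.ι (a ⊗ₜ h')) = g (S.ι (a ⊗ₜ h'))) : f = g := by
  have : f ∘ₗ S.ι.toLinearMap = g ∘ₗ S.ι.toLinearMap := by
    apply TensorProduct.ext'
    exact h
  apply LinearMap.ext; intro x
  obtain ⟨y, rfl⟩ := S.ι.surjective x
  exact LinearMap.congr_fun this y

/-- linearity of `xgen` in the two outer slots -/
def xgenL {s r : ℕ} (hs : Fin s → H) (as : Fin r → A) : E →ₗ[k] E →ₗ[k] Xc k A H E r s :=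
  LinearMap.mk₂ k (fun e e' => xgen e hs as e')
   (by intros; simp [xgen, TensorProduct.add_tmul]) (by intros; simp [xgen, TensorProduct.smul_tmul'])
   (by intros; simp [xgen, TensorProduct.tmul_add])
   (by intros; simp [xgen])

theorem xgenL_apply {s r : ℕ} (hs : Fin s → H) (as : Fin r → A) (e e' : E) :
   xgenL (k := k) hs as e e' = xgen e hs as e' := rfl

theorem xgen_ext_iota (S : CrossedProduct k A H E) {M : Type} [AddCommGroup M] [Module k M] {r s : ℕ}
    {f g : Xc k A H E r s →ₗ[k] M}
    (h : ∀ a h hs as b h', f (xgen (S.ι (a ⊗ₜ h)) hs as (S.ι (b ⊗ₜ h')))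
     = g (xgen (S.ι (a ⊗ₜ h)) hs as (S.ι (b ⊗ₜ h')))) : f = g := by
  apply xgen_ext
  intro e hs as e'
  have : (xgenL hs as).compr₂ f = (xgenL hs as).compr₂ g := by
    apply iota_ext S
    intro a h0
    apply iota_ext S
    intro b h'
    exact h a h0 hs as b h'
  exact LinearMap.congr_fun₂ this e e'

/-! ### coproducts -/

theorem SRep_one_iff {h : H} {N : ℕ} {u : Fin N → Fin 2 → H} :
    SRep k 1 h N u ↔ Coalgebra.comul (R := k) h = ∑ i, u i 0 ⊗ₜ[k] u i 1 := by
  have key : ∀ x : H ⊗[k] H, (TensorProduct.map LinearMap.id (TensorProduct.rid k H).symm.toLinearMap) x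
     = (TensorProduct.congr (LinearEquiv.refl k H) (TensorProduct.rid k H).symm) x := fun x => rfl
  have h2 : (∑ i, tp k (u i) : Tpow k H 2)
     = (TensorProduct.congr (LinearEquiv.refl k H) (TensorProduct.rid k H).symm)
       (∑ i, u i 0 ⊗ₜ[k] u i 1) := by
    rw [map_sum]; rfl
  unfold SRep
  rw [h2]
  constructor
  · intro h
    exact (TensorProduct.congr (LinearEquiv.refl k H) (TensorProduct.rid k H).symm).injective h
  · intro h
    rw [← h]; rfl

theorem exists_SRep (n : ℕ) (h : H) : ∃ N u, SRep k n h N u := tp_rep _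

theorem exists_SRep_unif (m : ℕ) (g : ℕ → H) :
    ∃ (N : ℕ) (v : ℕ → Fin N → Fin 2 → H), ∀ j, j < m → SRep k 1 (g j) N (v j) := by
  choose N u hu using fun j => exists_SRep (k := k) 1 (g j)
  have hN : ∀ j, j < m → N j ≤ ∑ i ∈ Finset.range m, N i := fun j hj =>
    Finset.single_le_sum (f := N) (fun _ _ => Nat.zero_le _) (Finset.mem_range.2 hj)
  refine ⟨∑ i ∈ Finset.range m, N i, fun j i => if h : (i:ℕ) < N j then u j ⟨i, h⟩ else 0, ?_⟩
  intro j hj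
  rw [SRep_one_iff, (SRep_one_iff).1 (hu j)]
  obtain ⟨d, hd⟩ := Nat.exists_eq_add_of_le (hN j hj)
  rw [hd, Fin.sum_univ_add]
  simp

theorem lift_add' {U V M : Type} [AddCommGroup U] [Module k U] [AddCommGroup V] [Module k V]
    [AddCommGroup M] [Module k M] (f g : U →ₗ[k] V →ₗ[k] M) :
    TensorProduct.lift (f + g) = TensorProduct.lift f + TensorProduct.lift g := by
  apply TensorProduct.ext'; intros; simp

theorem lift_smul' {U V M : Type} [AddCommGroup U] [Module k U] [AddCommGroup V] [Module k V]
    [AddCommGroup M] [Module k M] (c : k) (f : U →ₗ[k] V →ₗ[k] M) :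
    TensorProduct.lift (c • f) = c • TensorProduct.lift f := by
  apply TensorProduct.ext'; intros; simp

/-- trilinear evaluation on `itComul 2`. -/
theorem srep2_eval {M : Type} [AddCommGroup M] [Module k M] (Φ : H →ₗ[k] H →ₗ[k] H →ₗ[k] M)
    {h : H} {N : ℕ} {u : Fin N → Fin 3 → H} (hu : SRep k 2 h N u)
    {N' : ℕ} {w : Fin N' → Fin 2 → H} (hw : SRep k 1 h N' w) :
    ∑ i, Φ (u i 0) (u i 1) (u i 2) =
      ∑ i, TensorProduct.lift (Φ (w i 0)) (Coalgebra.comul (R := k) (w i 1)) := by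
  let r2 : Tpow k H 2 →ₗ[k] H ⊗[k] H :=
    (TensorProduct.congr (LinearEquiv.refl k H) (TensorProduct.rid k H)).toLinearMap
  have hr2 : ∀ t : Fin 2 → H, r2 (tp k t) = t 0 ⊗ₜ t 1 := by
    intro t
    have : r2 (tp k t) = t 0 ⊗ₜ ((1 : k) • t 1) := rfl
    rw [this, one_smul]
  have hr2' : ∀ h : H, r2 (itComul k 1 h) = Coalgebra.comul (R := k) h := fun h =>
    (TensorProduct.congr (LinearEquiv.refl k H) (TensorProduct.rid k H).symm).symm_apply_apply _
  let Φ' : H →ₗ[k] Tpow k H 2 →ₗ[k] M := LinearMap.mk₂ k (fun x y => TensorProduct.lift (Φ x) (r2 y))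
     (by intros; rw [map_add, lift_add', LinearMap.add_apply])
     (by intros; rw [map_smul, lift_smul', LinearMap.smul_apply])
     (by intros; simp only [map_add]) (by intros; simp only [map_smul])
  have e1 : ∀ t : Fin 3 → H, Φ (t 0) (t 1) (t 2) = tlift Φ' (tp k t) := by
    intro t
    rw [tp_succ, tlift_tcons, LinearMap.mk₂_apply, hr2, TensorProduct.lift.tmul]
    rfl
  have e2 : (∑ i, tp k (u i)) = ∑ i, tcons 2 (w i 0) (itComul k 1 (w i 1)) := by
    have : (∑ i, tp k (u i)) = (TensorProduct.map LinearMap.id (itComul k 1)) (Coalgebra.comul (R := k) h) := hu.symm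
    rw [this, (SRep_one_iff).1 hw, map_sum]
    rfl
  simp only [e1]
  rw [← map_sum, e2, map_sum]
  refine Finset.sum_congr rfl fun i _ => ?_
  rw [tlift_tcons, LinearMap.mk₂_apply, hr2']

theorem srep_counit_left {h : H} {N : ℕ} {u : Fin N → Fin 2 → H} (hu : SRep k 1 h N u) :
    ∑ i, Coalgebra.counit (R := k) (u i 0) • u i 1 = h := by
  have := Coalgebra.rTensor_counit_comul (R := k) h
  rw [(SRep_one_iff).1 hu] at this
  have h2 := congrArg (TensorProduct.lid k H) this
  simpa using h2

theorem srep_counit_right {h : H} {N : ℕ} {u : Fin N → Fin 2 → H} (hu : SRep k 1 h N u) :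
    ∑ i, Coalgebra.counit (R := k) (u i 1) • u i 0 = h := by
  have := Coalgebra.lTensor_counit_comul (R := k) h
  rw [(SRep_one_iff).1 hu] at this
  have h2 := congrArg (TensorProduct.rid k H) this
  simpa using h2

theorem srep_one : SRep k 1 (1 : H) 1 (fun _ _ => 1) := by
  rw [SRep_one_iff]; simp; rfl

theorem srep2_one : SRep k 2 (1 : H) 1 (fun _ _ => 1) := by
  unfold SRep
  have : itComul k 2 (1 : H) = (TensorProduct.map LinearMap.id (itComul k 1)) (Coalgebra.comul (R := k) (1:H)) := rfl
  rw [this, (SRep_one_iff).1 srep_one, map_sum]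
  simp only [Finset.univ_unique, Finset.sum_singleton]
  have h1 : itComul k 1 (1 : H) = _ := srep_one (k := k) (H := H)
  erw [TensorProduct.map_tmul, h1]
  simp only [Finset.univ_unique, Finset.sum_singleton]
  rfl

/-! ### products in E -/
variable (S : CrossedProduct k A H E)

theorem aE_mul_iota (a b : A) (h : H) : S.aE a * S.ι (b ⊗ₜ h) = S.ι ((a * b) ⊗ₜ h) := by
  obtain ⟨M, v, hv⟩ := exists_SRep (k := k) 1 h
  have := S.ι_mul a b 1 h 1 M _ v srep2_one hv
  change S.ι (a ⊗ₜ 1) * _ = _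
  rw [this]
  simp only [Finset.univ_unique, Finset.sum_singleton, S.one_act, (S.f_normal _).2, one_mul]
  rw [← map_sum, ]
  congr 1
  simp only [mul_smul_comm, mul_one, TensorProduct.smul_tmul]
  rw [← TensorProduct.tmul_sum, srep_counit_left hv]

theorem iota_mul_aE (a b : A) (h : H) {N : ℕ} {u : Fin N → Fin 2 → H} (hu : SRep k 1 h N u) :
    S.ι (a ⊗ₜ h) * S.aE b = ∑ i, S.ι ((a * S.act (u i 0) b) ⊗ₜ (u i 1)) := by
  obtain ⟨M, v, hv⟩ := exists_SRep (k := k) 2 h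
  have := S.ι_mul a b h 1 M 1 v _ hv srep_one
  change _ * S.ι (b ⊗ₜ 1) = _
  rw [this]
  simp only [Finset.univ_unique, Finset.sum_singleton, (S.f_normal _).1, mul_one, mul_smul_comm]
  let g : H →ₗ[k] H →ₗ[k] E := LinearMap.mk₂ k (fun x z => S.ι ((a * S.act x b) ⊗ₜ z))
    (by intros; simp [mul_add, TensorProduct.add_tmul]) (by intros; simp [← TensorProduct.smul_tmul'])
    (by intros; simp [TensorProduct.tmul_add]) (by intros; simp)
  let Φ : H →ₗ[k] H →ₗ[k] H →ₗ[k] E := LinearMap.mk₂ k (fun x y => Coalgebra.counit (R := k) y • g x)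
     (by intros; simp) (by intros; rw [map_smul, smul_comm]) (by intros; simp [add_smul]) (by intros; simp [mul_smul])
  have h1 := srep2_eval Φ hv hu
  have h2 : ∀ x y z, Φ x y z = S.ι ((Coalgebra.counit (R := k) y • (a * S.act x b)) ⊗ₜ z) := by
    intro x y z
    simp [Φ, g, ← TensorProduct.smul_tmul']
  simp only [h2] at h1
  rw [h1]
  refine Finset.sum_congr rfl fun i _ => ?_
  obtain ⟨M, w, hw⟩ := exists_SRep (k := k) 1 (u i 1)
  rw [(SRep_one_iff).1 hw, map_sum]
  simp only [TensorProduct.lift.tmul, h2, TensorProduct.smul_tmul]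
  rw [← map_sum, ← TensorProduct.tmul_sum, srep_counit_left hw]

theorem iota_mul_hE (a : A) (h l : H) {N M : ℕ} {u : Fin N → Fin 2 → H} (hu : SRep k 1 h N u)
     {v : Fin M → Fin 2 → H} (hv : SRep k 1 l M v) :
    S.ι (a ⊗ₜ h) * S.hE l = ∑ i, ∑ j, S.ι ((a * S.f (u i 0) (v j 0)) ⊗ₜ (u i 1 * v j 1)) := by
  obtain ⟨M', u', hu'⟩ := exists_SRep (k := k) 2 h
  have := S.ι_mul a 1 h l M' M u' _ hu' hv
  change _ * S.ι (1 ⊗ₜ l) = _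
  rw [this]
  simp only [S.act_one, mul_one, mul_smul_comm]
  let g : H →ₗ[k] H →ₗ[k] E := LinearMap.mk₂ k (fun x z => ∑ j, S.ι ((a * S.f x (v j 0)) ⊗ₜ (z * v j 1)))
    (by intros; simp [mul_add, TensorProduct.add_tmul, Finset.sum_add_distrib])
    (by intros; simp [← TensorProduct.smul_tmul', Finset.smul_sum])
    (by intros; simp [TensorProduct.tmul_add, add_mul, Finset.sum_add_distrib])
    (by intros; simp [Finset.smul_sum])
  let Φ : H →ₗ[k] H →ₗ[k] H →ₗ[k] E := LinearMap.mk₂ k (fun x y => Coalgebra.counit (R := k) x • g y)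
     (by intros; simp [add_smul]) (by intros; simp [mul_smul]) (by intros; simp) (by intros; rw [map_smul, smul_comm])
  have h1 := srep2_eval Φ hu' hu
  have h2 : ∀ x y z, Φ x y z = ∑ j, S.ι (((Coalgebra.counit (R := k) x • a) * S.f y (v j 0)) ⊗ₜ (z * v j 1)) := by
    intro x y z
    simp [Φ, g, ← TensorProduct.smul_tmul', Finset.smul_sum]
  simp only [h2] at h1
  rw [show (∑ i, ∑ j, S.ι ((Coalgebra.counit (R := k) (u' i 0) • a * S.f (u' i 1) (v j 0)) ⊗ₜ (u' i 2 * v j 1))) = _ from h1]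
  have h3 : ∀ x, TensorProduct.lift (Φ x) = Coalgebra.counit (R := k) x • TensorProduct.lift g := by
    intro x
    apply TensorProduct.ext'
    intro y z
    simp [Φ]
  simp only [h3, LinearMap.smul_apply, ← map_smul]
  rw [← map_sum]
  rw [← map_sum]
  rw [srep_counit_left hu, (SRep_one_iff).1 hu, map_sum]
  rfl

theorem iota_eq (a : A) (h : H) : S.ι (a ⊗ₜ h) = S.aE a * S.hE h := by
  change _ = S.aE a * S.ι (1 ⊗ₜ h)
  rw [aE_mul_iota, mul_one]

theorem aE_one : S.aE 1 = 1 := S.ι_one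
theorem hE_one : S.hE 1 = 1 := S.ι_one

end Part1

section Part2

variable {k A H E : Type} [CommRing k] [Ring A] [Algebra k A] [Ring H] [HopfAlgebra k H]
  [Ring E] [Algebra k E]

variable (k H E) in
abbrev UE (n : ℕ) : Type := E ⊗[k] Tpow k H n

/-- left multiplication -/
def LU (x : E) {n : ℕ} : UE k H E n →ₗ[k] UE k H E n :=
  TensorProduct.map (LinearMap.mulLeft k x) LinearMap.id

theorem LU_tmul (x e : E) {n : ℕ} (t : Tpow k H n) : LU x (e ⊗ₜ[k] t) = (x * e) ⊗ₜ[k] t := rfl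

theorem LU_mul (x y : E) {n : ℕ} (m : UE k H E n) : LU (x * y) m = LU x (LU y m) := by
  have : (LU (x * y) : UE k H E n →ₗ[k] _) = LU x ∘ₗ LU y := by
    apply TensorProduct.ext'; intro e t; simp [LU_tmul, mul_assoc]
  rw [this]; rfl

theorem LU_add (x y : E) {n : ℕ} (m : UE k H E n) : LU (x + y) m = LU x m + LU y m := by
  have : (LU (x + y) : UE k H E n →ₗ[k] _) = LU x + LU y := by
    apply TensorProduct.ext'; intro e t; simp [LU_tmul, add_mul, TensorProduct.add_tmul]
  rw [this]; rfl

theorem LU_smul (c : k) (x : E) {n : ℕ} (m : UE k H E n) : LU (c • x) m = c • LU x m := by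
  have : (LU (c • x) : UE k H E n →ₗ[k] _) = c • LU x := by
    apply TensorProduct.ext'; intro e t
    rw [LinearMap.smul_apply, LU_tmul, LU_tmul, smul_mul_assoc, TensorProduct.smul_tmul']
  rw [this]; rfl

def LUb (n : ℕ) : E →ₗ[k] UE k H E n →ₗ[k] UE k H E n :=
  LinearMap.mk₂ k (fun x m => LU x m) (fun x y m => LU_add x y m) (fun c x m => LU_smul c x m)
    (fun x m m' => map_add _ _ _) (fun c x m => map_smul _ _ _)

theorem LUb_apply (n : ℕ) (x : E) (m : UE k H E n) : LUb n x m = LU x m := rfl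

/-- left-linear extension -/
def extU {m n : ℕ} (g : Tpow k H m →ₗ[k] UE k H E n) : UE k H E m →ₗ[k] UE k H E n :=
  TensorProduct.lift ((LUb n).compl₂ g)

theorem extU_tmul {m n : ℕ} (g : Tpow k H m →ₗ[k] UE k H E n) (e : E) (t : Tpow k H m) :
    extU g (e ⊗ₜ[k] t) = LU e (g t) := by
  simp [extU, LUb_apply]

theorem extU_LU {m n : ℕ} (g : Tpow k H m →ₗ[k] UE k H E n) (x : E) (w : UE k H E m) :
    extU g (LU x w) = LU x (extU g w) := by
  have : extU g ∘ₗ LU x = LU x ∘ₗ extU g := by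
    apply TensorProduct.ext'; intro e t
    simp only [LinearMap.comp_apply, LU_tmul, extU_tmul, LU_mul]
  exact LinearMap.congr_fun this w

theorem extU_add {m n : ℕ} (g g' : Tpow k H m →ₗ[k] UE k H E n) : extU (g + g') = extU g + extU g' := by
  apply TensorProduct.ext'; intro e t
  simp only [LinearMap.add_apply, extU_tmul, map_add]

theorem extU_smul {m n : ℕ} (c : k) (g : Tpow k H m →ₗ[k] UE k H E n) : extU (c • g) = c • extU g := by
  apply TensorProduct.ext'; intro e t
  simp only [LinearMap.smul_apply, extU_tmul, map_smul]

variable (S : CrossedProduct k A H E)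

def IU (n : ℕ) : Tpow k H (n + 1) →ₗ[k] UE k H E n :=
  TensorProduct.map S.hE LinearMap.id

theorem IU_tcons (n : ℕ) (h : H) (t : Tpow k H n) : IU S n (tcons n h t) = S.hE h ⊗ₜ[k] t := rfl

def JUG (n : ℕ) : A →ₗ[k] H →ₗ[k] (Tpow k H n →ₗ[k] UE k H E (n + 1)) :=
  LinearMap.mk₂ k (fun a h => (TensorProduct.mk k E (Tpow k H (n+1)) (S.aE a)) ∘ₗ tcons n h)
    (fun a b h => by rw [map_add, map_add, LinearMap.add_comp])
    (fun c a h => by rw [map_smul, map_smul, LinearMap.smul_comp])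
    (fun a h l => by rw [map_add, LinearMap.comp_add])
    (fun c a h => by rw [map_smul, LinearMap.comp_smul])

def JU (n : ℕ) : UE k H E n →ₗ[k] UE k H E (n + 1) :=
  TensorProduct.lift ((TensorProduct.lift (JUG S n)) ∘ₗ S.ι.symm.toLinearMap)

theorem JU_iota (n : ℕ) (a : A) (h : H) (t : Tpow k H n) :
    JU S n (S.ι (a ⊗ₜ h) ⊗ₜ t) = S.aE a ⊗ₜ tcons n h t := by
  rw [JU, TensorProduct.lift.tmul, LinearMap.comp_apply, LinearEquiv.coe_coe,
    LinearEquiv.symm_apply_apply, TensorProduct.lift.tmul]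
  rfl

theorem UE_ext_iota {M : Type} [AddCommGroup M] [Module k M] {n : ℕ} {f g : UE k H E n →ₗ[k] M}
    (h : ∀ a h t, f (S.ι (a ⊗ₜ h) ⊗ₜ t) = g (S.ι (a ⊗ₜ h) ⊗ₜ t)) : f = g := by
  apply TensorProduct.ext
  apply iota_ext S
  intro a h'
  apply LinearMap.ext
  intro t
  exact h a h' t

theorem JU_aE (n : ℕ) (a : A) (m : UE k H E n) : JU S n (LU (S.aE a) m) = LU (S.aE a) (JU S n m) := by
  have : JU S n ∘ₗ LU (S.aE a) = LU (S.aE a) ∘ₗ JU S n := by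
    apply UE_ext_iota S
    intro b h t
    simp only [LinearMap.comp_apply, LU_tmul, aE_mul_iota, JU_iota]
    congr 1
    exact (aE_mul_iota S a b 1).symm
  exact LinearMap.congr_fun this m

theorem hE_def (h : H) : S.hE h = S.ι (1 ⊗ₜ h) := rfl

theorem JU_hE (n : ℕ) (h : H) (t : Tpow k H n) : JU S n (S.hE h ⊗ₜ t) = 1 ⊗ₜ tcons n h t := by
  rw [hE_def, JU_iota, aE_one]

theorem JU_IU (n : ℕ) (t : Tpow k H (n+1)) : JU S n (IU S n t) = 1 ⊗ₜ t := by
  have : JU S n ∘ₗ IU S n = TensorProduct.mk k E (Tpow k H (n+1)) 1 := by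
    apply LinearMap.ext
    intro t
    refine tcons_ind (P := fun t => (JU S n ∘ₗ IU S n) t = TensorProduct.mk k E (Tpow k H (n+1)) 1 t) t
      (by simp) ?_ (fun x y hx hy => by rw [map_add, map_add, hx, hy])
    intro h t
    rw [LinearMap.comp_apply, IU_tcons, JU_hE]; rfl
  exact LinearMap.congr_fun this t

theorem UE_extJ {M : ℕ} {n : ℕ} {f g : UE k H E (n+1) →ₗ[k] UE k H E M}
    (hf : ∀ x m, f (LU x m) = LU x (f m)) (hg : ∀ x m, g (LU x m) = LU x (g m))
    (h : ∀ m, f (JU S n m) = g (JU S n m)) : f = g := by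
  apply TensorProduct.ext'
  intro e t
  have : e ⊗ₜ[k] t = LU e (JU S n (IU S n t)) := by rw [JU_IU, LU_tmul, mul_one]
  rw [this, hf, hg, h]

/-- computing `extU` of something of the form `G ∘ IU` on `J`. -/
theorem extU_J {M n : ℕ} (G : UE k H E n →ₗ[k] UE k H E M)
    (hG : ∀ a m, G (LU (S.aE a) m) = LU (S.aE a) (G m)) (m : UE k H E n) :
    extU (G ∘ₗ IU S n) (JU S n m) = G m := by
  have : extU (G ∘ₗ IU S n) ∘ₗ JU S n = G := by
    apply UE_ext_iota S
    intro a h t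
    rw [LinearMap.comp_apply, JU_iota, extU_tmul, LinearMap.comp_apply, IU_tcons, ← hG, LU_tmul, ← iota_eq]
  exact LinearMap.congr_fun this m

def bU : ∀ n : ℕ, UE k H E (n + 1) →ₗ[k] UE k H E n
  | 0 => extU (LinearMap.id ∘ₗ IU S 0)
  | n + 1 => extU ((LinearMap.id - JU S n ∘ₗ bU n) ∘ₗ IU S (n + 1))

theorem bU_LU (n : ℕ) (x : E) (m) : bU S n (LU x m) = LU x (bU S n m) := by
  cases n <;> exact extU_LU _ _ _

theorem bU_J0 (m) : bU S 0 (JU S 0 m) = m := extU_J S _ (fun _ _ => rfl) m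

theorem bU_JS (n : ℕ) (m) : bU S (n+1) (JU S (n+1) m) = m - JU S n (bU S n m) := by
  refine extU_J S _ ?_ m
  intro a m
  simp only [LinearMap.sub_apply, LinearMap.id_apply, LinearMap.comp_apply, bU_LU, JU_aE, map_sub]

theorem bU_bU (n : ℕ) : bU S n ∘ₗ bU S (n + 1) = 0 := by
  induction n with
  | zero =>
    apply UE_extJ S
    · intro x m; simp only [LinearMap.comp_apply, bU_LU]
    · intro x m; simp
    · intro m
      simp only [LinearMap.comp_apply, bU_JS, map_sub, bU_J0, sub_self, LinearMap.zero_apply]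
  | succ n ih =>
    apply UE_extJ S
    · intro x m; simp only [LinearMap.comp_apply, bU_LU]
    · intro x m; simp
    · intro m
      have := LinearMap.congr_fun ih m
      simp only [LinearMap.comp_apply, LinearMap.zero_apply] at this
      simp only [LinearMap.comp_apply, bU_JS, map_sub, this, map_zero, sub_zero, sub_self, LinearMap.zero_apply]

def OU (x : E) : ∀ n : ℕ, UE k H E n →ₗ[k] UE k H E (n + 1)
  | 0 => extU (JU S 0 ∘ₗ TensorProduct.mk k E (Tpow k H 0) x)
  | n + 1 => extU ((JU S (n+1) ∘ₗ OU x n) ∘ₗ IU S n)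

def RU (y : E) : ∀ n : ℕ, UE k H E n →ₗ[k] UE k H E n
  | 0 => extU (TensorProduct.mk k E (Tpow k H 0) y)
  | n + 1 => extU ((JU S n ∘ₗ RU y n) ∘ₗ IU S n)

theorem OU_LU (y : E) (n : ℕ) (x : E) (m) : OU S y n (LU x m) = LU x (OU S y n m) := by
  cases n <;> exact extU_LU _ _ _

theorem RU_LU (y : E) (n : ℕ) (x : E) (m) : RU S y n (LU x m) = LU x (RU S y n m) := by
  cases n <;> exact extU_LU _ _ _

theorem OU_J (x : E) (n : ℕ) (m) : OU S x (n+1) (JU S n m) = JU S (n+1) (OU S x n m) := by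
  refine extU_J S _ ?_ m
  intro a m
  simp only [LinearMap.comp_apply, OU_LU, JU_aE]

theorem RU_J (x : E) (n : ℕ) (m) : RU S x (n+1) (JU S n m) = JU S n (RU S x n m) := by
  refine extU_J S _ ?_ m
  intro a m
  simp only [LinearMap.comp_apply, RU_LU, JU_aE]

theorem OU_add (x y : E) (n : ℕ) : OU S (x + y) n = OU S x n + OU S y n := by
  induction n with
  | zero => simp only [OU, map_add, LinearMap.comp_add, extU_add]
  | succ n ih => simp only [OU, ih, LinearMap.comp_add, LinearMap.add_comp, extU_add]

theorem OU_smul (c : k) (y : E) (n : ℕ) : OU S (c • y) n = c • OU S y n := by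
  induction n with
  | zero => simp only [OU, map_smul, LinearMap.comp_smul, extU_smul]
  | succ n ih => simp only [OU, ih, LinearMap.comp_smul, LinearMap.smul_comp, extU_smul]

theorem RU_OU (x y : E) (n : ℕ) (m) : RU S y (n+1) (OU S x n m) = OU S (x * y) n m := by
  have : RU S y (n+1) ∘ₗ OU S x n = OU S (x * y) n := by
    clear m
    induction n with
    | zero =>
      apply TensorProduct.ext'
      intro e t
      simp only [LinearMap.comp_apply, OU, extU_tmul, RU_LU]
      rw [RU_J]
      simp only [RU, TensorProduct.mk_apply, extU_tmul, LU_tmul]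
    | succ n ih =>
      apply UE_extJ S
      · intro x m; simp only [LinearMap.comp_apply, OU_LU, RU_LU]
      · intro x m; simp only [OU_LU]
      · intro m
        have := LinearMap.congr_fun ih m
        simp only [LinearMap.comp_apply] at this
        simp only [LinearMap.comp_apply, OU_J, RU_J, this]
  exact LinearMap.congr_fun this m

theorem bU_RU (y : E) (n : ℕ) (m) : bU S n (RU S y (n+1) m) = RU S y n (bU S n m) := by
  have : bU S n ∘ₗ RU S y (n+1) = RU S y n ∘ₗ bU S n := by
    clear m
    induction n with
    | zero =>
      apply UE_extJ S
      · intro x m; simp only [LinearMap.comp_apply, bU_LU, RU_LU]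
      · intro x m; simp only [LinearMap.comp_apply, bU_LU, RU_LU]
      · intro m
        simp only [LinearMap.comp_apply, bU_J0, RU_J]
    | succ n ih =>
      apply UE_extJ S
      · intro x m; simp only [LinearMap.comp_apply, bU_LU, RU_LU]
      · intro x m; simp only [LinearMap.comp_apply, bU_LU, RU_LU]
      · intro m
        have := LinearMap.congr_fun ih m
        simp only [LinearMap.comp_apply] at this
        simp only [LinearMap.comp_apply, bU_JS, RU_J, this, map_sub]
  exact LinearMap.congr_fun this m

theorem bU_O0 (m) : bU S 0 (OU S 1 0 m) = m := by
  have : bU S 0 ∘ₗ OU S 1 0 = LinearMap.id := by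
    apply TensorProduct.ext'
    intro e t
    simp only [LinearMap.comp_apply, OU, extU_tmul, bU_LU, bU_J0, TensorProduct.mk_apply, LU_tmul, mul_one,
      LinearMap.id_apply]
  exact LinearMap.congr_fun this m

theorem bU_OS (n : ℕ) (m) : bU S (n+1) (OU S 1 (n+1) m) = OU S 1 n (bU S n m) + ((-1:ℤ)^(n+1)) • m := by
  have : bU S (n+1) ∘ₗ OU S 1 (n+1) = OU S 1 n ∘ₗ bU S n + ((-1:ℤ)^(n+1)) • LinearMap.id := by
    clear m
    induction n with
    | zero =>
      apply UE_extJ S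
      · intro x m; simp only [LinearMap.comp_apply, bU_LU, OU_LU]
      · intro x m; simp only [LinearMap.comp_apply, LinearMap.add_apply, LinearMap.smul_apply, LinearMap.id_apply, bU_LU, OU_LU, map_add, map_zsmul]
      · intro m
        simp only [LinearMap.comp_apply, LinearMap.add_apply, LinearMap.smul_apply, LinearMap.id_apply, OU_J, bU_JS, bU_J0, bU_O0]
        simp [sub_eq_add_neg]
    | succ n ih =>
      apply UE_extJ S
      · intro x m; simp only [LinearMap.comp_apply, bU_LU, OU_LU]
      · intro x m; simp only [LinearMap.comp_apply, LinearMap.add_apply, LinearMap.smul_apply, LinearMap.id_apply, bU_LU, OU_LU, map_add, map_zsmul]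
      · intro m
        have := LinearMap.congr_fun ih m
        simp only [LinearMap.comp_apply, LinearMap.add_apply, LinearMap.smul_apply, LinearMap.id_apply] at this
        simp only [LinearMap.comp_apply, LinearMap.add_apply, LinearMap.smul_apply, LinearMap.id_apply, OU_J, bU_JS, this, map_add, map_sub, map_zsmul]
        rw [pow_succ (-1:ℤ) (n+1), mul_neg_one, neg_smul]; abel
  exact LinearMap.congr_fun this m

theorem OU_hE (h : H) : ∀ (n : ℕ) (e : E) (hs : Fin n → H),
    OU S (S.hE h) n (e ⊗ₜ tp k hs) = e ⊗ₜ tp k (Fin.snoc hs h : Fin (n+1) → H) := by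
  intro n
  induction n with
  | zero =>
    intro e hs
    simp only [OU, extU_tmul, LinearMap.comp_apply, TensorProduct.mk_apply, JU_hE, LU_tmul, mul_one]
    rw [tp_succ]
    congr 1
  | succ n ih =>
    intro e hs
    simp only [OU, extU_tmul, LinearMap.comp_apply]
    have hf : (fun i : Fin (n+1) => (Fin.snoc hs h : Fin (n+2) → H) i.succ)
        = (Fin.snoc (fun i : Fin n => hs i.succ) h : Fin (n+1) → H) := by
      funext i
      refine Fin.lastCases ?_ (fun j => ?_) i
      · rw [Fin.snoc_last, Fin.succ_last, Fin.snoc_last]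
      · rw [Fin.snoc_castSucc, Fin.succ_castSucc, Fin.snoc_castSucc]
    have h0 : (Fin.snoc hs h : Fin (n+2) → H) 0 = hs 0 := by
      exact Fin.snoc_castSucc (α := fun _ => H) h hs 0
    rw [tp_succ, IU_tcons, ih, JU_hE, LU_tmul, mul_one, tp_succ (Fin.snoc hs h : Fin (n+2) → H), hf, h0]

/-! ### projection to Y -/

def qY : ∀ s : ℕ, Tpow k H (s + 1) →ₗ[k] Tpow k (Qbar k H) s ⊗[k] H
  | 0 => tlift ((TensorProduct.mk k (Tpow k (Qbar k H) 0) H).flip)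
  | s + 1 => tlift (((LinearMap.rTensorHom H ∘ₗ tcons s) ∘ₗ qbar k H).compl₂ (qY s))

theorem qY_tp : ∀ (s : ℕ) (hs : Fin (s + 1) → H),
    qY s (tp k hs) = tp k (fun i : Fin s => qbar k H (hs i.castSucc)) ⊗ₜ[k] hs (Fin.last s) := by
  intro s
  induction s with
  | zero =>
    intro hs
    rw [tp_succ]
    exact tlift_tcons _ _ _
  | succ s ih =>
    intro hs
    rw [tp_succ, qY, tlift_tcons, LinearMap.compl₂_apply, ih]
    rfl

def piY (s : ℕ) : UE k H E (s+1) →ₗ[k] Yc k H E s := TensorProduct.map LinearMap.id (qY s)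

theorem piY_tp (s : ℕ) (e : E) (hs : Fin (s + 1) → H) :
    piY s (e ⊗ₜ tp k hs) = ygen e (fun i : Fin s => (hs i.castSucc)) (hs (Fin.last s)) := by
  simp only [piY, TensorProduct.map_tmul, qY_tp]; rfl

theorem UE_ext {M : Type} [AddCommGroup M] [Module k M] {n : ℕ} {f g : UE k H E n →ₗ[k] M}
    (h : ∀ e (hs : Fin n → H), f (e ⊗ₜ tp k hs) = g (e ⊗ₜ tp k hs)) : f = g := by
  apply TensorProduct.ext
  apply LinearMap.ext; intro e
  apply tp_ext
  intro w
  exact h e w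

theorem piY_LU (s : ℕ) (x : E) (m : UE k H E (s+1)) : piY s (LU x m) = lY x (piY s m) := by
  have : piY s ∘ₗ LU x = lY x ∘ₗ (piY s : UE k H E (s+1) →ₗ[k] _) := by
    apply UE_ext; intro e hs; rfl
  exact LinearMap.congr_fun this m

theorem piY_surj (s : ℕ) : Function.Surjective (piY s : UE k H E (s+1) →ₗ[k] _) := by
  rw [← LinearMap.range_eq_top]
  have : (LinearMap.range (piY s : UE k H E (s+1) →ₗ[k] Yc k H E s)).mkQ = 0 := by
    apply ygen_ext
    intro e hs h
    have : ygen e hs h = piY (k := k) s (e ⊗ₜ tp k (Fin.snoc hs h : Fin (s+1) → H)) := by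
      rw [piY_tp]; simp
    rw [this]; simp
  rw [← Submodule.ker_mkQ (LinearMap.range _), this, LinearMap.ker_zero]

end Part2

section Part3

variable {k A H E : Type} [CommRing k] [Ring A] [Algebra k A] [Ring H] [HopfAlgebra k H]
  [Ring E] [Algebra k E]
variable (S : CrossedProduct k A H E)

theorem sum_cons {M : Type} [AddCommMonoid M] {m N : ℕ} (F : (Fin (m+1) → Fin N) → M) :
    ∑ c : Fin (m+1) → Fin N, F c = ∑ c' : Fin m → Fin N, ∑ i : Fin N,
      F (Fin.cons i c' : Fin (m+1) → Fin N) := by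
  rw [Finset.sum_comm, ← Fintype.sum_prod_type' (f := fun i c' => F (Fin.cons i c' : Fin (m+1) → Fin N))]
  exact (Equiv.sum_comp (Fin.consEquiv fun _ => Fin N) F).symm

theorem snoc_shift {V : Type} (n : ℕ) (hs : Fin (n+1) → V) (h : V) :
    (fun i : Fin (n+1) => (Fin.snoc hs h : Fin (n+2) → V) i.succ)
        = (Fin.snoc (fun i : Fin n => hs i.succ) h : Fin (n+1) → V) := by
  funext i
  refine Fin.lastCases ?_ (fun j => ?_) i
  · rw [Fin.snoc_last, Fin.succ_last, Fin.snoc_last]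
  · rw [Fin.snoc_castSucc, Fin.succ_castSucc, Fin.snoc_castSucc]

theorem snoc_zero {V : Type} (n : ℕ) (hs : Fin (n+1) → V) (h : V) :
    (Fin.snoc hs h : Fin (n+2) → V) 0 = hs 0 :=
  Fin.snoc_castSucc (α := fun _ => V) h hs 0

theorem OU_formula {N : ℕ} (b : A) (h' : H) : ∀ (s : ℕ) (a : A) (g : ℕ → H) (v : ℕ → Fin N → Fin 2 → H),
    (∀ j < s + 1, SRep k 1 (g j) N (v j)) →
    OU S (S.ι (b ⊗ₜ h')) s (S.ι (a ⊗ₜ g 0) ⊗ₜ tp k (fun i : Fin s => g (i + 1))) =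
      ∑ c : Fin (s+1) → Fin N,
        S.ι ((a * iterAct k S.act (fun i : Fin (s+1) => v i (c i) 0) b) ⊗ₜ[k] (v 0 (c 0) 1)) ⊗ₜ
          tp k (Fin.snoc (fun i : Fin s => v (i+1) (c i.succ) 1) h' : Fin (s+1) → H) := by
  intro s
  induction s with
  | zero =>
    intro a g v hv
    rw [OU, extU_tmul, LinearMap.comp_apply, TensorProduct.mk_apply, JU_iota, LU_tmul,
      iota_mul_aE S a b (g 0) (hv 0 (by omega)), TensorProduct.sum_tmul, sum_cons]
    simp only [Finset.univ_unique, Finset.sum_singleton]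
    rfl
  | succ s ih =>
    intro a g v hv
    rw [OU, extU_tmul, LinearMap.comp_apply, LinearMap.comp_apply, tp_succ, IU_tcons]
    have := ih 1 (fun j => g (j+1)) (fun j => v (j+1)) (fun j hj => hv (j+1) (by omega))
    simp only [Fin.val_succ, Fin.val_zero]
    rw [hE_def, sum_cons]
    refine (congrArg (fun z => LU (S.ι (a ⊗ₜ[k] g 0)) (JU S (s+1) z)) this).trans ?_
    simp only [map_sum]
    refine Finset.sum_congr rfl fun c' _ => ?_
    rw [JU_iota, LU_tmul, one_mul, iota_mul_aE S _ _ (g 0) (hv 0 (by omega)), TensorProduct.sum_tmul]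
    refine Finset.sum_congr rfl fun i _ => ?_
    rw [tp_succ (Fin.snoc _ h' : Fin (s+2) → H), snoc_shift, snoc_zero]
    rfl

theorem exists_seq {V : Type} [Inhabited V] {m : ℕ} (w : Fin m → V) : ∃ g : ℕ → V, ∀ i : Fin m, w i = g i :=
  ⟨fun j => if h : j < m then w ⟨j, h⟩ else default, fun i => by simp⟩

theorem cons_seq {V : Type} (g : ℕ → V) (s : ℕ) :
    (Fin.cons (g 0) (fun i : Fin s => g (i+1)) : Fin (s+1) → V) = fun i : Fin (s+1) => g i := by
  funext i
  refine Fin.cases rfl (fun j => ?_) i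
  simp

theorem snoc_seq {V : Type} (g : ℕ → V) (s : ℕ) :
    (Fin.snoc (fun i : Fin s => g i) (g s) : Fin (s+1) → V) = fun i : Fin (s+1) => g i := by
  funext i
  refine Fin.lastCases ?_ (fun j => ?_) i <;> simp

variable (R : ResData k A H E S)

theorem mu_OU (s : ℕ) (e : E) (hs : Fin s → H) (as : Fin 0 → A) (x : E) :
    R.mu s (xgen e hs as x) = piY s (OU S x s (e ⊗ₜ tp k hs)) := by
  have has : as = (fun i : Fin 0 => i.elim0) := by funext i; exact i.elim0
  subst has
  have : ∀ (a : A) (h : H) (b : A) (h' : H), R.mu s (xgen (S.ι (a ⊗ₜ h)) hs (fun i : Fin 0 => i.elim0) (S.ι (b ⊗ₜ h'))) =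
      piY s (OU S (S.ι (b ⊗ₜ h')) s (S.ι (a ⊗ₜ h) ⊗ₜ tp k hs)) := by
    intro a h b h'
    haveI : Inhabited H := ⟨0⟩
    obtain ⟨g, hg⟩ := exists_seq (Fin.cons h hs : Fin (s+1) → H)
    have h0 : h = g 0 := hg 0
    have hs0 : hs = fun i : Fin s => g (i+1) := by
      funext i; simpa using hg i.succ
    subst h0; subst hs0
    obtain ⟨N, v, hv⟩ := exists_SRep_unif (k := k) (s+1) g
    rw [OU_formula S b h' s a g v hv, map_sum, R.mu_eq s a (g 0) _ b h' (fun _ => N) (fun i => v i)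
      (by intro i; rw [cons_seq]; exact hv i i.isLt)]
    refine Finset.sum_congr rfl fun c _ => ?_
    rw [piY_tp]
    congr 1
    · funext i; rw [Fin.snoc_castSucc]; rfl
    · rw [Fin.snoc_last]
  have key : (xgenL hs (fun i : Fin 0 => i.elim0)).compr₂ (R.mu s) =
      LinearMap.mk₂ k (fun e x => piY s (OU S x s (e ⊗ₜ tp k hs)))
        (fun e e' x => by rw [TensorProduct.add_tmul, map_add, map_add])
        (fun c e x => by rw [← TensorProduct.smul_tmul', map_smul, map_smul])
        (fun e x y => by rw [OU_add, LinearMap.add_apply, map_add])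
        (fun c e x => by rw [OU_smul, LinearMap.smul_apply, map_smul]) := by
    apply iota_ext S
    intro a h
    apply iota_ext S
    intro b h'
    exact this a h b h'
  exact LinearMap.congr_fun₂ key e x

def bterm {N : ℕ} (i n : ℕ) (a : A) (g : ℕ → H) (v : ℕ → Fin N → Fin 2 → H) (c : Fin (i+2) → Fin N) : UE k H E n :=
  S.ι ((a * iterAct k S.act (fun j : Fin i => v j (c ⟨j, by omega⟩) 0)
      (S.f (v i (c ⟨i, by omega⟩) 0) (v (i+1) (c ⟨i+1, by omega⟩) 0))) ⊗ₜ[k]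
    (if i = 0 then v 0 (c ⟨0, by omega⟩) 1 * v 1 (c ⟨1, by omega⟩) 1 else v 0 (c ⟨0, by omega⟩) 1)) ⊗ₜ
  tp k (fun p : Fin n => if hp : (p:ℕ) + 1 < i then v (p+1) (c ⟨p+1, by omega⟩) 1
    else if hp' : (p:ℕ)+1 = i then v (p+1) (c ⟨p+1, by omega⟩) 1 * v (p+2) (c ⟨p+2, by omega⟩) 1
    else g (p+2))

def bsum {N : ℕ} (i n : ℕ) (a : A) (g : ℕ → H) (v : ℕ → Fin N → Fin 2 → H) : UE k H E n :=
  ∑ c : Fin (i+2) → Fin N, bterm S i n a g v c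

theorem bterm_zero {N : ℕ} (n : ℕ) (a : A) (g : ℕ → H) (v : ℕ → Fin N → Fin 2 → H)
    (h0 : SRep k 1 (g 0) N (v 0)) (h1 : SRep k 1 (g 1) N (v 1)) :
    bsum S 0 n a g v = (S.ι (a ⊗ₜ g 0) * S.hE (g 1)) ⊗ₜ tp k (fun p : Fin n => g (p+2)) := by
  rw [bsum, iota_mul_hE S a (g 0) (g 1) h0 h1, TensorProduct.sum_tmul, sum_cons, Finset.sum_comm]
  refine Finset.sum_congr rfl fun i _ => ?_
  rw [sum_cons]
  simp only [Finset.univ_unique, Finset.sum_singleton]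
  rw [TensorProduct.sum_tmul]
  refine Finset.sum_congr rfl fun j _ => ?_
  simp only [bterm, if_true, Nat.not_lt_zero, dite_false, Nat.succ_ne_zero]
  rfl

theorem bterm_succ {N : ℕ} (i n : ℕ) (a : A) (g : ℕ → H) (v : ℕ → Fin N → Fin 2 → H)
    (h0 : SRep k 1 (g 0) N (v 0)) :
    bsum S (i+1) (n+1) a g v =
    LU (S.ι (a ⊗ₜ g 0)) (JU S n (bsum S i n 1 (fun j => g (j+1)) (fun j => v (j+1)))) := by
  rw [bsum, bsum, map_sum, map_sum, sum_cons]
  refine Finset.sum_congr rfl fun c' _ => ?_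
  rw [bterm, JU_iota, LU_tmul, one_mul, iota_mul_aE S _ _ (g 0) h0, TensorProduct.sum_tmul]
  refine Finset.sum_congr rfl fun x _ => ?_
  rw [bterm, if_neg (Nat.succ_ne_zero i), tp_succ]
  congr 2
  · congr 1
    by_cases hi : i = 0
    · subst hi; rfl
    · rw [if_neg hi, dif_pos (by simp; omega)]; rfl
  · congr 1
    funext p
    by_cases h1 : (p:ℕ) + 1 < i
    · rw [dif_pos h1, dif_pos (by simpa using h1)]; rfl
    · rw [dif_neg h1, dif_neg (by simpa using h1)]
      by_cases h2 : (p:ℕ) + 1 = i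
      · rw [dif_pos h2, dif_pos (by simpa using h2)]; rfl
      · rw [dif_neg h2, dif_neg (by simpa using h2)]; rfl

theorem bU_formula {N : ℕ} : ∀ (n : ℕ) (a : A) (g : ℕ → H) (v : ℕ → Fin N → Fin 2 → H),
    (∀ j < n + 2, SRep k 1 (g j) N (v j)) →
    bU S n (S.ι (a ⊗ₜ g 0) ⊗ₜ tp k (fun i : Fin (n+1) => g (i + 1))) =
      ∑ i : Fin (n+1), ((-1 : ℤ)^(i:ℕ)) • bsum S i n a g v := by
  intro n
  induction n with
  | zero =>
    intro a g v hv
    rw [bU, extU_tmul, LinearMap.comp_apply, tp_succ, IU_tcons, LinearMap.id_apply, LU_tmul]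
    rw [Fin.sum_univ_one]
    simp only [Fin.val_zero, pow_zero, one_smul]
    rw [bterm_zero S _ _ _ _ (hv 0 (by omega)) (hv 1 (by omega))]
    rfl
  | succ n ih =>
    intro a g v hv
    rw [bU, extU_tmul, LinearMap.comp_apply, tp_succ, IU_tcons, LinearMap.sub_apply, LinearMap.comp_apply, map_sub,
      LinearMap.id_apply, LU_tmul]
    have := ih 1 (fun j => g (j+1)) (fun j => v (j+1)) (fun j hj => hv (j+1) (by omega))
    simp only [Fin.val_succ, Fin.val_zero, hE_def]
    rw [Fin.sum_univ_succ (n := n+1)]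
    rw [this]
    simp only [Fin.val_succ, Fin.val_zero, pow_zero, one_smul]
    rw [bterm_zero S _ _ _ _ (hv 0 (by omega)) (hv 1 (by omega)), sub_eq_add_neg]
    congr 1
    rw [map_sum, map_sum, ← Finset.sum_neg_distrib]
    refine Finset.sum_congr rfl fun i _ => ?_
    rw [bterm_succ S _ _ _ _ _ (hv 0 (by omega)), map_zsmul, map_zsmul, pow_succ, mul_neg_one, neg_smul]

theorem del_bU (s : ℕ) (y : UE k H E (s+2)) : R.del s (piY (s+1) y) = - piY s (bU S (s+1) y) := by
  have : R.del s ∘ₗ piY (s+1) = - (piY s ∘ₗ bU S (s+1)) := by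
    apply TensorProduct.ext
    apply iota_ext S
    intro a h
    apply tp_ext
    intro hs
    haveI : Inhabited H := ⟨0⟩
    obtain ⟨g, hg⟩ := exists_seq (Fin.cons h hs : Fin (s+3) → H)
    have h0 : h = g 0 := hg 0
    have hs0 : hs = fun i : Fin (s+2) => g (i+1) := by
      funext i; simpa using hg i.succ
    subst h0; subst hs0
    obtain ⟨N, v, hv⟩ := exists_SRep_unif (k := k) (s+3) g
    have hc : (Fin.cons (g 0) (Fin.snoc (fun i : Fin (s+1) => g (i+1)) (g (s+2))) : Fin (s+3) → H) =
      fun i : Fin (s+3) => g i := by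
      rw [snoc_seq (fun i => g (i+1)) (s+1), cons_seq]
    have e1 : R.del s (piY (s+1) (S.ι (a ⊗ₜ g 0) ⊗ₜ tp k (fun i : Fin (s+2) => g (i+1)))) =
      - piY s (bU S (s+1) (S.ι (a ⊗ₜ g 0) ⊗ₜ tp k (fun i : Fin (s+2) => g (i+1)))) := by
      rw [piY_tp, bU_formula S (s+1) a g v hv, map_sum, ← Finset.sum_neg_distrib]
      refine (R.del_eq s a (g 0) _ _ (fun _ => N) (fun i => v i) ?_).trans ?_
      · intro i
        exact (congrFun hc i).symm ▸ hv i i.isLt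
      · refine Finset.sum_congr rfl fun i _ => ?_
        rw [map_zsmul, pow_succ, mul_neg_one, neg_smul, bsum, map_sum]
        congr 2
        refine Finset.sum_congr rfl fun c _ => ?_
        rw [bterm, piY_tp]
        congr 1
        · funext p
          by_cases h1 : (p:ℕ) + 1 < i
          · rw [dif_pos h1, dif_pos (show ((p.castSucc : Fin (s+1)) : ℕ) + 1 < i from h1)]; rfl
          · rw [dif_neg h1, dif_neg (show ¬ ((p.castSucc : Fin (s+1)) : ℕ) + 1 < i from h1)]
            by_cases h2 : (p:ℕ) + 1 = i
            · rw [dif_pos h2, dif_pos (show ((p.castSucc : Fin (s+1)) : ℕ) + 1 = i from h2)]; rfl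
            · rw [dif_neg h2, dif_neg (show ¬ ((p.castSucc : Fin (s+1)) : ℕ) + 1 = i from h2)]
              exact congrFun hc _
        · have := i.isLt
          by_cases h2 : (i:ℕ) = s+1
          · rw [dif_pos h2, dif_neg (by simp; omega), dif_pos (by simp; omega)]; rfl
          · rw [dif_neg h2, dif_neg (by simp; omega), dif_neg (by simp; omega)]
            exact congrFun hc _
    exact e1
  exact LinearMap.congr_fun this y

end Part3

section Part4

variable {k A H E : Type} [CommRing k] [Ring A] [Algebra k A] [Ring H] [HopfAlgebra k H]
  [Ring E] [Algebra k E]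
variable {S : CrossedProduct k A H E} (R : ResData k A H E S)

theorem lX_xgen (x e : E) {s r : ℕ} (hs : Fin s → H) (as : Fin r → A) (e' : E) :
    lX x (xgen (k := k) e hs as e') = xgen (x * e) hs as e' := rfl
theorem rX_xgen (x e : E) {s r : ℕ} (hs : Fin s → H) (as : Fin r → A) (e' : E) :
    rX x (xgen (k := k) e hs as e') = xgen e hs as (e' * x) := rfl

def NY (e : E) (s : ℕ) : Yc k H E s →ₗ[k] Yc k H E s := R.mu s ∘ₗ rX e ∘ₗ R.sig0 s

theorem piY_snoc (s : ℕ) (e : E) (hs : Fin s → H) (h : H) :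
    piY (k := k) s (e ⊗ₜ tp k (Fin.snoc hs h : Fin (s+1) → H)) = ygen e hs h := by
  rw [piY_tp]; simp

theorem UE_ext_snoc {M : Type} [AddCommGroup M] [Module k M] {n : ℕ} {f g : UE k H E (n+1) →ₗ[k] M}
    (h : ∀ e (hs : Fin n → H) (h : H), f (e ⊗ₜ tp k (Fin.snoc hs h : Fin (n+1) → H))
      = g (e ⊗ₜ tp k (Fin.snoc hs h : Fin (n+1) → H))) : f = g := by
  apply UE_ext
  intro e hs
  rw [← Fin.snoc_init_self hs]
  exact h _ _ _

theorem NY_piY (e : E) (s : ℕ) (y : UE k H E (s+1)) : NY R e s (piY s y) = piY s (RU S e (s+1) y) := by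
  have : NY R e s ∘ₗ piY s = piY s ∘ₗ RU S e (s+1) := by
    apply UE_ext_snoc
    intro x hs h
    rw [LinearMap.comp_apply, LinearMap.comp_apply, piY_snoc, NY, LinearMap.comp_apply, LinearMap.comp_apply,
      R.sig0_eq, rX_xgen, mu_OU, ← RU_OU, OU_hE]
  exact LinearMap.congr_fun this y

theorem mu_rX (e : E) (s : ℕ) (x) : R.mu s (rX e x) = NY R e s (R.mu s x) := by
  have : R.mu s ∘ₗ rX e = NY R e s ∘ₗ R.mu s := by
    apply xgen_ext
    intro x hs as y
    rw [LinearMap.comp_apply, LinearMap.comp_apply, rX_xgen, mu_OU, mu_OU, NY_piY, RU_OU]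
  exact LinearMap.congr_fun this x

theorem del_NY (e : E) (s : ℕ) (y) : R.del s (NY R e (s+1) y) = NY R e s (R.del s y) := by
  obtain ⟨y, rfl⟩ := piY_surj _ y
  rw [NY_piY, del_bU, del_bU, bU_RU, map_neg, NY_piY]

theorem del_del (s : ℕ) (y) : R.del s (R.del (s+1) y) = 0 := by
  obtain ⟨y, rfl⟩ := piY_surj _ y
  have := LinearMap.congr_fun (bU_bU S (s+1)) y
  rw [LinearMap.comp_apply] at this
  rw [del_bU, map_neg, del_bU, this]; simp

theorem mu_sig0 (s : ℕ) (y) : R.mu s (R.sig0 s y) = y := by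
  have : R.mu s ∘ₗ R.sig0 s = LinearMap.id := by
    apply ygen_ext
    intro e hs h
    rw [LinearMap.comp_apply, R.sig0_eq, mu_OU, OU_hE, piY_snoc]; rfl
  exact LinearMap.congr_fun this y

theorem sY_piY (sY : ∀ s : ℕ, Yc k H E s →ₗ[k] Yc k H E (s + 1))
    (hsY : ∀ (s : ℕ) (e : E) (hs : Fin s → H) (h : H),
      sY s (ygen e hs h) = ((-1 : ℤ) ^ s) • ygen e (Fin.snoc hs h) 1) (s : ℕ) (y : UE k H E (s+1)) :
    sY s (piY s y) = ((-1 : ℤ) ^ s) • piY (s+1) (OU S 1 (s+1) y) := by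
  have : sY s ∘ₗ piY s = ((-1 : ℤ) ^ s) • (piY (s+1) ∘ₗ OU S 1 (s+1)) := by
    apply UE_ext_snoc
    intro x hs h
    rw [LinearMap.smul_apply, LinearMap.comp_apply, LinearMap.comp_apply, piY_snoc, hsY, ← hE_one S, OU_hE, piY_snoc]
  exact LinearMap.congr_fun this y

theorem del_sY (R : ResData k A H E S) (sY : ∀ s : ℕ, Yc k H E s →ₗ[k] Yc k H E (s + 1))
    (hsY : ∀ (s : ℕ) (e : E) (hs : Fin s → H) (h : H),
      sY s (ygen e hs h) = ((-1 : ℤ) ^ s) • ygen e (Fin.snoc hs h) 1) (s : ℕ) (y) : R.del (s+1) (sY (s+1) y) + sY s (R.del s y) = y := by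
  obtain ⟨y, rfl⟩ := piY_surj _ y
  rw [sY_piY (S := S) sY hsY, map_zsmul, del_bU, bU_OS, del_bU, map_neg, sY_piY (S := S) sY hsY, map_add, map_zsmul]
  rw [pow_succ, mul_neg_one, pow_succ (-1:ℤ) (s+1), pow_succ, smul_neg, smul_add, smul_smul]
  have : -(-1:ℤ)^s * ((-1)^s * -1 * -1) = -1 := by
    have : ((-1:ℤ)^s) * (-1)^s = 1 := by rw [← mul_pow]; simp
    linear_combination (-1) * this
  rw [this, neg_smul, neg_smul, one_smul]; abel

theorem del_sY0 (R : ResData k A H E S) (sY : ∀ s : ℕ, Yc k H E s →ₗ[k] Yc k H E (s + 1))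
    (hsY : ∀ (s : ℕ) (e : E) (hs : Fin s → H) (h : H),
      sY s (ygen e hs h) = ((-1 : ℤ) ^ s) • ygen e (Fin.snoc hs h) 1) (y) : R.del 0 (sY 0 (piY 0 y)) = piY 0 y - piY 0 (OU S 1 0 (bU S 0 y)) := by
  rw [sY_piY (S := S) sY hsY, map_zsmul, del_bU, bU_OS, map_add, map_zsmul]
  simp; abel

/-- augmentation on `Y₀`. -/
def invq : Tpow k (Qbar k H) 0 ⊗[k] H →ₗ[k] Tpow k H 1 :=
  TensorProduct.lift ((tcons (k := k) (V := H) 0).flip)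

variable (S) in
def epsY : Yc k H E 0 →ₗ[k] UE k H E 0 := bU S 0 ∘ₗ TensorProduct.map LinearMap.id invq

theorem epsY_piY (y) : epsY S (piY 0 y) = bU S 0 y := by
  have : epsY S ∘ₗ piY 0 = bU S 0 := by
    apply UE_ext
    intro e hs
    rw [LinearMap.comp_apply, piY_tp]
    rfl
  exact LinearMap.congr_fun this y

theorem epsY_del (y) : epsY S (R.del 0 y) = 0 := by
  obtain ⟨y, rfl⟩ := piY_surj _ y
  have := LinearMap.congr_fun (bU_bU S 0) y
  rw [LinearMap.comp_apply] at this
  rw [del_bU, map_neg, epsY_piY, this]; simp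

/-- `e ⊗ e' ↦ ee' ⊗ 1` -/
def rhoX : Xc k A H E 0 0 →ₗ[k] Xc k A H E 0 0 :=
  R.sig0 0 ∘ₗ piY 0 ∘ₗ OU S 1 0 ∘ₗ epsY S ∘ₗ R.mu 0

theorem rhoX_xgen (e : E) (hs : Fin 0 → H) (as : Fin 0 → A) (x : E) :
    rhoX R (xgen e hs as x) = xgen (e * x) hs as 1 := by
  have h1 : bU S 0 (OU S x 0 (e ⊗ₜ tp k hs)) = (e * x) ⊗ₜ tp k hs := by
    rw [OU, extU_tmul, bU_LU, LinearMap.comp_apply, bU_J0]; rfl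
  have has : as = (fun i : Fin 0 => i.elim0) := by funext i; exact i.elim0
  rw [rhoX, LinearMap.comp_apply, LinearMap.comp_apply, LinearMap.comp_apply, LinearMap.comp_apply,
    mu_OU, epsY_piY, h1, ← hE_one S, OU_hE, piY_snoc, R.sig0_eq, has]

theorem sig0_del_sY0 (sY : ∀ s : ℕ, Yc k H E s →ₗ[k] Yc k H E (s + 1))
    (hsY : ∀ (s : ℕ) (e : E) (hs : Fin s → H) (h : H),
      sY s (ygen e hs h) = ((-1 : ℤ) ^ s) • ygen e (Fin.snoc hs h) 1) (x) : R.sig0 0 (R.del 0 (sY 0 (R.mu 0 x))) = R.sig0 0 (R.mu 0 x) - rhoX R x := by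
  obtain ⟨y, hy⟩ := piY_surj _ (R.mu 0 x)
  rw [rhoX, LinearMap.comp_apply, LinearMap.comp_apply, LinearMap.comp_apply, LinearMap.comp_apply,
    ← hy, del_sY0 R sY hsY, epsY_piY, map_sub]

theorem rhoX_zero (x) (y) (h : R.mu 0 x = R.del 0 y) : rhoX R x = 0 := by
  rw [rhoX, LinearMap.comp_apply, LinearMap.comp_apply, LinearMap.comp_apply, LinearMap.comp_apply, h, epsY_del]
  simp

/-! ### zero direction -/

theorem tp_zero {V : Type} [AddCommGroup V] [Module k V] : ∀ {n : ℕ} (v : Fin n → V) (i : Fin n), v i = 0 → tp k v = 0 := by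
  intro n
  induction n with
  | zero => intro v i; exact i.elim0
  | succ n ih =>
    intro v i
    refine Fin.cases ?_ (fun j => ?_) i
    · intro h; rw [tp_succ, h]; simp
    · intro h; rw [tp_succ, ih (fun i => v i.succ) j h]; simp

theorem qbar_one (B : Type) [Ring B] [Algebra k B] : qbar k B 1 = 0 := by
  rw [Submodule.mkQ_apply, Submodule.Quotient.mk_eq_zero]
  exact ⟨1, by simp⟩

theorem tp_qbar_one (B : Type) [Ring B] [Algebra k B] {n : ℕ} (v : Fin n → B) :
    tp k (fun i => qbar k B ((Fin.snoc v 1 : Fin (n+1) → B) i)) = 0 := by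
  refine tp_zero _ (Fin.last n) ?_
  rw [Fin.snoc_last, qbar_one]

theorem sY_one (sY : ∀ s : ℕ, Yc k H E s →ₗ[k] Yc k H E (s + 1))
    (hsY : ∀ (s : ℕ) (e : E) (hs : Fin s → H) (h : H),
      sY s (ygen e hs h) = ((-1 : ℤ) ^ s) • ygen e (Fin.snoc hs h) 1) (s : ℕ) (e : E) (hs : Fin s → H) : sY s (ygen e hs 1) = 0 := by
  rw [hsY, ygen, tp_qbar_one]; simp

theorem iota_one' : S.ι (1 ⊗ₜ[k] 1) = 1 := S.ι_one

theorem sig_one (r s : ℕ) (e : E) (hs : Fin s → H) (as : Fin r → A) : R.sig r s (xgen e hs as 1) = 0 := by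
  rw [← S.ι_one, R.sig_eq, xgen, tp_qbar_one]; simp

theorem mu_one (s : ℕ) (e : E) (hs : Fin s → H) (as : Fin 0 → A) : R.mu s (xgen e hs as 1) = ygen e hs 1 := by
  rw [mu_OU, ← hE_one S, OU_hE, piY_snoc]

theorem xgen_sig (r s : ℕ) (e : E) (hs : Fin s → H) (as : Fin (r+1) → A) :
    xgen e hs as 1 = R.sig r s (((-1:ℤ)^(r+1)) • xgen e hs (fun i => as i.castSucc) (S.ι (as (Fin.last r) ⊗ₜ 1))) := by
  rw [map_zsmul, R.sig_eq, smul_smul, ← mul_pow]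
  rw [hE_one S]
  have : (Fin.snoc (fun i : Fin r => as i.castSucc) (as (Fin.last r)) : Fin (r+1) → A) = as :=
    Fin.snoc_init_self as
  rw [this]; simp

def d0 (r s : ℕ) : Xc k A H E (r+1) s →ₗ[k] Xc k A H E r s := R.dl 0 (r+1) s

theorem mulAt_snoc_castSucc {r : ℕ} (as : Fin (r+1) → A) (b : A) (i : Fin r) :
    mulAt (Fin.snoc as b : Fin (r+2) → A) i.castSucc = Fin.snoc (mulAt as i) b := by
  funext j
  refine Fin.lastCases ?_ (fun j => ?_) j
  · have h1 : ¬ ((Fin.last r : Fin (r+1)) : ℕ) < (i.castSucc : Fin (r+1)) := by simp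
    have h2 : ¬ ((Fin.last r : Fin (r+1)) : ℕ) = (i.castSucc : Fin (r+1)) := by simp; omega
    rw [mulAt, if_neg h1, if_neg h2, Fin.succ_last, Fin.snoc_last, Fin.snoc_last]
  · rw [Fin.snoc_castSucc]
    simp only [mulAt, Fin.snoc_castSucc, Fin.succ_castSucc, Fin.val_castSucc]

theorem mulAt_snoc_last {r : ℕ} (as : Fin (r+1) → A) (b : A) :
    mulAt (Fin.snoc as b : Fin (r+2) → A) (Fin.last r) = Fin.snoc (fun i : Fin r => as i.castSucc) (as (Fin.last r) * b) := by
  funext j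
  refine Fin.lastCases ?_ (fun j => ?_) j
  · simp [mulAt]
  · have h1 : ((j.castSucc : Fin (r+1)) : ℕ) < (Fin.last r : Fin (r+1)) := by simp
    rw [mulAt, if_pos h1, Fin.snoc_castSucc, Fin.snoc_castSucc]

theorem sgn1 {M ι : Type} [AddCommGroup M] [Fintype ι] (r : ℕ) (A : ι → M) (B : Fin r → M) (C X : M) :
    ((-1 : ℤ)^(r+1+1)) • (∑ c, A c + (∑ x : Fin r, ((-1 : ℤ)^((x : ℕ)+1)) • B x + ((-1 : ℤ)^(r+1)) • C) + ((-1 : ℤ)^(r+1+1)) • X)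
     + (∑ c, ((-1 : ℤ)^(r+1)) • A c + (∑ x : Fin r, ((-1 : ℤ)^((x : ℕ)+1)) • ((-1 : ℤ)^(r+1)) • B x) + ((-1 : ℤ)^(r+1)) • ((-1 : ℤ)^(r+1)) • C) = X := by
  have h : ∀ x : Fin r, ((-1 : ℤ)^((x : ℕ)+1)) • ((-1 : ℤ)^(r+1)) • B x = ((-1 : ℤ)^(r+1)) • ((-1 : ℤ)^((x : ℕ)+1)) • B x :=
    fun x => smul_comm _ _ _
  simp only [h, ← Finset.smul_sum]
  generalize (∑ c, A c) = a
  generalize (∑ x : Fin r, ((-1 : ℤ)^((x : ℕ)+1)) • B x) = b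
  rw [pow_succ (-1 : ℤ) (r+1)]
  rcases neg_one_pow_eq_or ℤ (r+1) with e | e <;> rw [e] <;> simp <;> abel

theorem d0_sig (r s : ℕ) (x) : d0 R (r+1) s (R.sig (r+1) s x) + R.sig r s (d0 R r s x) = x := by
  have : d0 R (r+1) s ∘ₗ R.sig (r+1) s + R.sig r s ∘ₗ d0 R r s = LinearMap.id := by
    apply xgen_ext_iota S
    intro a h hs as b h'
    haveI : Inhabited H := ⟨0⟩
    obtain ⟨g, hg⟩ := exists_seq (Fin.cons h hs : Fin (s+1) → H)
    obtain ⟨N, v, hv⟩ := exists_SRep_unif (k := k) (s+1) g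
    have hv' : ∀ i : Fin (s+1), SRep k 1 ((Fin.cons h hs : Fin (s+1) → H) i) N (v i) := fun i => by
      rw [hg]; exact hv i i.isLt
    have e1 := R.d0_eq r s a h hs as b h' (fun _ => N) (fun i => v i) hv'
    have e2 := R.d0_eq (r+1) s a h hs (Fin.snoc as b) 1 h' (fun _ => N) (fun i => v i) hv'
    have e1' : d0 R r s _ = _ := e1
    have e2' : d0 R (r+1) s _ = _ := e2
    rw [LinearMap.add_apply, LinearMap.comp_apply, LinearMap.comp_apply, e1', R.sig_eq, map_zsmul, hE_def, e2']
    simp only [map_add, map_sum, map_zsmul, R.sig_eq, snoc_shift, snoc_zero, Fin.snoc_castSucc, Fin.snoc_last,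
      Fin.sum_univ_castSucc (n := r), mulAt_snoc_castSucc, mulAt_snoc_last, mul_one, Fin.val_castSucc, Fin.val_last, ← hE_def,
      LinearMap.id_apply]
    exact sgn1 r _ _ _ _
  exact LinearMap.congr_fun this x

theorem d0_sig0 (s : ℕ) (x) : d0 R 0 s (R.sig 0 s x) + R.sig0 s (R.mu s x) = x := by
  have : d0 R 0 s ∘ₗ R.sig 0 s + R.sig0 s ∘ₗ R.mu s = LinearMap.id := by
    apply xgen_ext_iota S
    intro a h hs as b h'
    haveI : Inhabited H := ⟨0⟩
    have has : as = (fun i : Fin 0 => i.elim0) := by funext i; exact i.elim0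
    obtain ⟨g, hg⟩ := exists_seq (Fin.cons h hs : Fin (s+1) → H)
    obtain ⟨N, v, hv⟩ := exists_SRep_unif (k := k) (s+1) g
    have hv' : ∀ i : Fin (s+1), SRep k 1 ((Fin.cons h hs : Fin (s+1) → H) i) N (v i) := fun i => by
      rw [hg]; exact hv i i.isLt
    have e1 := R.mu_eq s a h hs b h' (fun _ => N) (fun i => v i) hv'
    have e2 : d0 R 0 s _ = _ := R.d0_eq 0 s a h hs (Fin.snoc as b) 1 h' (fun _ => N) (fun i => v i) hv'
    subst has
    rw [LinearMap.add_apply, LinearMap.comp_apply, LinearMap.comp_apply, e1, R.sig_eq, map_zsmul, hE_def, e2]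
    simp only [map_sum, R.sig0_eq]
    rw [Fin.sum_univ_zero, mul_one]
    have f0 : ∀ f : Fin 0 → A, f = (fun i : Fin 0 => i.elim0) := fun f => funext fun i => i.elim0
    have l0 : (Fin.snoc (fun i : Fin 0 => i.elim0) b : Fin 1 → A) (Fin.last 0) = b := Fin.snoc_last (α := fun _ => A) _ _
    have l1 : (Fin.snoc (fun i : Fin 0 => i.elim0) b : Fin 1 → A) 0 = b := Fin.snoc_last (α := fun _ => A) _ _
    simp only [f0, l0, l1, ← hE_def, LinearMap.id_apply, pow_one, zero_add, neg_smul, one_smul]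
    abel
  exact LinearMap.congr_fun this x

end Part4

section Part5

variable {k M : Type} [CommRing k] [AddCommGroup M] [Module k M]

theorem pertA {I : Type} (D : ℕ → Module.End k M) (Sg : Module.End k M)
    (h0 : D 0 * Sg + Sg * D 0 = 1) (T : I → Module.End k M)
    (hT : ∀ i l, T i * D l = D l * T i) (F : ℕ → Submodule k M) (G : ℕ → Set M)
    (hF0 : ∀ x ∈ F 0, ∀ i j, D i (D j x) = 0)
    (hFG : ∀ r, F (r+1) ≤ F r ⊔ Submodule.span k {y | ∃ i, ∃ g ∈ G r, y = T i g})
    (hF : ∀ x, ∃ r, x ∈ F r)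
    (hG0 : ∀ r, ∀ g ∈ G r, D 0 g ∈ F r)
    (hGS : ∀ r, ∀ g ∈ G r, ∃ z ∈ F r, g = Sg z)
    (hGD : ∀ r, ∀ g ∈ G r, ∀ l, 1 ≤ l → D l g = - Sg (∑ j ∈ Finset.range l, D (l-j) (D j g))) :
    (PowerSeries.mk D) * (PowerSeries.mk D) = (0 : PowerSeries (Module.End k M)) := by
  set P : PowerSeries (Module.End k M) := PowerSeries.mk D with hP
  have hQ : ∀ l, PowerSeries.coeff l (P * P) = ∑ p ∈ Finset.HasAntidiagonal.antidiagonal l, D p.1 * D p.2 := by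
    intro l; rw [PowerSeries.coeff_mul]; simp [hP]
  have hTQ : ∀ i l, T i * PowerSeries.coeff l (P * P) = PowerSeries.coeff l (P * P) * T i := by
    intro i l
    rw [hQ, Finset.mul_sum, Finset.sum_mul]
    refine Finset.sum_congr rfl fun p _ => ?_
    rw [← mul_assoc, hT, mul_assoc, hT, mul_assoc]
  -- enough to show vanishing on F r
  have key : ∀ l r, (∀ m < l, PowerSeries.coeff m (P * P) = 0) →
      (∀ r, (∀ x ∈ F r, PowerSeries.coeff l (P * P) x = 0) → ∀ g ∈ G r, PowerSeries.coeff l (P * P) g = 0) →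
      ∀ x ∈ F r, PowerSeries.coeff l (P * P) x = 0 := by
    intro l r hl hg
    induction r with
    | zero =>
      intro x hx
      rw [hQ, LinearMap.sum_apply]
      exact Finset.sum_eq_zero fun p _ => hF0 x hx _ _
    | succ r ih =>
      have : F (r+1) ≤ LinearMap.ker (PowerSeries.coeff l (P * P)) := by
        refine (hFG r).trans (sup_le (fun x hx => ih x hx) (Submodule.span_le.2 ?_))
        rintro y ⟨i, g, hgg, rfl⟩
        change PowerSeries.coeff l (P * P) (T i g) = 0
        rw [← Module.End.mul_apply, ← hTQ, Module.End.mul_apply, hg r ih g hgg, map_zero]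
      exact fun x hx => this hx
  have main : ∀ l, PowerSeries.coeff l (P * P) = 0 := by
    intro l
    induction l using Nat.strong_induction_on with
    | _ l IH =>
    ext x
    obtain ⟨r, hr⟩ := hF x
    refine key l r IH ?_ x hr
    clear hr r x
    intro r ihr g hg
    have hDS : ∀ y, D 0 (Sg y) = y - Sg (D 0 y) := fun y => by
      have := LinearMap.congr_fun h0 y
      rw [eq_sub_iff_add_eq]; exact this
    rcases Nat.eq_zero_or_pos l with rfl | hl
    · obtain ⟨z, hz, rfl⟩ := hGS r g hg
      have := ihr z hz
      rw [hQ] at this ⊢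
      simp only [Finset.HasAntidiagonal.antidiagonal_zero, Finset.sum_singleton, Module.End.mul_apply] at this ⊢
      rw [hDS, map_sub, hDS, this]; simp
    · have hc : PowerSeries.coeff l (P * (P * P)) g = PowerSeries.coeff l ((P * P) * P) g := by rw [mul_assoc]
      rw [PowerSeries.coeff_mul, PowerSeries.coeff_mul (n := l) (φ := P * P), LinearMap.sum_apply, LinearMap.sum_apply,
        Finset.sum_eq_single (0, l), Finset.sum_eq_single (l, 0)] at hc
      · simp only [Module.End.mul_apply, hP, PowerSeries.coeff_mk] at hc
        rw [← hP, ihr _ (hG0 r g hg)] at hc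
        have hU : PowerSeries.coeff l (P * P) g = D 0 (D l g) + ∑ j ∈ Finset.range l, D (l-j) (D j g) := by
          rw [hQ, LinearMap.sum_apply, ← Finset.Nat.sum_antidiagonal_swap]
          simp only [Prod.fst_swap, Prod.snd_swap]
          rw [Finset.Nat.sum_antidiagonal_eq_sum_range_succ (fun i j => (D j * D i) g), Finset.sum_range_succ, add_comm]
          simp
        have hd : D 0 (D 0 (D l g)) = 0 := by
          have := LinearMap.congr_fun (IH 0 hl) (D l g)
          rw [hQ] at this
          simpa using this
        rw [hU, map_add, hd, zero_add] at hc
        rw [hU, hGD r g hg l hl, map_neg, hDS, hc]; simp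
      · rintro ⟨a, b⟩ hab hne
        rw [Finset.HasAntidiagonal.mem_antidiagonal] at hab
        simp only at hab
        have : a < l := by
          rcases Nat.lt_or_ge a l with h | h
          · exact h
          · exact absurd (Prod.ext (by simp; omega) (by simp; omega)) hne
        simp only [Module.End.mul_apply, IH a this, LinearMap.zero_apply]
      · simp
      · rintro ⟨a, b⟩ hab hne
        rw [Finset.HasAntidiagonal.mem_antidiagonal] at hab
        simp only at hab
        have : b < l := by
          rcases Nat.lt_or_ge b l with h | h
          · exact h
          · exact absurd (Prod.ext (by simp; omega) (by simp; omega)) hne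
        simp only [Module.End.mul_apply, IH b this, LinearMap.zero_apply, map_zero]
      · simp
  ext1 l; rw [main]; simp

theorem pertB {Z : Type} [Ring Z] (D : ℕ → Z) (St : ℕ → Z)
    (h0 : D 0 * St 0 + St 0 * D 0 = 1)
    (hDD : (PowerSeries.mk D) * (PowerSeries.mk D) = 0)
    (hS : ∀ l, 1 ≤ l → St l = - ∑ i ∈ Finset.range l, St 0 * D (l-i) * St i) :
    (PowerSeries.mk D) * (PowerSeries.mk St) + (PowerSeries.mk St) * (PowerSeries.mk D) = 1 := by
  set P : PowerSeries Z := PowerSeries.mk D with hP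
  set Q : PowerSeries Z := PowerSeries.mk St with hQ
  set c := PowerSeries.C (R := Z) with hc
  have h0' : c (D 0) * c (St 0) + c (St 0) * c (D 0) = 1 := by
    rw [← map_mul, ← map_mul, ← map_add, h0, map_one]
  set K := c (D 0) * c (St 0) + c (St 0) * P with hK
  have hK0 : PowerSeries.coeff 0 K = 1 := by
    rw [← h0]; simp [hK, hP, hc, PowerSeries.coeff_C]
  have hd00 : D 0 * D 0 = 0 := by
    have := congrArg (PowerSeries.coeff 0) hDD
    simpa [hP] using this
  have hd00' : c (D 0) * c (D 0) = 0 := by rw [← map_mul, hd00, map_zero]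
  have hcan : ∀ U, K * U = 0 → U = 0 := by
    intro U hU
    have : ∀ n, PowerSeries.coeff n U = 0 := by
      intro n
      induction n using Nat.strong_induction_on with
      | _ n ih =>
      have h := congrArg (PowerSeries.coeff n) hU
      rw [PowerSeries.coeff_mul, Finset.sum_eq_single (0, n)] at h
      · simpa [hK0] using h
      · rintro ⟨a, b⟩ hab hne
        rw [Finset.HasAntidiagonal.mem_antidiagonal] at hab
        simp only at hab
        have : b < n := by
          rcases Nat.lt_or_ge b n with h | h
          · exact h
          · exact absurd (Prod.ext (by simp; omega) (by simp; omega)) hne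
        simp only [ih b this, mul_zero]
      · simp
    ext1 n; rw [this]; simp
  have hKQ : K * Q = c (St 0) := by
    ext1 n
    rcases Nat.eq_zero_or_pos n with rfl | hn
    · rw [PowerSeries.coeff_mul]
      simp only [Finset.HasAntidiagonal.antidiagonal_zero, Finset.sum_singleton, hK0, one_mul]
      simp [hQ, hc]
    · rw [PowerSeries.coeff_mul, ← Finset.Nat.sum_antidiagonal_swap]
      simp only [Prod.fst_swap, Prod.snd_swap]
      rw [Finset.Nat.sum_antidiagonal_eq_sum_range_succ (fun i j => PowerSeries.coeff j K * PowerSeries.coeff i Q),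
        Finset.sum_range_succ, Nat.sub_self, hK0, one_mul]
      have e1 : PowerSeries.coeff n Q = St n := by simp [hQ]
      rw [e1, hS n hn, hc, PowerSeries.coeff_C, if_neg (by omega), add_neg_eq_zero]
      refine Finset.sum_congr rfl fun i hi => ?_
      rw [Finset.mem_range] at hi
      have e2 : PowerSeries.coeff (n-i) K = St 0 * D (n-i) := by
        rw [hK, ← map_mul, map_add, hc, PowerSeries.coeff_C, if_neg (by omega), PowerSeries.coeff_C_mul, zero_add, hP, PowerSeries.coeff_mk]
      rw [e2]; simp [hQ]
  have hKD : K * P = c (D 0) * K := by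
    have hDD' : P * P = 0 := hDD
    rw [hK, add_mul, mul_add, ← mul_assoc (c (D 0)) (c (D 0)), hd00', zero_mul, zero_add, mul_assoc (c (St 0)), hDD', mul_zero, add_zero, mul_assoc]
  have : K * (P * Q + Q * P - 1) = 0 := by
    rw [mul_sub, mul_add, ← mul_assoc, hKD, mul_assoc, hKQ, ← mul_assoc, hKQ, mul_one, hK, sub_self]
  exact sub_eq_zero.1 (hcan _ this)

theorem totC (P Q : ℕ → Module.End k M) (Fs : ℕ → Submodule k M) (hF0 : ∀ x ∈ Fs 0, x = 0)
    (hP : ∀ l n x, x ∈ Fs n → P l x ∈ Fs (n - l)) (hQ : ∀ l n x, x ∈ Fs n → Q l x ∈ Fs (n - l))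
    (n : ℕ) (v : M) (hv : v ∈ Fs n) :
    ∑ i ∈ Finset.range n, P i (∑ j ∈ Finset.range n, Q j v) =
      ∑ m ∈ Finset.range n, PowerSeries.coeff m (PowerSeries.mk P * PowerSeries.mk Q) v := by
  have hz : ∀ i j, n ≤ i + j → P i (Q j v) = 0 := fun i j h => by
    have := hP i _ _ (hQ j _ _ hv)
    rw [show n - j - i = 0 by omega] at this
    exact hF0 _ this
  simp only [PowerSeries.coeff_mul, PowerSeries.coeff_mk, LinearMap.sum_apply, Module.End.mul_apply, map_sum]
  rw [← Finset.sum_product', Finset.sum_sigma']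
  symm
  refine Finset.sum_bij_ne_zero (fun x _ _ => x.2) ?_ ?_ ?_ ?_
  · rintro ⟨m, a, b⟩ h _
    simp only [Finset.mem_sigma, Finset.mem_range, Finset.HasAntidiagonal.mem_antidiagonal, Finset.mem_product] at h ⊢
    omega
  · rintro ⟨m, a, b⟩ h _ ⟨m', a', b'⟩ h' _ e
    simp only [Finset.mem_sigma, Finset.mem_range, Finset.HasAntidiagonal.mem_antidiagonal] at h h'
    simp only [Prod.mk.injEq] at e
    obtain ⟨rfl, rfl⟩ := e
    obtain ⟨_, rfl⟩ := h
    obtain ⟨_, rfl⟩ := h'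
    rfl
  · rintro ⟨a, b⟩ h hne
    refine ⟨⟨a+b, a, b⟩, ?_, hne, rfl⟩
    simp only [Finset.mem_sigma, Finset.mem_range, Finset.HasAntidiagonal.mem_antidiagonal, and_true]
    by_contra hh
    exact hne (hz a b (by omega))
  · intros; rfl

end Part5

section Part6

variable (k A H E : Type) [CommRing k] [Ring A] [Algebra k A] [Ring H] [HopfAlgebra k H]
  [Ring E] [Algebra k E]

def MM : Type := (⨁ p : ℕ × ℕ, Xc k A H E p.1 p.2) × (⨁ s : ℕ, Yc k H E s)

instance MM_grp : AddCommGroup (MM k A H E) :=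
  inferInstanceAs (AddCommGroup ((⨁ p : ℕ × ℕ, Xc k A H E p.1 p.2) × (⨁ s : ℕ, Yc k H E s)))

instance MM_mod : Module k (MM k A H E) :=
  inferInstanceAs (Module k ((⨁ p : ℕ × ℕ, Xc k A H E p.1 p.2) × (⨁ s : ℕ, Yc k H E s)))

def jW (r s : ℕ) : Xc k A H E r s →ₗ[k] MM k A H E :=
  (LinearMap.inl k (⨁ p : ℕ × ℕ, Xc k A H E p.1 p.2) (⨁ s : ℕ, Yc k H E s)) ∘ₗ
    (DirectSum.lof k (ℕ × ℕ) (fun p => Xc k A H E p.1 p.2) (r, s))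

def jV (s : ℕ) : Yc k H E s →ₗ[k] MM k A H E :=
  (LinearMap.inr k (⨁ p : ℕ × ℕ, Xc k A H E p.1 p.2) (⨁ s : ℕ, Yc k H E s)) ∘ₗ
    (DirectSum.lof k ℕ (fun p => Yc k H E p) s)

variable {k A H E}

def mlift {N : Type} [AddCommGroup N] [Module k N] (f : ∀ r s, Xc k A H E r s →ₗ[k] N)
    (g : ∀ s, Yc k H E s →ₗ[k] N) : MM k A H E →ₗ[k] N :=
  LinearMap.coprod (DirectSum.toModule k (ℕ × ℕ) N (fun p => f p.1 p.2)) (DirectSum.toModule k ℕ N g)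

theorem mlift_jW {N : Type} [AddCommGroup N] [Module k N] (f : ∀ r s, Xc k A H E r s →ₗ[k] N)
    (g : ∀ s, Yc k H E s →ₗ[k] N) (r s x) : mlift f g (jW k A H E r s x) = f r s x := by
  have h : mlift f g (jW k A H E r s x) =
    (DirectSum.toModule k (ℕ × ℕ) N (fun p => f p.1 p.2)) (DirectSum.lof k (ℕ × ℕ) (fun p => Xc k A H E p.1 p.2) (r, s) x)
    + (DirectSum.toModule k ℕ N g) 0 := rfl
  rw [h, LinearMap.map_zero, add_zero]
  exact DirectSum.toModule_lof k (φ := fun p : ℕ × ℕ => f p.1 p.2) (r, s) x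

theorem mlift_jV {N : Type} [AddCommGroup N] [Module k N] (f : ∀ r s, Xc k A H E r s →ₗ[k] N)
    (g : ∀ s, Yc k H E s →ₗ[k] N) (s x) : mlift f g (jV k A H E s x) = g s x := by
  have h : mlift f g (jV k A H E s x) =
    (DirectSum.toModule k (ℕ × ℕ) N (fun p => f p.1 p.2)) 0
    + (DirectSum.toModule k ℕ N g) (DirectSum.lof k ℕ (fun p => Yc k H E p) s x) := rfl
  rw [h, LinearMap.map_zero, zero_add]
  exact DirectSum.toModule_lof k (φ := g) s x

theorem MM_ext {N : Type} [AddCommGroup N] [Module k N] {f g : MM k A H E →ₗ[k] N}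
    (h1 : ∀ r s x, f (jW k A H E r s x) = g (jW k A H E r s x))
    (h2 : ∀ s x, f (jV k A H E s x) = g (jV k A H E s x)) : f = g := by
  refine LinearMap.prod_ext (M := ⨁ p : ℕ × ℕ, Xc k A H E p.1 p.2) (M₂ := ⨁ s : ℕ, Yc k H E s) (M₃ := N) ?_ ?_
  · apply DirectSum.linearMap_ext
    rintro ⟨r, s⟩
    exact LinearMap.ext fun x => h1 r s x
  · apply DirectSum.linearMap_ext
    intro s
    exact LinearMap.ext fun x => h2 s x

theorem MM_ind (p : Submodule k (MM k A H E)) (h1 : ∀ r s x, jW k A H E r s x ∈ p)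
    (h2 : ∀ s x, jV k A H E s x ∈ p) (x) : x ∈ p := by
  have : p.mkQ = 0 := MM_ext (fun r s x => (Submodule.Quotient.mk_eq_zero p).2 (h1 r s x))
    (fun s x => (Submodule.Quotient.mk_eq_zero p).2 (h2 s x))
  have h := LinearMap.congr_fun this x
  exact (Submodule.Quotient.mk_eq_zero p).1 h

theorem jW_xcast {r r' s s' : ℕ} (hr : r = r') (hs : s = s') (x) :
    jW k A H E r' s' (xcast hr hs x) = jW k A H E r s x := by
  subst hr; subst hs; rfl

variable {S : CrossedProduct k A H E} (R : ResData k A H E S)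

theorem mu_lX (e : E) (s : ℕ) (x) : R.mu s (lX e x) = lY e (R.mu s x) := by
  have : R.mu s ∘ₗ lX e = lY e ∘ₗ R.mu s := by
    apply xgen_ext
    intro x hs as y
    rw [LinearMap.comp_apply, LinearMap.comp_apply, lX_xgen, mu_OU, mu_OU, ← piY_LU, ← OU_LU]; rfl
  exact LinearMap.congr_fun this x

theorem del_lY (e : E) (s : ℕ) (y) : R.del s (lY e y) = lY e (R.del s y) := by
  obtain ⟨y, rfl⟩ := piY_surj _ y
  rw [← piY_LU, del_bU, del_bU, bU_LU, LinearMap.map_neg, piY_LU]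

def Dx : ∀ (l r s : ℕ), Xc k A H E r s →ₗ[k] MM k A H E
  | 0, 0, s => jV k A H E s ∘ₗ R.mu s
  | 0, r+1, s => jW k A H E (r+1+0-1) (s-0) ∘ₗ R.dl 0 (r+1) s
  | l+1, r, s => if l+1 ≤ s then jW k A H E (r+(l+1)-1) (s-(l+1)) ∘ₗ R.dl (l+1) r s else 0

def Dy : ∀ (l s : ℕ), Yc k H E s →ₗ[k] MM k A H E
  | 1, s+1 => jV k A H E s ∘ₗ R.del s
  | _, _ => 0

def DD (l : ℕ) : Module.End k (MM k A H E) := mlift (Dx R l) (Dy R l)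

theorem DD_jW (l r s : ℕ) (h : l ≤ s) (h' : 0 < r + l) (x) :
    DD R l (jW k A H E r s x) = jW k A H E (r+l-1) (s-l) (R.dl l r s x) := by
  rw [DD, mlift_jW]
  match l, r, s, h, h' with
  | 0, r+1, s, _, _ => rfl
  | l+1, r, s, h, _ => rw [Dx, if_pos h]; rfl

theorem DD_jW_gt (l r s : ℕ) (h : s < l) (x) : DD R l (jW k A H E r s x) = 0 := by
  rw [DD, mlift_jW]
  match l, h with
  | l+1, h => rw [Dx, if_neg (by omega)]; rfl

theorem DD_jW_zero (s : ℕ) (x) : DD R 0 (jW k A H E 0 s x) = jV k A H E s (R.mu s x) := by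
  rw [DD, mlift_jW]; rfl

theorem DD_jV_one (s : ℕ) (x) : DD R 1 (jV k A H E (s+1) x) = jV k A H E s (R.del s x) := by
  rw [DD, mlift_jV]; rfl

theorem DD_jV_ne (l s : ℕ) (h : l ≠ 1) (x) : DD R l (jV k A H E s x) = 0 := by
  rw [DD, mlift_jV]
  match l, s, h with
  | 0, s, _ => rfl
  | l+2, s, _ => rfl

theorem DD_jV_zero (l : ℕ) (x) : DD R l (jV k A H E 0 x) = 0 := by
  rw [DD, mlift_jV]
  match l with
  | 0 => rfl
  | 1 => rfl
  | l+2 => rfl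

theorem DD_jV_gt (l s : ℕ) (h : s < l) (x) : DD R l (jV k A H E s x) = 0 := by
  rcases eq_or_ne l 1 with rfl | h1
  · obtain rfl : s = 0 := by omega
    exact DD_jV_zero R _ x
  · exact DD_jV_ne R l s h1 x

def Sg : Module.End k (MM k A H E) :=
  mlift (fun r s => jW k A H E (r+1) s ∘ₗ R.sig r s) (fun s => jW k A H E 0 s ∘ₗ R.sig0 s)

theorem Sg_jW (r s x) : Sg R (jW k A H E r s x) = jW k A H E (r+1) s (R.sig r s x) := by
  rw [Sg, mlift_jW]; rfl
theorem Sg_jV (s x) : Sg R (jV k A H E s x) = jW k A H E 0 s (R.sig0 s x) := by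
  rw [Sg, mlift_jV]; rfl

def TT (p : E × E) : Module.End k (MM k A H E) :=
  mlift (fun r s => jW k A H E r s ∘ₗ lX p.1 ∘ₗ rX p.2) (fun s => jV k A H E s ∘ₗ lY p.1 ∘ₗ NY R p.2 s)

theorem TT_jW (p r s x) : TT R p (jW k A H E r s x) = jW k A H E r s (lX p.1 (rX p.2 x)) := by
  rw [TT, mlift_jW]; rfl
theorem TT_jV (p s x) : TT R p (jV k A H E s x) = jV k A H E s (lY p.1 (NY R p.2 s x)) := by
  rw [TT, mlift_jV]; rfl

theorem DD_Sg : DD R 0 * Sg R + Sg R * DD R 0 = 1 := by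
  apply MM_ext
  · intro r s x
    rw [LinearMap.add_apply, Module.End.mul_apply, Module.End.mul_apply, Module.End.one_apply, Sg_jW,
      DD_jW R 0 (r+1) s (Nat.zero_le _) (by omega)]
    cases r with
    | zero =>
      rw [DD_jW_zero, Sg_jV]
      have := congrArg (jW k A H E 0 s) (d0_sig0 R s x)
      rw [LinearMap.map_add] at this
      exact this
    | succ r =>
      rw [DD_jW R 0 (r+1) s (Nat.zero_le _) (by omega)]
      have h1 : Sg R (jW k A H E (r+1+0-1) (s-0) (R.dl 0 (r+1) s x)) = jW k A H E (r+1) s (R.sig r s (d0 R r s x)) := Sg_jW R r s _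
      rw [h1]
      have := congrArg (jW k A H E (r+1) s) (d0_sig R r s x)
      rw [LinearMap.map_add] at this
      exact this
  · intro s x
    rw [LinearMap.add_apply, Module.End.mul_apply, Module.End.mul_apply, Module.End.one_apply, Sg_jV,
      DD_jW_zero, mu_sig0, DD_jV_ne R 0 s (by omega)]
    simp

theorem TT_DD (p l) : TT R p * DD R l = DD R l * TT R p := by
  apply MM_ext
  · intro r s x
    rw [Module.End.mul_apply, Module.End.mul_apply, TT_jW]
    rcases Nat.lt_or_ge s l with h | h
    · rw [DD_jW_gt R l r s h, DD_jW_gt R l r s h, LinearMap.map_zero]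
    · rcases Nat.eq_zero_or_pos (r + l) with h' | h'
      · obtain rfl : r = 0 := by omega
        obtain rfl : l = 0 := by omega
        rw [DD_jW_zero, DD_jW_zero, TT_jV, mu_lX, mu_rX]
      · rw [DD_jW R l r s h h', DD_jW R l r s h h', TT_jW]
        have e1 := LinearMap.congr_fun (R.dl_lmul l r s p.1) (rX p.2 x)
        have e2 := LinearMap.congr_fun (R.dl_rmul l r s p.2) x
        rw [LinearMap.comp_apply, LinearMap.comp_apply] at e1 e2
        rw [e1, e2]
  · intro s x
    rw [Module.End.mul_apply, Module.End.mul_apply, TT_jV]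
    rcases eq_or_ne l 1 with rfl | h
    · cases s with
      | zero => rw [DD_jV_zero, DD_jV_zero, LinearMap.map_zero]
      | succ s => rw [DD_jV_one, DD_jV_one, TT_jV, del_lY, del_NY]
    · rw [DD_jV_ne R l s h, DD_jV_ne R l s h, LinearMap.map_zero]

variable (k A H E) in
def FF (r : ℕ) : Submodule k (MM k A H E) :=
  Submodule.span k ({y | ∃ s x, y = jV k A H E s x} ∪ {y | ∃ r' s x, r' < r ∧ y = jW k A H E r' s x})

theorem FF_V (r s x) : jV k A H E s x ∈ FF k A H E r := Submodule.subset_span (Or.inl ⟨s, x, rfl⟩)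
theorem FF_W (r r' s x) (h : r' < r) : jW k A H E r' s x ∈ FF k A H E r :=
  Submodule.subset_span (Or.inr ⟨r', s, x, h, rfl⟩)

variable (k A H E) in
def GG (r : ℕ) : Set (MM k A H E) :=
  {y | ∃ (s : ℕ) (hs : Fin s → H) (as : Fin r → A), y = jW k A H E r s (xgen 1 hs as 1)}

theorem FF_GG (r : ℕ) : FF k A H E (r+1) ≤ FF k A H E r ⊔
    Submodule.span k {y | ∃ i, ∃ g ∈ GG k A H E r, y = TT R i g} := by
  set p := FF k A H E r ⊔ Submodule.span k {y | ∃ i, ∃ g ∈ GG k A H E r, y = TT R i g} with hp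
  refine Submodule.span_le.2 ?_
  rintro y (⟨s, x, rfl⟩ | ⟨r', s, x, h, rfl⟩)
  · exact (le_sup_left : _ ≤ p) (FF_V r s x)
  · rcases Nat.lt_or_ge r' r with h' | h'
    · exact (le_sup_left : _ ≤ p) (FF_W r r' s x h')
    · obtain rfl : r' = r := by omega
      have : p.mkQ ∘ₗ jW k A H E r' s = 0 := by
        apply xgen_ext
        intro e hs as e'
        refine (Submodule.Quotient.mk_eq_zero p).2 ?_
        refine (le_sup_right : _ ≤ p) (Submodule.subset_span ⟨(e, e'), _, ⟨s, hs, as, rfl⟩, ?_⟩)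
        rw [TT_jW, rX_xgen, lX_xgen, mul_one, one_mul]
      exact (Submodule.Quotient.mk_eq_zero p).1 (LinearMap.congr_fun this x)

theorem FF_all (x : MM k A H E) : ∃ r, x ∈ FF k A H E r := by
  have mono : ∀ a b, a ≤ b → FF k A H E a ≤ FF k A H E b := fun a b h =>
    Submodule.span_mono (Set.union_subset_union_right _ (fun y ⟨r', s, x, h', e⟩ => ⟨r', s, x, by omega, e⟩))
  have : x ∈ (⨆ r, FF k A H E r) := MM_ind _
    (fun r s x => (le_iSup (FF k A H E) (r+1)) (FF_W _ _ _ _ (Nat.lt_succ_self r)))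
    (fun s x => (le_iSup (FF k A H E) 0) (FF_V _ _ _)) x
  rwa [Submodule.mem_iSup_of_directed] at this
  exact fun a b => ⟨max a b, mono _ _ (le_max_left _ _), mono _ _ (le_max_right _ _)⟩

theorem FF_zero (x) (hx : x ∈ FF k A H E 0) (i j : ℕ) : DD R i (DD R j x) = 0 := by
  have : FF k A H E 0 ≤ LinearMap.ker (DD R i * DD R j) := by
    refine Submodule.span_le.2 ?_
    rintro y (⟨s, x, rfl⟩ | ⟨r', s, x, h, rfl⟩)
    · change DD R i (DD R j _) = 0
      rcases eq_or_ne j 1 with rfl | h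
      · cases s with
        | zero => rw [DD_jV_zero, LinearMap.map_zero]
        | succ s =>
          rw [DD_jV_one]
          rcases eq_or_ne i 1 with rfl | h
          · cases s with
            | zero => rw [DD_jV_zero]
            | succ s => rw [DD_jV_one, del_del, LinearMap.map_zero]
          · rw [DD_jV_ne R i s h]
      · rw [DD_jV_ne R j s h, LinearMap.map_zero]
    · omega
  exact this hx

theorem GG_D0 (r g) (hg : g ∈ GG k A H E r) : DD R 0 g ∈ FF k A H E r := by
  obtain ⟨s, hs, as, rfl⟩ := hg
  cases r with
  | zero => rw [DD_jW_zero]; exact FF_V _ _ _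
  | succ r => rw [DD_jW R 0 (r+1) s (Nat.zero_le _) (by omega)]; exact FF_W _ _ _ _ (by omega)

theorem GG_S (r g) (hg : g ∈ GG k A H E r) : ∃ z ∈ FF k A H E r, g = Sg R z := by
  obtain ⟨s, hs, as, rfl⟩ := hg
  cases r with
  | zero =>
    refine ⟨jV k A H E s (ygen 1 hs 1), FF_V _ _ _, ?_⟩
    rw [Sg_jV, R.sig0_eq, hE_one]
    congr 2
  | succ r =>
    exact ⟨_, FF_W _ r s (((-1:ℤ)^(r+1)) • xgen 1 hs (fun i => as i.castSucc) (S.ι (as (Fin.last r) ⊗ₜ 1))) (Nat.lt_succ_self r),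
      by rw [Sg_jW, ← xgen_sig R r s]⟩

theorem GG_gt (l r s : ℕ) (h : s < l) (x) (j : ℕ) (hj : j < l) : DD R (l-j) (DD R j (jW k A H E r s x)) = 0 := by
  rcases Nat.lt_or_ge s j with h1 | h1
  · rw [DD_jW_gt R j r s h1, LinearMap.map_zero]
  · rcases Nat.eq_zero_or_pos (r + j) with h' | h'
    · obtain rfl : r = 0 := by omega
      obtain rfl : j = 0 := by omega
      rw [DD_jW_zero, DD_jV_gt R _ _ (by omega)]
    · rw [DD_jW R j r s h1 h', DD_jW_gt R _ _ _ (by omega)]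

theorem GG_DD (r g) (hg : g ∈ GG k A H E r) (l : ℕ) (hl : 1 ≤ l) :
    DD R l g = - Sg R (∑ j ∈ Finset.range l, DD R (l-j) (DD R j g)) := by
  obtain ⟨s, hs, as, rfl⟩ := hg
  rcases Nat.lt_or_ge s l with h | h
  · rw [DD_jW_gt R l r s h, Finset.sum_eq_zero, LinearMap.map_zero, neg_zero]
    intro j hj
    exact GG_gt R l r s h _ j (Finset.mem_range.1 hj)
  · rw [DD_jW R l r s h (by omega)]
    cases r with
    | zero =>
      have has : as = (fun i : Fin 0 => i.elim0) := by funext i; exact i.elim0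
      subst has
      rcases Nat.lt_or_ge l 2 with h2 | h2
      · obtain rfl : l = 1 := by omega
        obtain ⟨s, rfl⟩ : ∃ t, s = t + 1 := ⟨s - 1, by omega⟩
        rw [Finset.sum_range_one, Nat.sub_zero, DD_jW_zero, DD_jV_one, Sg_jV, R.dl_one_zero, LinearMap.map_neg]; rfl
      · rw [R.dl_zero l s h2 h, LinearMap.map_neg, map_sum, map_sum]
        congr 1
        obtain ⟨l, rfl⟩ : ∃ t, l = t + 2 := ⟨l - 2, by omega⟩
        rw [Finset.sum_range_succ', DD_jW_zero, DD_jV_ne R _ _ (by omega), LinearMap.map_zero, add_zero, Finset.sum_range]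
        refine Finset.sum_congr rfl fun j _ => ?_
        have hj : (j : ℕ) < l + 1 := j.isLt
        rw [jW_xcast, DD_jW R (j+1) 0 s (by omega) (by omega), ← Sg_jW, jW_xcast,
          ← DD_jW R _ _ _ (by omega) (by omega), jW_xcast]
    | succ r =>
      rw [R.dl_succ l r s hl h, LinearMap.map_neg, map_sum, map_sum, Finset.sum_range]
      congr 1
      refine Finset.sum_congr rfl fun j _ => ?_
      have hj : (j : ℕ) < l := j.isLt
      rw [jW_xcast, DD_jW R j (r+1) s (by omega) (by omega), ← Sg_jW, jW_xcast,
          ← DD_jW R _ _ _ (by omega) (by omega), jW_xcast]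

theorem DD_DD : (PowerSeries.mk (DD R)) * (PowerSeries.mk (DD R)) = (0 : PowerSeries (Module.End k (MM k A H E))) :=
  pertA (DD R) (Sg R) (DD_Sg R) (TT R) (TT_DD R) (FF k A H E) (GG k A H E) (fun x hx => FF_zero R x hx)
    (FF_GG R) FF_all (GG_D0 R) (GG_S R) (GG_DD R)

end Part6

section Part7

variable {k A H E : Type} [CommRing k] [Ring A] [Algebra k A] [Ring H] [HopfAlgebra k H]
  [Ring E] [Algebra k E]
variable {S : CrossedProduct k A H E} (R : ResData k A H E S)

/-- the hypotheses on the `σ^l` packaged -/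
structure SL (slY : ∀ l s : ℕ, Yc k H E s →ₗ[k] Xc k A H E l (s - l))
    (slX : ∀ l r s : ℕ, Xc k A H E r s →ₗ[k] Xc k A H E (r + l + 1) (s - l)) : Prop where
    (hslY0 : ∀ s : ℕ, slY 0 s = R.sig0 s)
    (hslX0 : ∀ r s : ℕ, slX 0 r s = R.sig r s)
    (hslY : ∀ (l s : ℕ) (hl : 1 ≤ l) (hls : l ≤ s) (p1 : (l - 1) + 1 = l)
      (p2 : ∀ i : Fin l, (i : ℕ) + (l - (i : ℕ)) - 1 = l - 1)
      (p3 : ∀ i : Fin l, (s - (i : ℕ)) - (l - (i : ℕ)) = s - l),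
      slY l s = - ∑ i : Fin l,
        xcast p1 rfl ∘ₗ R.sig (l - 1) (s - l) ∘ₗ xcast (p2 i) (p3 i) ∘ₗ
          R.dl (l - (i : ℕ)) (i : ℕ) (s - (i : ℕ)) ∘ₗ slY (i : ℕ) s)
    (hslX : ∀ (l r s : ℕ) (hl : 1 ≤ l) (hls : l ≤ s)
      (p2 : ∀ i : Fin l, (r + (i : ℕ) + 1) + (l - (i : ℕ)) - 1 = r + l)
      (p3 : ∀ i : Fin l, (s - (i : ℕ)) - (l - (i : ℕ)) = s - l),
      slX l r s = - ∑ i : Fin l,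
        R.sig (r + l) (s - l) ∘ₗ xcast (p2 i) (p3 i) ∘ₗ
          R.dl (l - (i : ℕ)) (r + (i : ℕ) + 1) (s - (i : ℕ)) ∘ₗ slX (i : ℕ) r s)

theorem ar2 {l i : ℕ} (h : i < l) : i + (l - i) - 1 = l - 1 := by omega
theorem ar3 {l i s : ℕ} (h : i < l) (hs : l ≤ s) : (s - i) - (l - i) = s - l := by omega
theorem ar4 {l i r : ℕ} (h : i < l) : (r + i + 1) + (l - i) - 1 = r + l := by omega

variable (slY : ∀ l s : ℕ, Yc k H E s →ₗ[k] Xc k A H E l (s - l))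
    (slX : ∀ l r s : ℕ, Xc k A H E r s →ₗ[k] Xc k A H E (r + l + 1) (s - l))

def SS (l : ℕ) : Module.End k (MM k A H E) :=
  mlift (fun r s => if l ≤ s then jW k A H E (r+l+1) (s-l) ∘ₗ slX l r s else 0)
    (fun s => if l ≤ s then jW k A H E l (s-l) ∘ₗ slY l s else 0)

theorem SS_jW (l r s : ℕ) (h : l ≤ s) (x) : SS slY slX l (jW k A H E r s x) = jW k A H E (r+l+1) (s-l) (slX l r s x) := by
  rw [SS, mlift_jW, if_pos h]; rfl
theorem SS_jW_gt (l r s : ℕ) (h : s < l) (x) : SS slY slX l (jW k A H E r s x) = 0 := by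
  rw [SS, mlift_jW, if_neg (by omega)]; rfl
theorem SS_jV (l s : ℕ) (h : l ≤ s) (x) : SS slY slX l (jV k A H E s x) = jW k A H E l (s-l) (slY l s x) := by
  rw [SS, mlift_jV, if_pos h]; rfl
theorem SS_jV_gt (l s : ℕ) (h : s < l) (x) : SS slY slX l (jV k A H E s x) = 0 := by
  rw [SS, mlift_jV, if_neg (by omega)]; rfl

variable {slY slX} (hSL : SL R slY slX)

theorem SS_zero (hSL : SL R slY slX) : SS slY slX 0 = Sg R := by
  apply MM_ext
  · intro r s x
    rw [SS_jW _ _ _ _ _ (Nat.zero_le _), Sg_jW, hSL.hslX0]; rfl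
  · intro s x
    rw [SS_jV _ _ _ _ (Nat.zero_le _), Sg_jV, hSL.hslY0]; rfl

theorem SS_rec (hSL : SL R slY slX) (l : ℕ) (hl : 1 ≤ l) :
    SS slY slX l = - ∑ i ∈ Finset.range l, SS slY slX 0 * DD R (l-i) * SS slY slX i := by
  rw [SS_zero R hSL]
  apply MM_ext
  · intro r s x
    rw [LinearMap.neg_apply, LinearMap.sum_apply]
    rcases Nat.lt_or_ge s l with h | h
    · rw [SS_jW_gt _ _ _ _ _ h, Finset.sum_eq_zero, neg_zero]
      intro i hi
      rw [Finset.mem_range] at hi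
      rw [Module.End.mul_apply, Module.End.mul_apply]
      rcases Nat.lt_or_ge s i with h1 | h1
      · rw [SS_jW_gt _ _ _ _ _ h1, LinearMap.map_zero, LinearMap.map_zero]
      · rw [SS_jW _ _ _ _ _ h1, DD_jW_gt R _ _ _ (by omega), LinearMap.map_zero]
    · rw [SS_jW _ _ _ _ _ h, hSL.hslX l r s hl h (fun i => ar4 i.isLt) (fun i => ar3 i.isLt h), LinearMap.neg_apply, LinearMap.sum_apply, LinearMap.map_neg, map_sum, Finset.sum_range]
      congr 1
      refine Finset.sum_congr rfl fun i _ => ?_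
      have hi : (i : ℕ) < l := i.isLt
      rw [LinearMap.comp_apply, LinearMap.comp_apply, LinearMap.comp_apply, ← Sg_jW, jW_xcast,
        ← DD_jW R _ _ _ (by omega) (by omega), ← SS_jW slY slX _ _ _ (by omega), Module.End.mul_apply, Module.End.mul_apply]
  · intro s x
    rw [LinearMap.neg_apply, LinearMap.sum_apply]
    rcases Nat.lt_or_ge s l with h | h
    · rw [SS_jV_gt _ _ _ _ h, Finset.sum_eq_zero, neg_zero]
      intro i hi
      rw [Finset.mem_range] at hi
      rw [Module.End.mul_apply, Module.End.mul_apply]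
      rcases Nat.lt_or_ge s i with h1 | h1
      · rw [SS_jV_gt _ _ _ _ h1, LinearMap.map_zero, LinearMap.map_zero]
      · rw [SS_jV _ _ _ _ h1, DD_jW_gt R _ _ _ (by omega), LinearMap.map_zero]
    · rw [SS_jV _ _ _ _ h, hSL.hslY l s hl h (Nat.sub_add_cancel hl) (fun i => ar2 i.isLt) (fun i => ar3 i.isLt h), LinearMap.neg_apply, LinearMap.sum_apply, LinearMap.map_neg, map_sum, Finset.sum_range]
      congr 1
      refine Finset.sum_congr rfl fun i _ => ?_
      have hi : (i : ℕ) < l := i.isLt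
      rw [LinearMap.comp_apply, LinearMap.comp_apply, LinearMap.comp_apply, LinearMap.comp_apply, jW_xcast, ← Sg_jW, jW_xcast,
        ← DD_jW R _ _ _ (by omega) (by omega), ← SS_jV slY slX _ _ (by omega), Module.End.mul_apply, Module.End.mul_apply]

theorem DD_SS (hSL : SL R slY slX) : (PowerSeries.mk (DD R)) * (PowerSeries.mk (SS slY slX)) +
    (PowerSeries.mk (SS slY slX)) * (PowerSeries.mk (DD R)) = 1 :=
  pertB (DD R) (SS slY slX) (by rw [SS_zero R hSL]; exact DD_Sg R) (DD_DD R) (SS_rec R hSL)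

variable (k A H E) in
def FS (n : ℕ) : Submodule k (MM k A H E) :=
  Submodule.span k ({y | ∃ s x, s < n ∧ y = jV k A H E s x} ∪ {y | ∃ r s x, s < n ∧ y = jW k A H E r s x})

theorem FS_V (n s x) (h : s < n) : jV k A H E s x ∈ FS k A H E n := Submodule.subset_span (Or.inl ⟨s, x, h, rfl⟩)
theorem FS_W (n r s x) (h : s < n) : jW k A H E r s x ∈ FS k A H E n :=
  Submodule.subset_span (Or.inr ⟨r, s, x, h, rfl⟩)

theorem FS_zero (x) (hx : x ∈ FS k A H E 0) : x = 0 := by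
  have : FS k A H E 0 ≤ ⊥ := by
    refine Submodule.span_le.2 ?_
    rintro y (⟨s, x, h, rfl⟩ | ⟨r', s, x, h, rfl⟩) <;> omega
  exact this hx

theorem FS_DD (l n : ℕ) (x) (hx : x ∈ FS k A H E n) : DD R l x ∈ FS k A H E (n - l) := by
  have : FS k A H E n ≤ (FS k A H E (n - l)).comap (DD R l) := by
    refine Submodule.span_le.2 ?_
    rintro y (⟨s, x, h, rfl⟩ | ⟨r, s, x, h, rfl⟩)
    · change DD R l _ ∈ FS k A H E (n - l)
      rcases eq_or_ne l 1 with rfl | h1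
      · cases s with
        | zero => rw [DD_jV_zero]; exact Submodule.zero_mem _
        | succ s => rw [DD_jV_one]; exact FS_V _ _ _ (by omega)
      · rw [DD_jV_ne R l s h1]; exact Submodule.zero_mem _
    · change DD R l _ ∈ FS k A H E (n - l)
      rcases Nat.lt_or_ge s l with h1 | h1
      · rw [DD_jW_gt R l r s h1]; exact Submodule.zero_mem _
      · rcases Nat.eq_zero_or_pos (r + l) with h' | h'
        · obtain rfl : r = 0 := by omega
          obtain rfl : l = 0 := by omega
          rw [DD_jW_zero]; exact FS_V _ _ _ (by omega)
        · rw [DD_jW R l r s h1 h']; exact FS_W _ _ _ _ (by omega)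
  exact this hx

theorem FS_SS (l n : ℕ) (x) (hx : x ∈ FS k A H E n) : SS slY slX l x ∈ FS k A H E (n - l) := by
  have : FS k A H E n ≤ (FS k A H E (n - l)).comap (SS slY slX l) := by
    refine Submodule.span_le.2 ?_
    rintro y (⟨s, x, h, rfl⟩ | ⟨r, s, x, h, rfl⟩)
    · change SS slY slX l _ ∈ FS k A H E (n - l)
      rcases Nat.lt_or_ge s l with h1 | h1
      · rw [SS_jV_gt _ _ _ _ h1]; exact Submodule.zero_mem _
      · rw [SS_jV _ _ _ _ h1]; exact FS_W _ _ _ _ (by omega)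
    · change SS slY slX l _ ∈ FS k A H E (n - l)
      rcases Nat.lt_or_ge s l with h1 | h1
      · rw [SS_jW_gt _ _ _ _ _ h1]; exact Submodule.zero_mem _
      · rw [SS_jW _ _ _ _ _ h1]; exact FS_W _ _ _ _ (by omega)
  exact this hx

def TD (N : ℕ) : Module.End k (MM k A H E) := ∑ l ∈ Finset.range N, DD R l
variable (slY slX) in
def TS (N : ℕ) : Module.End k (MM k A H E) := ∑ l ∈ Finset.range N, SS slY slX l

theorem TD_TD (N : ℕ) (x) (hx : x ∈ FS k A H E N) : TD R N (TD R N x) = 0 := by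
  have := totC (DD R) (DD R) (FS k A H E) FS_zero (FS_DD R) (FS_DD R) N x hx
  rw [DD_DD] at this
  simp only [TD, LinearMap.sum_apply]
  rw [this]; simp

theorem TD_TS (hSL : SL R slY slX) (N : ℕ) (hN : 0 < N) (x) (hx : x ∈ FS k A H E N) :
    TD R N (TS slY slX N x) + TS slY slX N (TD R N x) = x := by
  have h1 := totC (DD R) (SS slY slX) (FS k A H E) FS_zero (FS_DD R) FS_SS N x hx
  have h2 := totC (SS slY slX) (DD R) (FS k A H E) FS_zero FS_SS (FS_DD R) N x hx
  simp only [TD, TS, LinearMap.sum_apply]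
  rw [h1, h2, ← Finset.sum_add_distrib]
  have h3 : ∀ m, PowerSeries.coeff m (PowerSeries.mk (DD R) * PowerSeries.mk (SS slY slX)) x +
      PowerSeries.coeff m (PowerSeries.mk (SS slY slX) * PowerSeries.mk (DD R)) x =
      if m = 0 then x else 0 := by
    intro m
    rw [← LinearMap.add_apply, ← LinearMap.map_add, DD_SS R hSL, PowerSeries.coeff_one]
    split_ifs <;> rfl
  rw [Finset.sum_congr rfl fun m _ => h3 m]
  simp [hN]

end Part7

section Part8

variable {k A H E : Type} [CommRing k] [Ring A] [Algebra k A] [Ring H] [HopfAlgebra k H]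
  [Ring E] [Algebra k E]
variable {S : CrossedProduct k A H E} (R : ResData k A H E S)

variable (k A H E) in
abbrev instXTacg (n : ℕ) : AddCommGroup (XT k A H E n) := inferInstance
variable (k A H E) in
abbrev instXTacm (n : ℕ) : AddCommMonoid (XT k A H E n) := inferInstance
variable (k A H E) in
abbrev instXTmod (n : ℕ) : Module k (XT k A H E n) := inferInstance

attribute [local instance] instXTacg instXTacm instXTmod

variable (k A H E) in
def lf (n : ℕ) (s : Fin (n+1)) : Xc k A H E (n - (s : ℕ)) (s : ℕ) →ₗ[k] XT k A H E n :=
  DirectSum.lof k (Fin (n + 1)) (fun s' : Fin (n + 1) => Xc k A H E (n - (s' : ℕ)) (s' : ℕ)) s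

def tm {N : Type} [AddCommGroup N] [Module k N] (n : ℕ)
    (f : ∀ s : Fin (n+1), Xc k A H E (n - (s : ℕ)) (s : ℕ) →ₗ[k] N) : XT k A H E n →ₗ[k] N :=
  DirectSum.toModule k (Fin (n + 1)) N f

theorem tm_lf {N : Type} [AddCommGroup N] [Module k N] (n : ℕ)
    (f : ∀ s : Fin (n+1), Xc k A H E (n - (s : ℕ)) (s : ℕ) →ₗ[k] N) (s x) : tm n f (lf k A H E n s x) = f s x :=
  DirectSum.toModule_lof k (φ := f) s x

theorem XT_ext {N : Type} [AddCommGroup N] [Module k N] {n : ℕ} {f g : XT k A H E n →ₗ[k] N}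
    (h : ∀ s x, f (lf k A H E n s x) = g (lf k A H E n s x)) : f = g := by
  apply DirectSum.linearMap_ext
  intro s
  exact LinearMap.ext fun x => h s x

theorem xcast_self {r s : ℕ} (hr : r = r) (hs : s = s) (x : Xc k A H E r s) : xcast hr hs x = x := rfl

variable (k A H E) in
def jT (n : ℕ) : XT k A H E n →ₗ[k] MM k A H E := tm n (fun s => jW k A H E (n - (s : ℕ)) s)

theorem jT_lf (n s x) : jT k A H E n (lf k A H E n s x) = jW k A H E (n - (s : ℕ)) s x := tm_lf n _ s x

variable (k A H E) in
def pT (n : ℕ) : MM k A H E →ₗ[k] XT k A H E n :=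
  mlift (fun r s => if h : r + s = n then lf k A H E n ⟨s, by omega⟩ ∘ₗ xcast (by dsimp only; omega) rfl else 0) (fun s => 0)

theorem pT_jT (n x) : pT k A H E n (jT k A H E n x) = x := by
  have : pT k A H E n ∘ₗ jT k A H E n = LinearMap.id := by
    apply XT_ext
    intro s x
    have hs := s.isLt
    rw [LinearMap.comp_apply, jT_lf, pT, mlift_jW, dif_pos (by omega)]
    rfl
  exact LinearMap.congr_fun this x

theorem pT_jV (n s x) : pT k A H E n (jV k A H E s x) = 0 := by
  rw [pT, mlift_jV]; rfl

variable (k A H E) in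
def pV (n : ℕ) : MM k A H E →ₗ[k] Yc k H E n :=
  mlift (fun r s => 0) (fun s => DirectSum.component k ℕ (fun s => Yc k H E s) n ∘ₗ DirectSum.lof k ℕ (fun s => Yc k H E s) s)

theorem pV_jV (n x) : pV k A H E n (jV k A H E n x) = x := by
  rw [pV, mlift_jV, LinearMap.comp_apply]
  exact DirectSum.component.lof_self k n x

theorem pV_jT (m n x) : pV k A H E m (jT k A H E n x) = 0 := by
  have : pV k A H E m ∘ₗ jT k A H E n = 0 := by
    apply XT_ext
    intro s x
    rw [LinearMap.comp_apply, jT_lf, pV, mlift_jW]; rfl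
  exact LinearMap.congr_fun this x

theorem dT_lf (n s x) : dT R n (lf k A H E (n+1) s x) = ∑ l : Fin ((s : ℕ) + 1),
      if h : 0 < (n + 1 - (s : ℕ)) + (l : ℕ) then
        lf k A H E n ⟨(s : ℕ) - (l : ℕ), by have := s.isLt; have := l.isLt; omega⟩ (
          xcast
            (show (n + 1 - (s : ℕ)) + (l : ℕ) - 1 = n - ((s : ℕ) - (l : ℕ)) by
              have := s.isLt; have := l.isLt; omega)
            rfl (
          R.dl (l : ℕ) (n + 1 - (s : ℕ)) (s : ℕ) x))
      else 0 := by
  refine (tm_lf (n+1) _ s x).trans ?_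
  rw [LinearMap.sum_apply]
  refine Finset.sum_congr rfl fun l _ => ?_
  split_ifs <;> rfl

theorem muT_lf (n : ℕ) (s : Fin (n+1)) (h : (s : ℕ) = n) (x) : muT R n (lf k A H E n s x) =
    R.mu n (xcast (show n - (s : ℕ) = 0 by omega) h x) := by
  refine (tm_lf (n) _ s x).trans ?_
  rw [dif_pos h]; rfl

theorem muT_lf_ne (n : ℕ) (s : Fin (n+1)) (h : (s : ℕ) ≠ n) (x) : muT R n (lf k A H E n s x) = 0 := by
  refine (tm_lf (n) _ s x).trans ?_
  rw [dif_neg h]; rfl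

def sX (slX : ∀ l r s : ℕ, Xc k A H E r s →ₗ[k] Xc k A H E (r + l + 1) (s - l)) (n : ℕ) :
    XT k A H E n →ₗ[k] XT k A H E (n + 1) :=
  DirectSum.toModule k (Fin (n + 1)) (XT k A H E (n + 1)) (fun s =>
      ∑ l : Fin ((s : ℕ) + 1),
        (DirectSum.lof k (Fin (n + 2)) (fun s' : Fin (n + 2) => Xc k A H E (n + 1 - (s' : ℕ)) (s' : ℕ))
            ⟨(s : ℕ) - (l : ℕ), by have := s.isLt; have := l.isLt; omega⟩) ∘ₗ
          xcast
            (show (n - (s : ℕ)) + (l : ℕ) + 1 = n + 1 - ((s : ℕ) - (l : ℕ)) by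
              have := s.isLt; have := l.isLt; omega)
            rfl ∘ₗ
          slX (l : ℕ) (n - (s : ℕ)) (s : ℕ))

def sYt (slY : ∀ l s : ℕ, Yc k H E s →ₗ[k] Xc k A H E l (s - l)) (n : ℕ) : Yc k H E n →ₗ[k] XT k A H E n :=
  ∑ l : Fin (n + 1),
      (DirectSum.lof k (Fin (n + 1)) (fun s' : Fin (n + 1) => Xc k A H E (n - (s' : ℕ)) (s' : ℕ))
          ⟨n - (l : ℕ), by omega⟩) ∘ₗ
        xcast (show (l : ℕ) = n - (n - (l : ℕ)) by have := l.isLt; omega) rfl ∘ₗ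
        slY (l : ℕ) n

variable (slY : ∀ l s : ℕ, Yc k H E s →ₗ[k] Xc k A H E l (s - l))
    (slX : ∀ l r s : ℕ, Xc k A H E r s →ₗ[k] Xc k A H E (r + l + 1) (s - l))

theorem sbar_eq (sY : ∀ s : ℕ, Yc k H E s →ₗ[k] Yc k H E (s + 1)) (n : ℕ) (x) :
    sbar R slY slX sY n x = - sYt slY (n+1) (sY n (muT R n x)) + sX slX n x := rfl

theorem sX_lf (n s x) : sX slX n (lf k A H E n s x) = ∑ l : Fin ((s : ℕ) + 1),
        lf k A H E (n+1) ⟨(s : ℕ) - (l : ℕ), by have := s.isLt; have := l.isLt; omega⟩ (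
          xcast
            (show (n - (s : ℕ)) + (l : ℕ) + 1 = n + 1 - ((s : ℕ) - (l : ℕ)) by
              have := s.isLt; have := l.isLt; omega)
            rfl (
          slX (l : ℕ) (n - (s : ℕ)) (s : ℕ) x)) := by
  refine (tm_lf (n) _ s x).trans ?_
  rw [LinearMap.sum_apply]
  rfl

theorem sum_trunc {M : Type} [AddCommGroup M] (f : ℕ → M) (s N : ℕ) (h : s < N) (hf : ∀ l, s < l → f l = 0) :
    ∑ l ∈ Finset.range N, f l = ∑ l : Fin (s+1), f l := by
  rw [← Finset.sum_range (n := s+1)]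
  symm
  refine Finset.sum_subset (fun i hi => ?_) (fun i _ hi => hf i ?_)
  · rw [Finset.mem_range] at *; omega
  · rw [Finset.mem_range] at hi; omega

theorem DD_zero_cast (m r s : ℕ) (hr : r = 0) (hs : s = m) (x) :
    DD R 0 (jW k A H E r s x) = jV k A H E m (R.mu m (xcast hr hs x)) := by
  subst hr; subst hs; exact DD_jW_zero R s x

theorem TD_jT (N n : ℕ) (h : n + 1 < N) (x) :
    TD R N (jT k A H E (n+1) x) = jT k A H E n (dT R n x) + jV k A H E (n+1) (muT R (n+1) x) := by
  have : TD R N ∘ₗ jT k A H E (n+1) = jT k A H E n ∘ₗ dT R n + jV k A H E (n+1) ∘ₗ muT R (n+1) := by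
    apply XT_ext
    intro s x
    have hs := s.isLt
    rw [LinearMap.add_apply, LinearMap.comp_apply, LinearMap.comp_apply, LinearMap.comp_apply, jT_lf, TD, LinearMap.sum_apply,
      sum_trunc (fun l => DD R l (jW k A H E (n+1-(s : ℕ)) s x)) s N (by omega) (fun l hl => DD_jW_gt R _ _ _ hl _), dT_lf, map_sum]
    have e : jV k A H E (n+1) (muT R (n+1) (lf k A H E (n+1) s x)) =
      ∑ l : Fin ((s : ℕ) + 1), if l = 0 then jV k A H E (n+1) (muT R (n+1) (lf k A H E (n+1) s x)) else 0 := by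
      rw [Finset.sum_ite_eq' Finset.univ]; simp
    rw [e, ← Finset.sum_add_distrib]
    refine Finset.sum_congr rfl fun l _ => ?_
    have hl := l.isLt
    by_cases h1 : 0 < (n + 1 - (s : ℕ)) + (l : ℕ)
    · rw [dif_pos h1, jT_lf, jW_xcast, DD_jW R _ _ _ (by omega) h1]
      have : (if l = 0 then jV k A H E (n+1) (muT R (n+1) (lf k A H E (n+1) s x)) else 0) = 0 := by
        split_ifs with h2
        · subst h2
          rw [muT_lf_ne R _ _ (by simp at h1; omega), LinearMap.map_zero]
        · rfl
      rw [this, add_zero]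
    · rw [dif_neg h1, LinearMap.map_zero, zero_add]
      have h2 : (l : ℕ) = 0 := by omega
      have h3 : (s : ℕ) = n + 1 := by omega
      rw [if_pos (Fin.ext h2), muT_lf R _ _ h3, h2, DD_zero_cast R (n+1) _ _ (by omega) h3]
  exact LinearMap.congr_fun this x

theorem TD_jT0 (N : ℕ) (h : 0 < N) (x) :
    TD R N (jT k A H E 0 x) = jV k A H E 0 (muT R 0 x) := by
  have : TD R N ∘ₗ jT k A H E 0 = jV k A H E 0 ∘ₗ muT R 0 := by
    apply XT_ext
    intro s x
    have hs : (s : ℕ) = 0 := by omega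
    rw [LinearMap.comp_apply, LinearMap.comp_apply, jT_lf, TD, LinearMap.sum_apply,
      Finset.sum_eq_single 0, muT_lf R _ _ hs, DD_zero_cast R 0 _ _ (by omega) hs]
    · intro l _ hl
      exact DD_jW_gt R _ _ _ (by omega) _
    · intro hh; simp at hh; omega
  exact LinearMap.congr_fun this x

theorem TD_jV (N s : ℕ) (h : 1 < N) (y) : TD R N (jV k A H E (s+1) y) = jV k A H E s (R.del s y) := by
  rw [TD, LinearMap.sum_apply, Finset.sum_eq_single 1, DD_jV_one]
  · intro l _ hl
    exact DD_jV_ne R _ _ hl _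
  · intro hh; simp at hh; omega

theorem TD_jV0 (N : ℕ) (y) : TD R N (jV k A H E 0 y) = 0 := by
  rw [TD, LinearMap.sum_apply]
  exact Finset.sum_eq_zero fun l _ => DD_jV_zero R l y

theorem TS_jT (N n : ℕ) (h : n < N) (x) : TS slY slX N (jT k A H E n x) = jT k A H E (n+1) (sX slX n x) := by
  have : TS slY slX N ∘ₗ jT k A H E n = jT k A H E (n+1) ∘ₗ sX slX n := by
    apply XT_ext
    intro s x
    have hs := s.isLt
    rw [LinearMap.comp_apply, LinearMap.comp_apply, jT_lf, TS, LinearMap.sum_apply,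
      sum_trunc (fun l => SS slY slX l (jW k A H E (n-(s : ℕ)) s x)) s N (by omega) (fun l hl => SS_jW_gt _ _ _ _ _ hl _), sX_lf, map_sum]
    refine Finset.sum_congr rfl fun l _ => ?_
    have hl := l.isLt
    rw [jT_lf, jW_xcast, SS_jW _ _ _ _ _ (by omega)]
  exact LinearMap.congr_fun this x

theorem TS_jV (N n : ℕ) (h : n < N) (y) : TS slY slX N (jV k A H E n y) = jT k A H E n (sYt slY n y) := by
  rw [TS, LinearMap.sum_apply,
      sum_trunc (fun l => SS slY slX l (jV k A H E n y)) n N (by omega) (fun l hl => SS_jV_gt _ _ _ _ hl _), sYt, LinearMap.sum_apply, map_sum]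
  refine Finset.sum_congr rfl fun l _ => ?_
  have hl := l.isLt
  refine Eq.trans ?_ (jT_lf n _ _).symm
  refine Eq.trans ?_ (jW_xcast _ _ _).symm
  exact SS_jV _ _ _ _ (by omega) _

theorem jT_FS (N n : ℕ) (h : n < N) (x) : jT k A H E n x ∈ FS k A H E N := by
  have : (FS k A H E N).mkQ ∘ₗ jT k A H E n = 0 := by
    apply XT_ext
    intro s x
    refine (Submodule.Quotient.mk_eq_zero (FS k A H E N)).2 ?_
    rw [jT_lf]
    exact FS_W _ _ _ _ (by omega)
  exact (Submodule.Quotient.mk_eq_zero (FS k A H E N)).1 (LinearMap.congr_fun this x)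

/-! consequences -/

theorem dT_dT (n x) : dT R n (dT R (n+1) x) = 0 := by
  have h := TD_TD R (n+5) (jT k A H E (n+2) x) (jT_FS _ _ (by omega) x)
  rw [TD_jT R _ _ (by omega), LinearMap.map_add, TD_jT R _ _ (by omega), TD_jV R _ _ (by omega)] at h
  have := congrArg (pT k A H E n) h
  simpa only [LinearMap.map_add, pT_jT, pT_jV, add_zero, LinearMap.map_zero] using this

theorem muT_dT (n x) : muT R n (dT R n x) + R.del n (muT R (n+1) x) = 0 := by
  have h := TD_TD R (n+5) (jT k A H E (n+1) x) (jT_FS _ _ (by omega) x)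
  rw [TD_jT R _ _ (by omega), LinearMap.map_add, TD_jV R _ _ (by omega)] at h
  cases n with
  | zero =>
    rw [TD_jT0 R _ (by omega)] at h
    have := congrArg (pV k A H E 0) h
    simpa only [LinearMap.map_add, pV_jV, LinearMap.map_zero] using this
  | succ n =>
    rw [TD_jT R _ _ (by omega)] at h
    have := congrArg (pV k A H E (n+1)) h
    simpa only [LinearMap.map_add, pV_jV, pV_jT, zero_add, LinearMap.map_zero] using this

variable {slY slX} (hSL : SL R slY slX)

theorem dT_sX (hSL : SL R slY slX) (n x) : dT R (n+1) (sX slX (n+1) x) + sX slX n (dT R n x) + sYt slY (n+1) (muT R (n+1) x) = x := by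
  have h := TD_TS R hSL (n+5) (by omega) (jT k A H E (n+1) x) (jT_FS _ _ (by omega) x)
  rw [TS_jT _ _ _ _ (by omega), TD_jT R _ _ (by omega), TD_jT R _ _ (by omega), LinearMap.map_add, TS_jT _ _ _ _ (by omega), TS_jV _ _ _ _ (by omega)] at h
  have := congrArg (pT k A H E (n+1)) h
  simp only [LinearMap.map_add, pT_jT, pT_jV, add_zero] at this
  rw [add_assoc]; exact this

theorem dT_sX0 (hSL : SL R slY slX) (x) : dT R 0 (sX slX 0 x) + sYt slY 0 (muT R 0 x) = x := by
  have h := TD_TS R hSL 5 (by omega) (jT k A H E 0 x) (jT_FS _ _ (by omega) x)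
  rw [TS_jT _ _ _ _ (by omega), TD_jT R _ _ (by omega), TD_jT0 R _ (by omega), TS_jV _ _ _ _ (by omega)] at h
  have := congrArg (pT k A H E 0) h
  simpa only [LinearMap.map_add, pT_jT, pT_jV, add_zero] using this

theorem dT_sYt (hSL : SL R slY slX) (n y) : dT R n (sYt slY (n+1) y) + sYt slY n (R.del n y) = 0 := by
  have h := TD_TS R hSL (n+5) (by omega) (jV k A H E (n+1) y) (FS_V _ _ _ (by omega))
  rw [TS_jV _ _ _ _ (by omega), TD_jT R _ _ (by omega), TD_jV R _ _ (by omega), TS_jV _ _ _ _ (by omega)] at h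
  have := congrArg (pT k A H E n) h
  simpa only [LinearMap.map_add, pT_jT, pT_jV, add_zero] using this

end Part8

section Part9

theorem absComp {k E : Type} [CommRing k] {X B : ℕ → Type} [∀ n, AddCommGroup (X n)] [∀ n, Module k (X n)]
    [∀ n, AddCommGroup (B n)] [∀ n, Module k (B n)]
    (d : ∀ n, X (n+1) →ₗ[k] X n) (sb : ∀ n, X n →ₗ[k] X (n+1))
    (b : ∀ n, B (n+1) →ₗ[k] B n) (xi : ∀ n, B n →ₗ[k] B (n+1))
    (phi : ∀ n, X n →ₗ[k] B n) (psi : ∀ n, B n →ₗ[k] X n) (om : ∀ n, B n →ₗ[k] B (n+1))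
    (rX : E → ∀ n, X n →ₗ[k] X n) (rB : E → ∀ n, B n →ₗ[k] B n)
    (GX : ∀ n, X n → Prop) (GB : ∀ n, B n → Prop)
    (extX : ∀ n (M : Submodule k (X n)), (∀ e x, GX n x → rX e n x ∈ M) → M = ⊤)
    (extB : ∀ n (M : Submodule k (B n)), (∀ e x, GB n x → rB e n x ∈ M) → M = ⊤)
    (hd : ∀ n e x, d n (rX e (n+1) x) = rX e n (d n x))
    (hb : ∀ n e x, b n (rB e (n+1) x) = rB e n (b n x))
    (hphi : ∀ n e x, phi n (rX e n x) = rB e n (phi n x))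
    (hpsi : ∀ n e x, psi n (rB e n x) = rX e n (psi n x))
    (hom : ∀ n e x, om n (rB e n x) = rB e (n+1) (om n x))
    (dd : ∀ n x, d n (d (n+1) x) = 0) (bb : ∀ n x, b n (b (n+1) x) = 0)
    (dsb : ∀ n x, d (n+1) (sb (n+1) x) + sb n (d n x) = x)
    (bxi : ∀ n x, b (n+1) (xi (n+1) x) + xi n (b n x) = x)
    (sbG : ∀ n x, GX (n+1) x → sb (n+1) x = 0)
    (xiG : ∀ n (M : Submodule k (B (n+1))), (∀ x, GB (n+1) x → x ∈ M) → ∀ x, xi n x ∈ M)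
    (rhoX : X 0 →ₗ[k] X 0) (rhoB : B 0 →ₗ[k] B 0)
    (hrX : ∀ x, d 0 (sb 0 x) = x - rhoX x) (hrB : ∀ x, b 0 (xi 0 x) = x - rhoB x)
    (hrX0 : ∀ x, rhoX (d 0 x) = 0) (hrB0 : ∀ x, rhoB (b 0 x) = 0)
    (hphr : ∀ x, phi 0 (rhoX x) = rhoB (phi 0 x)) (hpsr : ∀ x, psi 0 (rhoB x) = rhoX (psi 0 x))
    (hpp : ∀ x, psi 0 (phi 0 x) = x) (hpp' : ∀ x, phi 0 (psi 0 x) = x)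
    (hphiS : ∀ n x, GX (n+1) x → phi (n+1) x = xi n (phi n (d n x)))
    (hpsiS : ∀ n x, GB (n+1) x → psi (n+1) x = sb n (psi n (b n x)))
    (hom0 : om 0 = 0)
    (homS : ∀ n x, GB (n+1) x → om (n+1) x = xi (n+1) (phi (n+1) (psi (n+1) x) - x - om n (b n x))) :
    (∀ n, psi n ∘ₗ phi n = LinearMap.id) ∧ (b 0 ∘ₗ om 0 = phi 0 ∘ₗ psi 0 - LinearMap.id) ∧
    (∀ n, b (n + 1) ∘ₗ om (n + 1) + om n ∘ₗ b n = phi (n + 1) ∘ₗ psi (n + 1) - LinearMap.id) := by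
  have EX : ∀ {N : Type} [AddCommGroup N] [Module k N] (n) (f g : X n →ₗ[k] N),
      (∀ e x, GX n x → f (rX e n x) = g (rX e n x)) → ∀ x, f x = g x := by
    intro N _ _ n f g h x
    have := extX n (LinearMap.eqLocus f g) h
    have hx : x ∈ LinearMap.eqLocus f g := this ▸ Submodule.mem_top
    exact hx
  have EB : ∀ {N : Type} [AddCommGroup N] [Module k N] (n) (f g : B n →ₗ[k] N),
      (∀ e x, GB n x → f (rB e n x) = g (rB e n x)) → ∀ x, f x = g x := by
    intro N _ _ n f g h x
    have := extB n (LinearMap.eqLocus f g) h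
    have hx : x ∈ LinearMap.eqLocus f g := this ▸ Submodule.mem_top
    exact hx
  have cphi : ∀ n x, b n (phi (n+1) x) = phi n (d n x) := by
    intro n
    induction n with
    | zero =>
      refine EX 1 (b 0 ∘ₗ phi 1) (phi 0 ∘ₗ d 0) ?_
      intro e x hx
      simp only [LinearMap.comp_apply]
      rw [hphi, hb, hd, hphi, hphiS _ _ hx, hrB, ← hphr, hrX0, map_zero, sub_zero]
    | succ n ih =>
      refine EX (n+2) (b (n+1) ∘ₗ phi (n+2)) (phi (n+1) ∘ₗ d (n+1)) ?_
      intro e x hx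
      simp only [LinearMap.comp_apply]
      have h := bxi n (phi (n+1) (d (n+1) x))
      rw [ih, dd, map_zero, map_zero, add_zero] at h
      rw [hphi, hb, hd, hphi, hphiS _ _ hx, h]
  have cpsi : ∀ n x, d n (psi (n+1) x) = psi n (b n x) := by
    intro n
    induction n with
    | zero =>
      refine EB 1 (d 0 ∘ₗ psi 1) (psi 0 ∘ₗ b 0) ?_
      intro e x hx
      simp only [LinearMap.comp_apply]
      rw [hpsi, hd, hb, hpsi, hpsiS _ _ hx, hrX, ← hpsr, hrB0, map_zero, sub_zero]
    | succ n ih =>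
      refine EB (n+2) (d (n+1) ∘ₗ psi (n+2)) (psi (n+1) ∘ₗ b (n+1)) ?_
      intro e x hx
      simp only [LinearMap.comp_apply]
      have h := dsb n (psi (n+1) (b (n+1) x))
      rw [ih, bb, map_zero, map_zero, add_zero] at h
      rw [hpsi, hd, hb, hpsi, hpsiS _ _ hx, h]
  have psixi : ∀ n z, psi (n+1) (xi n z) = sb n (psi n (b n (xi n z))) := fun n z =>
    xiG n (LinearMap.eqLocus (psi (n+1)) (sb n ∘ₗ psi n ∘ₗ b n)) (fun x hx => hpsiS n x hx) z
  have pp : ∀ n x, psi n (phi n x) = x := by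
    intro n
    induction n with
    | zero => exact hpp
    | succ n ih =>
      refine EX (n+1) (psi (n+1) ∘ₗ phi (n+1)) LinearMap.id ?_
      intro e x hx
      simp only [LinearMap.comp_apply, LinearMap.id_apply]
      have h := dsb n x
      rw [sbG _ _ hx, map_zero, zero_add] at h
      rw [hphi, hpsi, hphiS _ _ hx, psixi, ← hphiS _ _ hx, cphi, ih, h]
  refine ⟨fun n => LinearMap.ext (pp n), ?_, ?_⟩
  · rw [hom0]; ext x; simp [hpp']
  · have key : ∀ n x, b (n+1) (om (n+1) x) + om n (b n x) = phi (n+1) (psi (n+1) x) - x := by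
      have red : ∀ n, (∀ x, GB (n+1) x → b n (phi (n+1) (psi (n+1) x) - x - om n (b n x)) = 0) →
          ∀ x, b (n+1) (om (n+1) x) + om n (b n x) = phi (n+1) (psi (n+1) x) - x := by
        intro n h0
        refine EB (n+1) (b (n+1) ∘ₗ om (n+1) + om n ∘ₗ b n) (phi (n+1) ∘ₗ psi (n+1) - LinearMap.id) ?_
        intro e x hx
        simp only [LinearMap.comp_apply, LinearMap.id_apply, LinearMap.add_apply, LinearMap.sub_apply]
        have h := bxi n (phi (n+1) (psi (n+1) x) - x - om n (b n x))
        rw [h0 x hx, map_zero, add_zero] at h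
        rw [hom, hb, hb, hom, hpsi, hphi, homS _ _ hx, h, ← map_add, ← map_sub]
        congr 1
        abel
      intro n
      induction n with
      | zero =>
        refine red _ fun x hx => ?_
        rw [hom0, LinearMap.zero_apply, sub_zero, map_sub, cphi, cpsi, hpp', sub_self]
      | succ n ih =>
        refine red _ fun x hx => ?_
        have ih := ih (b (n+1) x)
        rw [bb, map_zero, add_zero] at ih
        rw [map_sub, map_sub, cphi, cpsi, ih, sub_self]
    exact fun n => LinearMap.ext (key n)

end Part9

section Part10

variable {k A H E : Type} [CommRing k] [Ring A] [Algebra k A] [Ring H] [HopfAlgebra k H]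
  [Ring E] [Algebra k E]
variable {S : CrossedProduct k A H E} (R : ResData k A H E S)
variable (slY : ∀ l s : ℕ, Yc k H E s →ₗ[k] Xc k A H E l (s - l))
    (slX : ∀ l r s : ℕ, Xc k A H E r s →ₗ[k] Xc k A H E (r + l + 1) (s - l))
    (sY : ∀ s : ℕ, Yc k H E s →ₗ[k] Yc k H E (s + 1))

attribute [local instance] instXTacg instXTacm instXTmod

theorem dT_sbar {slY slX} (hSL : SL R slY slX)
    (hsY : ∀ (s : ℕ) (e : E) (hs : Fin s → H) (h : H),
      sY s (ygen e hs h) = ((-1 : ℤ) ^ s) • ygen e (Fin.snoc hs h) 1) (n x) :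
    dT R (n+1) (sbar R slY slX sY (n+1) x) + sbar R slY slX sY n (dT R n x) = x := by
  have h1 := dT_sX R hSL n x
  have h2 := dT_sYt R hSL (n+1) (sY (n+1) (muT R (n+1) x))
  have h3 := muT_dT R n x
  have h4 := del_sY R sY hsY n (muT R (n+1) x)
  rw [add_eq_zero_iff_eq_neg] at h2 h3
  rw [sbar_eq, sbar_eq, LinearMap.map_add, LinearMap.map_neg, h2, h3]
  have h5 := congrArg (sYt slY (n+1)) h4
  rw [LinearMap.map_add, ← eq_sub_iff_add_eq] at h5
  rw [h5, LinearMap.map_neg, LinearMap.map_neg]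
  have h6 := h1
  rw [← eq_sub_iff_add_eq, ← eq_sub_iff_add_eq] at h6
  rw [h6]
  abel

def rho0 : XT k A H E 0 →ₗ[k] XT k A H E 0 :=
  tm 0 (fun s => lf k A H E 0 0 ∘ₗ rhoX R ∘ₗ xcast (by omega) (by omega))

theorem rho0_lf (x) : rho0 R (lf k A H E 0 0 x) = lf k A H E 0 0 (rhoX R x) := tm_lf 0 _ 0 x

theorem muT0_lf (x) : muT R 0 (lf k A H E 0 0 x) = R.mu 0 x := muT_lf R 0 0 rfl x

theorem XT0_surj (x : XT k A H E 0) : ∃ z, x = lf k A H E 0 0 z := by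
  have : LinearMap.range (lf k A H E 0 0) = ⊤ := by
    rw [← Submodule.ker_mkQ (LinearMap.range (lf k A H E 0 0)), LinearMap.ker_eq_top]
    apply XT_ext
    intro s x
    obtain rfl : s = 0 := Fin.ext (by have := s.isLt; omega)
    exact (Submodule.Quotient.mk_eq_zero _).2 ⟨x, rfl⟩
  have hx : x ∈ LinearMap.range (lf k A H E 0 0) := this ▸ Submodule.mem_top
  obtain ⟨z, hz⟩ := hx
  exact ⟨z, hz.symm⟩

theorem sYt0 {slY slX} (hSL : SL R slY slX) (y) : sYt slY 0 y = lf k A H E 0 0 (R.sig0 0 y) := by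
  rw [← hSL.hslY0, sYt, LinearMap.sum_apply, Fin.sum_univ_one]
  rfl

theorem dT_sbar0 {slY slX} (hSL : SL R slY slX)
    (hsY : ∀ (s : ℕ) (e : E) (hs : Fin s → H) (h : H),
      sY s (ygen e hs h) = ((-1 : ℤ) ^ s) • ygen e (Fin.snoc hs h) 1) (x) :
    dT R 0 (sbar R slY slX sY 0 x) = x - rho0 R x := by
  obtain ⟨z, rfl⟩ := XT0_surj x
  have h1 := dT_sX0 R hSL (lf k A H E 0 0 z)
  have h2 := dT_sYt R hSL 0 (sY 0 (R.mu 0 z))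
  rw [add_eq_zero_iff_eq_neg, sYt0 R hSL, sig0_del_sY0 R sY hsY] at h2
  rw [muT0_lf, sYt0 R hSL, ← eq_sub_iff_add_eq] at h1
  rw [sbar_eq, LinearMap.map_add, LinearMap.map_neg, muT0_lf, h2, h1, rho0_lf, LinearMap.map_sub]
  abel

theorem rho0_dT (x) : rho0 R (dT R 0 x) = 0 := by
  obtain ⟨z, hz⟩ := XT0_surj (dT R 0 x)
  have h := muT_dT R 0 x
  rw [hz, muT0_lf, add_eq_zero_iff_eq_neg, ← LinearMap.map_neg] at h
  rw [hz, rho0_lf, rhoX_zero R z _ h, LinearMap.map_zero]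

theorem slX_zero {slY slX} (hSL : SL R slY slX) (r s : ℕ) (x) (hx : R.sig r s x = 0) (l : ℕ) :
    l ≤ s → slX l r s x = 0 := by
  induction l using Nat.strong_induction_on with
  | _ l ih =>
    intro hl
    rcases Nat.eq_zero_or_pos l with rfl | h0
    · rw [hSL.hslX0]; exact hx
    · rw [hSL.hslX l r s h0 hl (fun i => ar4 i.isLt) (fun i => ar3 i.isLt hl), LinearMap.neg_apply, LinearMap.sum_apply, Finset.sum_eq_zero, neg_zero]
      intro i _
      have hi := i.isLt
      simp only [LinearMap.comp_apply]
      rw [ih i hi (by omega), LinearMap.map_zero, LinearMap.map_zero, LinearMap.map_zero]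

theorem xcast_xgen {r r' s : ℕ} (hr : r = r') (s') (hs : s = s') (e : E) (v : Fin s → H) (w : Fin r → A) (e' : E) :
    ∃ v' w', xcast hr hs (xgen (k := k) e v w e') = xgen e v' w' e' := by
  subst hr; subst hs; exact ⟨v, w, rfl⟩

theorem sbar_one {slY slX} (hSL : SL R slY slX)
    (hsY : ∀ (s : ℕ) (e : E) (hs : Fin s → H) (h : H),
      sY s (ygen e hs h) = ((-1 : ℤ) ^ s) • ygen e (Fin.snoc hs h) 1) (n : ℕ) (s : Fin (n+1)) (e : E)
      (hs : Fin (s : ℕ) → H) (as : Fin (n - (s : ℕ)) → A) :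
    sbar R slY slX sY n (lf k A H E n s (xgen e hs as 1)) = 0 := by
  have h1 : sY n (muT R n (lf k A H E n s (xgen e hs as 1))) = 0 := by
    by_cases h : (s : ℕ) = n
    · obtain ⟨v, w, hv⟩ := xcast_xgen (k := k) (show n - (s : ℕ) = 0 by omega) n h e hs as 1
      rw [muT_lf R n s h, hv, mu_one, sY_one sY hsY]
    · rw [muT_lf_ne R n s h, LinearMap.map_zero]
  rw [sbar_eq, h1, LinearMap.map_zero, neg_zero, zero_add, sX_lf, Finset.sum_eq_zero]
  intro l _
  have hl := l.isLt
  rw [slX_zero R hSL _ _ _ (sig_one R _ _ _ _ _) l (by omega), LinearMap.map_zero, LinearMap.map_zero]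

theorem rT_lf (e : E) (n s x) : rT e n (lf k A H E n s x) = lf k A H E n s (rX e x) := tm_lf n _ s x

theorem xcast_rX {r r' s s' : ℕ} (hr : r = r') (hs : s = s') (e : E) (x : Xc k A H E r s) :
    xcast hr hs (rX e x) = rX e (xcast hr hs x) := by
  subst hr; subst hs; rfl

theorem dT_rT (n : ℕ) (e : E) (x) : dT R n (rT e (n+1) x) = rT e n (dT R n x) := by
  have : dT R n ∘ₗ rT e (n+1) = rT e n ∘ₗ dT R n := by
    apply XT_ext
    intro s x
    rw [LinearMap.comp_apply, LinearMap.comp_apply, rT_lf, dT_lf, dT_lf, map_sum]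
    refine Finset.sum_congr rfl fun l _ => ?_
    split_ifs
    · rw [rT_lf, ← xcast_rX]
      congr 2
      exact LinearMap.congr_fun (R.dl_rmul _ _ _ e) x
    · rw [LinearMap.map_zero]
  exact LinearMap.congr_fun this x

/-! bar side -/

theorem rB_bgen (x e : E) {n : ℕ} (xs : Fin n → E) (e' : E) :
    rB x (bgen (k := k) e xs e') = bgen e xs (e' * x) := rfl

theorem bp_rB (bp : ∀ n : ℕ, Bch k E (n + 1) →ₗ[k] Bch k E n) (hbp : IsBp k E bp) (n : ℕ) (e : E) (x) :
    bp n (rB e x) = rB e (bp n x) := by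
  have : bp n ∘ₗ rB e = rB e ∘ₗ bp n := by
    apply bgen_ext
    intro e₀ xs e'
    simp only [LinearMap.comp_apply]
    rw [rB_bgen, hbp, hbp]
    simp only [LinearMap.map_add, map_sum, map_zsmul, rB_bgen, mul_assoc]
  exact LinearMap.congr_fun this x

theorem bp_xi (bp : ∀ n : ℕ, Bch k E (n + 1) →ₗ[k] Bch k E n) (hbp : IsBp k E bp)
    (xi : ∀ n : ℕ, Bch k E n →ₗ[k] Bch k E (n + 1)) (hxi : IsXi k E xi) (n : ℕ) (x) :
    bp (n+1) (xi (n+1) x) + xi n (bp n x) = x := by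
  have : bp (n+1) ∘ₗ xi (n+1) + xi n ∘ₗ bp n = LinearMap.id := by
    apply bgen_ext
    intro e xs e'
    simp only [LinearMap.comp_apply, LinearMap.add_apply, LinearMap.id_apply]
    rw [hxi, map_zsmul, hbp, hbp]
    simp only [LinearMap.map_add, map_sum, map_zsmul, hxi _, snoc_shift, snoc_zero, Fin.snoc_castSucc, Fin.snoc_last,
      Fin.sum_univ_castSucc (n := n), mulAt_snoc_castSucc, mulAt_snoc_last, mul_one, Fin.val_castSucc, Fin.val_last]
    have := sgn1 n (fun _ : Unit => bgen (k := k) (e * xs 0) (Fin.snoc (fun i : Fin n => xs i.succ) e' : Fin (n+1) → E) 1)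
      (fun x => bgen (k := k) e (Fin.snoc (mulAt xs x) e' : Fin (n+1) → E) 1)
      (bgen (k := k) e (Fin.snoc (fun i : Fin n => xs i.castSucc) (xs (Fin.last n) * e') : Fin (n+1) → E) 1)
      (bgen (k := k) e xs e')
    simp only [Finset.univ_unique, Finset.sum_singleton] at this
    exact this
  exact LinearMap.congr_fun this x

variable (k E) in
def genRho : E ⊗[k] (k ⊗[k] E) →ₗ[k] E ⊗[k] (k ⊗[k] E) :=
  (TensorProduct.mk k E (k ⊗[k] E)).flip ((1 : k) ⊗ₜ[k] (1 : E)) ∘ₗ LinearMap.mul' k E ∘ₗ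
    TensorProduct.map LinearMap.id (TensorProduct.lid k E).toLinearMap

theorem genRho_apply (e e' : E) : genRho k E (e ⊗ₜ[k] ((1 : k) ⊗ₜ[k] e')) = (e * e') ⊗ₜ[k] ((1 : k) ⊗ₜ[k] (1 : E)) := by
  simp [genRho]

variable (k E) in
def rhoB : Bch k E 0 →ₗ[k] Bch k E 0 := genRho k E

theorem rhoB_bgen (e : E) (xs : Fin 0 → E) (e' : E) : rhoB k E (bgen e xs e') = bgen (e * e') xs 1 :=
  genRho_apply e e'

theorem bp_xi0 (bp : ∀ n : ℕ, Bch k E (n + 1) →ₗ[k] Bch k E n) (hbp : IsBp k E bp)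
    (xi : ∀ n : ℕ, Bch k E n →ₗ[k] Bch k E (n + 1)) (hxi : IsXi k E xi) (x) :
    bp 0 (xi 0 x) = x - rhoB k E x := by
  have : bp 0 ∘ₗ xi 0 = LinearMap.id - rhoB k E := by
    apply bgen_ext
    intro e xs e'
    simp only [LinearMap.comp_apply, LinearMap.sub_apply, LinearMap.id_apply]
    rw [hxi, map_zsmul, hbp, rhoB_bgen]
    have h1 : (fun i : Fin 0 => (Fin.snoc xs e' : Fin 1 → E) i.succ) = xs := funext fun i => i.elim0
    have h2 : (fun i : Fin 0 => (Fin.snoc xs e' : Fin 1 → E) i.castSucc) = xs := funext fun i => i.elim0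
    have h3 : (Fin.snoc xs e' : Fin 1 → E) 0 = e' := Fin.snoc_last (α := fun _ => E) e' xs
    have h4 : (Fin.snoc xs e' : Fin 1 → E) (Fin.last 0) = e' := Fin.snoc_last (α := fun _ => E) e' xs
    rw [h1, h2, h3, h4, mul_one]
    simp
    abel
  exact LinearMap.congr_fun this x

theorem rhoB_bp (bp : ∀ n : ℕ, Bch k E (n + 1) →ₗ[k] Bch k E n) (hbp : IsBp k E bp) (x) :
    rhoB k E (bp 0 x) = 0 := by
  have : rhoB k E ∘ₗ bp 0 = 0 := by
    apply bgen_ext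
    intro e xs e'
    simp only [LinearMap.comp_apply, LinearMap.zero_apply]
    rw [hbp]
    simp only [LinearMap.map_add, map_zsmul, rhoB_bgen, Finset.univ_eq_empty, Finset.sum_empty, LinearMap.map_zero]
    have h1 : (fun i : Fin 0 => xs i.succ) = (fun i : Fin 0 => xs i.castSucc) := funext fun i => i.elim0
    have h2 : xs (Fin.last 0) = xs 0 := rfl
    rw [h1, h2, mul_assoc]
    simp
  exact LinearMap.congr_fun this x

theorem bgen_xi (xi : ∀ n : ℕ, Bch k E n →ₗ[k] Bch k E (n + 1)) (hxi : IsXi k E xi) (n : ℕ) (e : E) (xs : Fin (n+1) → E) :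
    ∃ z, bgen e xs 1 = xi n z := by
  refine ⟨((-1 : ℤ)^(n+1)) • bgen e (fun i => xs i.castSucc) (xs (Fin.last n)), ?_⟩
  have : (Fin.snoc (fun i : Fin n => xs i.castSucc) (xs (Fin.last n)) : Fin (n+1) → E) = xs :=
    Fin.snoc_init_self xs
  rw [map_zsmul, hxi, smul_smul, ← mul_pow, this]; simp

theorem bp_bp (bp : ∀ n : ℕ, Bch k E (n + 1) →ₗ[k] Bch k E n) (hbp : IsBp k E bp)
    (xi : ∀ n : ℕ, Bch k E n →ₗ[k] Bch k E (n + 1)) (hxi : IsXi k E xi) (n : ℕ) :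
    ∀ x, bp n (bp (n+1) x) = 0 := by
  have red : ∀ n, (∀ z, bp n (bp (n+1) (xi (n+1) z)) = 0) → ∀ x, bp n (bp (n+1) x) = 0 := by
    intro n h
    have : bp n ∘ₗ bp (n+1) = 0 := by
      apply bgen_ext
      intro e xs e'
      obtain ⟨z, hz⟩ := bgen_xi xi hxi (n+1) e xs
      have h2 : bgen (k := k) e xs e' = rB e' (bgen e xs 1) := by rw [rB_bgen, one_mul]
      rw [LinearMap.comp_apply, h2, bp_rB bp hbp, bp_rB bp hbp, hz, h, LinearMap.map_zero]; rfl
    exact LinearMap.congr_fun this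
  induction n with
  | zero =>
    refine red 0 fun z => ?_
    have h := bp_xi bp hbp xi hxi 0 z
    rw [← eq_sub_iff_add_eq] at h
    rw [h, LinearMap.map_sub, bp_xi0 bp hbp xi hxi, rhoB_bp bp hbp]; simp
  | succ n ih =>
    refine red (n+1) fun z => ?_
    have h := bp_xi bp hbp xi hxi (n+1) z
    have h' := bp_xi bp hbp xi hxi n (bp (n+1) z)
    rw [← eq_sub_iff_add_eq] at h
    rw [ih, LinearMap.map_zero, add_zero] at h'
    rw [h, LinearMap.map_sub, h', sub_self]

end Part10

section Part11

variable {k A H E : Type} [CommRing k] [Ring A] [Algebra k A] [Ring H] [HopfAlgebra k H]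
  [Ring E] [Algebra k E]

variable (k A H E) in
def GXs (n : ℕ) (x : XT k A H E n) : Prop :=
  ∃ (s : Fin (n+1)) (e : E) (hs : Fin (s : ℕ) → H) (as : Fin (n - (s : ℕ)) → A), x = lf k A H E n s (xgen e hs as 1)

variable (k E) in
def GBs (n : ℕ) (x : Bch k E n) : Prop :=
  ∃ (e : E) (xs : Fin n → E), x = bgen e xs 1

theorem GXs_top (n : ℕ) (M : Submodule k (XT k A H E n)) (h : ∀ (e : E) x, GXs k A H E n x → rT e n x ∈ M) : M = ⊤ := by
  rw [← Submodule.ker_mkQ M, LinearMap.ker_eq_top]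
  apply XT_ext
  intro s x
  have : M.mkQ ∘ₗ lf k A H E n s = 0 := by
    apply xgen_ext
    intro e hs as e'
    refine (Submodule.Quotient.mk_eq_zero _).2 ?_
    have := h e' _ ⟨s, e, hs, as, rfl⟩
    rw [rT_lf, rX_xgen, one_mul] at this
    exact this
  exact LinearMap.congr_fun this x

theorem GBs_top (n : ℕ) (M : Submodule k (Bch k E n)) (h : ∀ (e : E) x, GBs k E n x → rB e x ∈ M) : M = ⊤ := by
  rw [← Submodule.ker_mkQ M, LinearMap.ker_eq_top]
  apply bgen_ext
  intro e xs e'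
  refine (Submodule.Quotient.mk_eq_zero _).2 ?_
  have := h e' _ ⟨e, xs, rfl⟩
  rw [rB_bgen, one_mul] at this
  exact this

theorem xi_mem (xi : ∀ n : ℕ, Bch k E n →ₗ[k] Bch k E (n + 1)) (hxi : IsXi k E xi) (n : ℕ)
    (M : Submodule k (Bch k E (n+1))) (h : ∀ x, GBs k E (n+1) x → x ∈ M) (x) : xi n x ∈ M := by
  have : M.mkQ ∘ₗ xi n = 0 := by
    apply bgen_ext
    intro e xs e'
    rw [LinearMap.comp_apply, hxi, map_zsmul]
    have h2 : M.mkQ (bgen e (Fin.snoc xs e') 1) = 0 := (Submodule.Quotient.mk_eq_zero _).2 (h _ ⟨e, _, rfl⟩)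
    rw [h2, smul_zero]; rfl
  exact (Submodule.Quotient.mk_eq_zero _).1 (LinearMap.congr_fun this x)

theorem XT0_ext {N : Type} [AddCommGroup N] [Module k N] {f g : XT k A H E 0 →ₗ[k] N}
    (h : ∀ e e', f (lf k A H E 0 0 (xgen e (fun i : Fin 0 => i.elim0) (fun i : Fin 0 => i.elim0) e')) =
      g (lf k A H E 0 0 (xgen e (fun i : Fin 0 => i.elim0) (fun i : Fin 0 => i.elim0) e'))) : f = g := by
  apply XT_ext
  intro s x
  obtain rfl : s = 0 := Fin.ext (by have := s.isLt; omega)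
  have : f ∘ₗ lf k A H E 0 0 = g ∘ₗ lf k A H E 0 0 := by
    apply xgen_ext
    intro e hs as e'
    obtain rfl : hs = (fun i : Fin 0 => i.elim0) := funext fun i => i.elim0
    obtain rfl : as = (fun i : Fin 0 => i.elim0) := funext fun i => i.elim0
    exact h e e'
  exact LinearMap.congr_fun this x

theorem B0_ext {N : Type} [AddCommGroup N] [Module k N] {f g : Bch k E 0 →ₗ[k] N}
    (h : ∀ e e', f (bgen e (fun i : Fin 0 => i.elim0) e') = g (bgen e (fun i : Fin 0 => i.elim0) e')) : f = g := by
  apply bgen_ext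
  intro e hs e'
  obtain rfl : hs = (fun i : Fin 0 => i.elim0) := funext fun i => i.elim0
  exact h e e'

end Part11

section Statement4

variable {k A H E : Type} [CommRing k] [Ring A] [Algebra k A] [Ring H] [HopfAlgebra k H]
  [Ring E] [Algebra k E]

/-- **Proposition 1.2.1: comparison with the normalized Hochschild resolution.**
Let `φ : (X_*, d_*) → (B_*(E), b'_*)` and `ψ : (B_*(E), b'_*) → (X_*, d_*)` be the
comparison morphisms of complexes of `E`-bimodules, recursively defined by `φ₀ = id`,
`ψ₀ = id`, `φ_{n+1}(𝐱 ⊗ 1) = ξ_{n+1}(φ_n(d_{n+1}(𝐱 ⊗ 1)))` and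
`ψ_{n+1}(𝐲 ⊗ 1) = σ̄_{n+1}(ψ_n(b'_{n+1}(𝐲 ⊗ 1)))`.  Then `ψ ∘ φ = id`, and `φ ∘ ψ` is
homotopic to the identity via the `E`-bimodule homotopy `ω` recursively defined by
`ω₁ = 0` and `ω_{n+1}(𝐱) = ξ_{n+1}((φ_n ∘ ψ_n - id - ω_n ∘ b'_n)(𝐱))`; thus
`(X_*, d_*)` is a direct summand of the normalized Hochschild resolution of `E`. -/
theorem comparison_with_hochschild_resolution
    (S : CrossedProduct k A H E) (R : ResData k A H E S)
    -- the normalized Hochschild resolution and its contracting homotopy `ξ`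
    (bp : ∀ n : ℕ, Bch k E (n + 1) →ₗ[k] Bch k E n) (hbp : IsBp k E bp)
    (xi : ∀ n : ℕ, Bch k E n →ₗ[k] Bch k E (n + 1)) (hxi : IsXi k E xi)
    -- the maps `σ⁻¹`, `σ^l` and the contracting homotopy `σ̄` of `(X_*, d_*)`
    (sY : ∀ s : ℕ, Yc k H E s →ₗ[k] Yc k H E (s + 1))
    (hsY : ∀ (s : ℕ) (e : E) (hs : Fin s → H) (h : H),
      sY s (ygen e hs h) = ((-1 : ℤ) ^ s) • ygen e (Fin.snoc hs h) 1)
    (slY : ∀ l s : ℕ, Yc k H E s →ₗ[k] Xc k A H E l (s - l))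
    (slX : ∀ l r s : ℕ, Xc k A H E r s →ₗ[k] Xc k A H E (r + l + 1) (s - l))
    (hslY0 : ∀ s : ℕ, slY 0 s = R.sig0 s)
    (hslX0 : ∀ r s : ℕ, slX 0 r s = R.sig r s)
    (hslY : ∀ (l s : ℕ) (hl : 1 ≤ l) (hls : l ≤ s),
      slY l s = - ∑ i : Fin l,
        xcast (show (l - 1) + 1 = l by omega) rfl ∘ₗ
          R.sig (l - 1) (s - l) ∘ₗ
          xcast
            (show (i : ℕ) + (l - (i : ℕ)) - 1 = l - 1 by have := i.isLt; omega)
            (show (s - (i : ℕ)) - (l - (i : ℕ)) = s - l by have := i.isLt; omega) ∘ₗ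
          R.dl (l - (i : ℕ)) (i : ℕ) (s - (i : ℕ)) ∘ₗ slY (i : ℕ) s)
    (hslX : ∀ (l r s : ℕ) (hl : 1 ≤ l) (hls : l ≤ s),
      slX l r s = - ∑ i : Fin l,
        R.sig (r + l) (s - l) ∘ₗ
          xcast
            (show (r + (i : ℕ) + 1) + (l - (i : ℕ)) - 1 = r + l by have := i.isLt; omega)
            (show (s - (i : ℕ)) - (l - (i : ℕ)) = s - l by have := i.isLt; omega) ∘ₗ
          R.dl (l - (i : ℕ)) (r + (i : ℕ) + 1) (s - (i : ℕ)) ∘ₗ slX (i : ℕ) r s)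
    -- the comparison maps `φ` and `ψ`
    (phi : ∀ n : ℕ, XT k A H E n →ₗ[k] Bch k E n)
    (psi : ∀ n : ℕ, Bch k E n →ₗ[k] XT k A H E n)
    (hphi0 : ∀ e e' : E,
      phi 0 (DirectSum.lof k (Fin 1) (fun s' : Fin 1 => Xc k A H E (0 - (s' : ℕ)) (s' : ℕ)) 0
        (xgen e (fun i : Fin 0 => i.elim0) (fun i : Fin 0 => i.elim0) e')) =
      bgen e (fun i : Fin 0 => i.elim0) e')
    (hpsi0 : ∀ e e' : E,
      psi 0 (bgen e (fun i : Fin 0 => i.elim0) e') =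
        DirectSum.lof k (Fin 1) (fun s' : Fin 1 => Xc k A H E (0 - (s' : ℕ)) (s' : ℕ)) 0
          (xgen e (fun i : Fin 0 => i.elim0) (fun i : Fin 0 => i.elim0) e'))
    (hphiS : ∀ (n : ℕ) (s : Fin (n + 2)) (e : E) (hs : Fin (s : ℕ) → H)
      (as : Fin (n + 1 - (s : ℕ)) → A),
      phi (n + 1) (DirectSum.lof k (Fin (n + 2))
          (fun s' : Fin (n + 2) => Xc k A H E (n + 1 - (s' : ℕ)) (s' : ℕ)) s
          (xgen e hs as (1 : E))) =
        xi n (phi n (dT R n (DirectSum.lof k (Fin (n + 2))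
          (fun s' : Fin (n + 2) => Xc k A H E (n + 1 - (s' : ℕ)) (s' : ℕ)) s
          (xgen e hs as (1 : E))))))
    (hpsiS : ∀ (n : ℕ) (e : E) (xs : Fin (n + 1) → E),
      psi (n + 1) (bgen e xs (1 : E)) =
        sbar R slY slX sY n (psi n (bp n (bgen e xs (1 : E)))))
    (hphiR : ∀ (n : ℕ) (e : E), phi n ∘ₗ rT e n = rB e ∘ₗ phi n)
    (hpsiR : ∀ (n : ℕ) (e : E), psi n ∘ₗ rB e = rT e n ∘ₗ psi n)
    -- the homotopy `ω`
    (om : ∀ n : ℕ, Bch k E n →ₗ[k] Bch k E (n + 1))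
    (hom0 : om 0 = 0)
    (homS : ∀ (n : ℕ) (e : E) (xs : Fin (n + 1) → E),
      om (n + 1) (bgen e xs (1 : E)) =
        xi (n + 1) (phi (n + 1) (psi (n + 1) (bgen e xs (1 : E)))
          - bgen e xs (1 : E) - om n (bp n (bgen e xs (1 : E)))))
    (homR : ∀ (n : ℕ) (e : E), om n ∘ₗ rB e = rB e ∘ₗ om n) :
    -- `ψ ∘ φ = id`
    (∀ n : ℕ, psi n ∘ₗ phi n = LinearMap.id) ∧
    -- `ω` is a homotopy from `φ ∘ ψ` to the identity
    (bp 0 ∘ₗ om 0 = phi 0 ∘ₗ psi 0 - LinearMap.id) ∧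
    (∀ n : ℕ, bp (n + 1) ∘ₗ om (n + 1) + om n ∘ₗ bp n =
      phi (n + 1) ∘ₗ psi (n + 1) - LinearMap.id) := by
  have hSL : SL R slY slX := ⟨hslY0, hslX0, fun l s hl hls _ _ _ => hslY l s hl hls, fun l r s hl hls _ _ => hslX l r s hl hls⟩
  have hphi0' : ∀ e e' : E, phi 0 (lf k A H E 0 0 (xgen e (fun i : Fin 0 => i.elim0) (fun i : Fin 0 => i.elim0) e')) =
      bgen e (fun i : Fin 0 => i.elim0) e' := hphi0
  have hpsi0' : ∀ e e' : E, psi 0 (bgen e (fun i : Fin 0 => i.elim0) e') =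
      lf k A H E 0 0 (xgen e (fun i : Fin 0 => i.elim0) (fun i : Fin 0 => i.elim0) e') := hpsi0
  have e1 : phi 0 ∘ₗ rho0 R = rhoB k E ∘ₗ phi 0 := by
    apply XT0_ext
    intro e e'
    rw [LinearMap.comp_apply, LinearMap.comp_apply, hphi0', rhoB_bgen, ← hphi0', rho0_lf]
    exact congrArg (fun z => phi 0 (lf k A H E 0 0 z)) (rhoX_xgen R e _ _ e')
  have e2 : psi 0 ∘ₗ rhoB k E = rho0 R ∘ₗ psi 0 := by
    apply B0_ext
    intro e e'
    rw [LinearMap.comp_apply, LinearMap.comp_apply, hpsi0', rhoB_bgen, hpsi0', rho0_lf]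
    exact (congrArg (fun z => lf k A H E 0 0 z) (rhoX_xgen R e _ _ e')).symm
  have e3 : psi 0 ∘ₗ phi 0 = LinearMap.id := by
    apply XT0_ext
    intro e e'
    rw [LinearMap.comp_apply, hphi0', hpsi0']; rfl
  have e4 : phi 0 ∘ₗ psi 0 = LinearMap.id := by
    apply B0_ext
    intro e e'
    rw [LinearMap.comp_apply, hpsi0', hphi0']; rfl
  exact absComp (k := k) (E := E) (X := fun n => XT k A H E n) (B := fun n => Bch k E n)
    (dT R) (sbar R slY slX sY) bp xi phi psi om (fun e n => rT e n) (fun e n => rB e)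
    (GXs k A H E) (GBs k E) GXs_top GBs_top (dT_rT R) (bp_rB bp hbp)
    (fun n e x => LinearMap.congr_fun (hphiR n e) x) (fun n e x => LinearMap.congr_fun (hpsiR n e) x)
    (fun n e x => LinearMap.congr_fun (homR n e) x)
    (dT_dT R) (bp_bp bp hbp xi hxi) (dT_sbar R sY hSL hsY) (bp_xi bp hbp xi hxi)
    (fun n x hx => by obtain ⟨s, e, hs, as, rfl⟩ := hx; exact sbar_one R sY hSL hsY (n+1) s e hs as)
    (xi_mem xi hxi) (rho0 R) (rhoB k E) (dT_sbar0 R sY hSL hsY) (bp_xi0 bp hbp xi hxi)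
    (rho0_dT R) (rhoB_bp bp hbp)
    (LinearMap.congr_fun e1) (LinearMap.congr_fun e2) (LinearMap.congr_fun e3) (LinearMap.congr_fun e4)
    (fun n x hx => by obtain ⟨s, e, hs, as, rfl⟩ := hx; exact hphiS n s e hs as)
    (fun n x hx => by obtain ⟨e, xs, rfl⟩ := hx; exact hpsiS n e xs)
    hom0
    (fun n x hx => by obtain ⟨e, xs, rfl⟩ := hx; exact homS n e xs)

end Statement4

end HopfCrossed
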